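/- Solvability of the semilinear Dirichlet problem (intermediate claim in the proof of Theorem 3.1, classical-solution rendering): Let B ⊂ ℝ^d be an open Euclidean ball, let G be the semilinear operator defined in the context, and assume in addition that r(x,u) ≤ 0 for all x ∈ B̄, u ∈ U. Then for every Lipschitz function f : B̄ → ℝ there exists a unique φ that is C² on B and continuous on B̄ satisfying Gφ = f in B and φ = 0 on ∂B. -/

import Mathlib

open Metric Set MeasureTheory

noncomputable def sdv {d : ℕ} (φ : EuclideanSpace ℝ (Fin d) → ℝ)
    (x : EuclideanSpace ℝ (Fin d)) (i j : Fin d) : ℝ :=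
  fderiv ℝ (fun y => fderiv ℝ φ y (EuclideanSpace.single j 1)) x (EuclideanSpace.single i 1)

/-- The semilinear operator
`Gφ(x) = Σ_{i,j} a_{ij}(x) ∂²φ/∂x_i∂x_j(x) + inf_{u∈U} (b(x,u)·∇φ(x) + r(x,u) φ(x))`. -/
noncomputable def Gop {d : ℕ} {U : Type*}
    (a : EuclideanSpace ℝ (Fin d) → Matrix (Fin d) (Fin d) ℝ)
    (b : EuclideanSpace ℝ (Fin d) → U → EuclideanSpace ℝ (Fin d))
    (r : EuclideanSpace ℝ (Fin d) → U → ℝ)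
    (φ : EuclideanSpace ℝ (Fin d) → ℝ) (x : EuclideanSpace ℝ (Fin d)) : ℝ :=
  (∑ i, ∑ j, a x i j * sdv φ x i j)
    + ⨅ u : U, ((inner ℝ (b x u) (gradient φ x) : ℝ) + r x u * φ x)

/-- The quadratic form `zᵀ A z`. -/
noncomputable def quadForm {d : ℕ}
    (A : Matrix (Fin d) (Fin d) ℝ) (z : EuclideanSpace ℝ (Fin d)) : ℝ :=
  ∑ i, ∑ j, z i * A i j * z j

/-!
Solutions on the whole space satisfy global and weighted interior `C^{2,1/2}` Schauder estimates,
proved by blow-up: rescalings of a violating sequence converge along an ultrafilter to an entire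
solution of a homogeneous constant-coefficient equation with `1/2`-Hölder Hessian, and a
Bernstein-type Liouville theorem makes such a Hessian constant. The operator `Δ - Λ` is inverted by
finite differences, where Jacobi iteration contracts the sup norm, and mollification; the
continuity method carries solvability from `Δ` to a general elliptic field.

Replacing directional derivatives by difference quotients makes the infimum a monotone functional
of the unknown, so that the discounted semilinear equation becomes a sup-norm contraction, and the
step can then be sent to zero. Extend the coefficients off the ball by radial retraction and add the
discount `1 / N + N² χ`, where `χ` is the truncated distance to the ball: as `N → ∞`, exponential
barriers force zero boundary values, and the interior estimates yield a `C²` limit in the ball.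
Uniqueness is the comparison principle.
-/

namespace SemilinearDirichlet

open Filter Topology

section Jets

variable {E : Type*} [NormedAddCommGroup E] [NormedSpace ℝ E]

/- Without these shortcuts, instance search on functionals of bilinear forms fails or is slow. -/
noncomputable scoped instance : NormedAddCommGroup (E →L[ℝ] E →L[ℝ] ℝ) :=
  ContinuousLinearMap.toNormedAddCommGroup

noncomputable scoped instance : NormedSpace ℝ (E →L[ℝ] E →L[ℝ] ℝ) :=
  ContinuousLinearMap.toNormedSpace

/-- A twice differentiable function bundled with its first and second derivatives. Carrying the
derivatives as data lets estimates and limits be stated for `val`, `grad` and `hess` separately,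
without differentiability side conditions. -/
structure Jet (E : Type*) [NormedAddCommGroup E] [NormedSpace ℝ E] where
  val : E → ℝ
  grad : E → E →L[ℝ] ℝ
  hess : E → E →L[ℝ] E →L[ℝ] ℝ
  hasFDerivAt_val : ∀ x, HasFDerivAt val (grad x) x
  hasFDerivAt_grad : ∀ x, HasFDerivAt grad (hess x) x

namespace Jet

noncomputable instance : Zero (Jet E) :=
  ⟨⟨0, 0, 0, fun x => hasFDerivAt_const 0 x, fun x => hasFDerivAt_const 0 x⟩⟩

noncomputable instance : Add (Jet E) where
  add J J' :=
    { val := fun x => J.val x + J'.val x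
      grad := fun x => J.grad x + J'.grad x
      hess := fun x => J.hess x + J'.hess x
      hasFDerivAt_val := fun x => (J.hasFDerivAt_val x).add (J'.hasFDerivAt_val x)
      hasFDerivAt_grad := fun x => (J.hasFDerivAt_grad x).add (J'.hasFDerivAt_grad x) }

noncomputable instance : Sub (Jet E) where
  sub J J' :=
    { val := fun x => J.val x - J'.val x
      grad := fun x => J.grad x - J'.grad x
      hess := fun x => J.hess x - J'.hess x
      hasFDerivAt_val := fun x => (J.hasFDerivAt_val x).sub (J'.hasFDerivAt_val x)
      hasFDerivAt_grad := fun x => (J.hasFDerivAt_grad x).sub (J'.hasFDerivAt_grad x) }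

noncomputable instance : SMul ℝ (Jet E) where
  smul a J :=
    { val := fun x => a * J.val x
      grad := fun x => a • J.grad x
      hess := fun x => a • J.hess x
      hasFDerivAt_val := fun x => (J.hasFDerivAt_val x).const_mul a
      hasFDerivAt_grad := fun x => (J.hasFDerivAt_grad x).const_smul a }

@[simp] theorem val_zero (x : E) : (0 : Jet E).val x = 0 := rfl
@[simp] theorem grad_zero (x : E) : (0 : Jet E).grad x = 0 := rfl
@[simp] theorem hess_zero (x : E) : (0 : Jet E).hess x = 0 := rfl

@[simp] theorem val_add (J J' : Jet E) (x : E) : (J + J').val x = J.val x + J'.val x := rfl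
@[simp] theorem grad_add (J J' : Jet E) (x : E) : (J + J').grad x = J.grad x + J'.grad x := rfl
@[simp] theorem hess_add (J J' : Jet E) (x : E) : (J + J').hess x = J.hess x + J'.hess x := rfl

@[simp] theorem val_sub (J J' : Jet E) (x : E) : (J - J').val x = J.val x - J'.val x := rfl
@[simp] theorem grad_sub (J J' : Jet E) (x : E) : (J - J').grad x = J.grad x - J'.grad x := rfl
@[simp] theorem hess_sub (J J' : Jet E) (x : E) : (J - J').hess x = J.hess x - J'.hess x := rfl

@[simp] theorem val_smul (a : ℝ) (J : Jet E) (x : E) : (a • J).val x = a * J.val x := rfl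
@[simp] theorem grad_smul (a : ℝ) (J : Jet E) (x : E) : (a • J).grad x = a • J.grad x := rfl
@[simp] theorem hess_smul (a : ℝ) (J : Jet E) (x : E) : (a • J).hess x = a • J.hess x := rfl

/-- The jet of a finite sum of functions. -/
@[simps] noncomputable def sum {ι : Type*} (s : Finset ι) (J : ι → Jet E) : Jet E where
  val x := ∑ i ∈ s, (J i).val x
  grad x := ∑ i ∈ s, (J i).grad x
  hess x := ∑ i ∈ s, (J i).hess x
  hasFDerivAt_val x := .fun_sum fun i _ => (J i).hasFDerivAt_val x
  hasFDerivAt_grad x := .fun_sum fun i _ => (J i).hasFDerivAt_grad x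

/-- The jet of `y ↦ J.val (y + k)`. -/
@[simps] def translate (J : Jet E) (k : E) : Jet E where
  val x := J.val (x + k)
  grad x := J.grad (x + k)
  hess x := J.hess (x + k)
  hasFDerivAt_val x := (hasFDerivAt_comp_add_right k).2 (J.hasFDerivAt_val (x + k))
  hasFDerivAt_grad x := (hasFDerivAt_comp_add_right k).2 (J.hasFDerivAt_grad (x + k))

/-- The blow-up `z ↦ s * J.val (x + ρ • z)` at `x`, with scale `ρ` and amplitude `s`. -/
@[simps] noncomputable def rescale (J : Jet E) (s ρ : ℝ) (x : E) : Jet E where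
  val z := s * J.val (x + ρ • z)
  grad z := (s * ρ) • J.grad (x + ρ • z)
  hess z := (s * ρ ^ 2) • J.hess (x + ρ • z)
  hasFDerivAt_val z := by
    have inner : HasFDerivAt (fun z : E => x + ρ • z) (ρ • .id ℝ E) z :=
      ((hasFDerivAt_id z).const_smul ρ).const_add x
    refine (((J.hasFDerivAt_val (x + ρ • z)).comp z inner).const_mul s).congr_fderiv ?_
    ext v; simp; ring
  hasFDerivAt_grad z := by
    have inner : HasFDerivAt (fun z : E => x + ρ • z) (ρ • .id ℝ E) z :=
      ((hasFDerivAt_id z).const_smul ρ).const_add x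
    refine (((J.hasFDerivAt_grad (x + ρ • z)).comp z inner).const_smul (s * ρ)).congr_fderiv ?_
    ext v w; simp; ring

/-- The jet of `(J.val - c)²`. -/
@[simps] noncomputable def sqSub (J : Jet E) (c : ℝ) : Jet E where
  val x := (J.val x - c) ^ 2
  grad x := (2 * (J.val x - c)) • J.grad x
  hess x := (2 * (J.val x - c)) • J.hess x + (2 : ℝ) • (J.grad x).smulRight (J.grad x)
  hasFDerivAt_val x :=
    (((J.hasFDerivAt_val x).sub_const c).pow 2).congr_fderiv (by ext v; simp)
  hasFDerivAt_grad x :=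
    ((((J.hasFDerivAt_val x).sub_const c).const_mul 2).smul (J.hasFDerivAt_grad x)).congr_fderiv
      (by ext v w; simp; ring)

theorem hasFDerivAt_half_quadratic (Q : E →L[ℝ] E →L[ℝ] ℝ) (hQ : ∀ v w, Q v w = Q w v) (x y : E) :
    HasFDerivAt (fun y => (1 / 2 : ℝ) * Q (y - x) (y - x)) (Q (y - x)) y := by
  have inner : HasFDerivAt (fun y : E => y - x) (.id ℝ E) y := (hasFDerivAt_id y).sub_const x
  refine (((Q.hasFDerivAt.comp y inner).clm_apply inner).const_mul (1 / 2 : ℝ)).congr_fderiv ?_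
  ext v
  simp [hQ v y, hQ v x]
  ring

/-- The jet of the quadratic polynomial with Taylor coefficients `c`, `P`, `Q` at `x`. -/
@[simps] noncomputable def quadratic (x : E) (c : ℝ) (P : E →L[ℝ] ℝ) (Q : E →L[ℝ] E →L[ℝ] ℝ)
    (hQ : ∀ v w, Q v w = Q w v) : Jet E where
  val y := c + P (y - x) + (1 / 2 : ℝ) * Q (y - x) (y - x)
  grad y := P + Q (y - x)
  hess _ := Q
  hasFDerivAt_val y :=
    ((P.hasFDerivAt.comp y ((hasFDerivAt_id y).sub_const x)).const_add c).add
      (hasFDerivAt_half_quadratic Q hQ x y)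
  hasFDerivAt_grad y := (Q.hasFDerivAt.comp y ((hasFDerivAt_id y).sub_const x)).const_add P

variable (J : Jet E)

theorem hess_symm (x v w : E) : J.hess x v w = J.hess x w v :=
  second_derivative_symmetric J.hasFDerivAt_val (J.hasFDerivAt_grad x) v w

theorem continuous_val : Continuous J.val :=
  continuous_iff_continuousAt.2 fun x => (J.hasFDerivAt_val x).continuousAt

theorem abs_val_sub_le {G : ℝ} (hG : ∀ x, ‖J.grad x‖ ≤ G) (x y : E) :
    |J.val y - J.val x| ≤ G * ‖y - x‖ :=
  convex_univ.norm_image_sub_le_of_norm_hasFDerivWithin_le (𝕜 := ℝ)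
    (fun z _ => (J.hasFDerivAt_val z).hasFDerivWithinAt) (fun z _ => hG z) trivial trivial

theorem norm_grad_sub_le {H : ℝ} (hH : ∀ x, ‖J.hess x‖ ≤ H) (x y : E) :
    ‖J.grad y - J.grad x‖ ≤ H * ‖y - x‖ :=
  convex_univ.norm_image_sub_le_of_norm_hasFDerivWithin_le (𝕜 := ℝ)
    (fun z _ => (J.hasFDerivAt_grad z).hasFDerivWithinAt) (fun z _ => hH z) trivial trivial

theorem abs_val_sub_linear_le {H : ℝ} (hH : ∀ x, ‖J.hess x‖ ≤ H) (x y : E) :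
    |J.val y - J.val x - J.grad x (y - x)| ≤ H * ‖y - x‖ ^ 2 := by
  have H0 : 0 ≤ H := (norm_nonneg (J.hess x)).trans (hH x)
  have := (convex_closedBall x ‖y - x‖).norm_image_sub_le_of_norm_hasFDerivWithin_le' (𝕜 := ℝ)
    (x := x) (y := y) (C := H * ‖y - x‖) (φ := J.grad x)
    (fun z _ => (J.hasFDerivAt_val z).hasFDerivWithinAt)
    (fun z hz => (J.norm_grad_sub_le hH x z).trans (by gcongr; exact mem_closedBall_iff_norm.1 hz))
    (mem_closedBall_self (norm_nonneg _)) (mem_closedBall_iff_norm.2 le_rfl)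
  rwa [mul_assoc, ← sq] at this

theorem norm_grad_sub_linear_le {x y : E} {h w : ℝ}
    (hw : ∀ z, ‖z - x‖ ≤ h → ‖J.hess z - J.hess x‖ ≤ w) (hy : ‖y - x‖ ≤ h) :
    ‖J.grad y - J.grad x - J.hess x (y - x)‖ ≤ w * ‖y - x‖ :=
  (convex_closedBall x h).norm_image_sub_le_of_norm_hasFDerivWithin_le' (𝕜 := ℝ)
    (fun z _ => (J.hasFDerivAt_grad z).hasFDerivWithinAt)
    (fun z hz => hw z (mem_closedBall_iff_norm.1 hz))
    (mem_closedBall_self ((norm_nonneg _).trans hy)) (mem_closedBall_iff_norm.2 hy)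

theorem abs_val_sub_quadratic_le {x y : E} {h w : ℝ}
    (hw : ∀ z, ‖z - x‖ ≤ h → ‖J.hess z - J.hess x‖ ≤ w) (hy : ‖y - x‖ ≤ h) :
    |J.val y - J.val x - J.grad x (y - x) - 1 / 2 * J.hess x (y - x) (y - x)|
      ≤ w * ‖y - x‖ ^ 2 := by
  have w0 : 0 ≤ w := (norm_nonneg (J.hess y - J.hess x)).trans (hw y hy)
  have remainder := (convex_closedBall x ‖y - x‖).norm_image_sub_le_of_norm_hasFDerivWithin_le'
    (𝕜 := ℝ) (x := x) (y := y) (C := w * ‖y - x‖) (φ := J.grad x)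
    (f := fun z => J.val z - (1 / 2 : ℝ) * J.hess x (z - x) (z - x))
    (f' := fun z => J.grad z - J.hess x (z - x))
    (fun z _ => ((J.hasFDerivAt_val z).sub
      (hasFDerivAt_half_quadratic _ (J.hess_symm x) x z)).hasFDerivWithinAt)
    (fun z hz => ?_) (mem_closedBall_self (norm_nonneg _)) (mem_closedBall_iff_norm.2 le_rfl)
  · simp only [sub_self, map_zero, mul_zero, sub_zero, Real.norm_eq_abs] at remainder
    calc _ = |J.val y - 1 / 2 * J.hess x (y - x) (y - x) - J.val x - J.grad x (y - x)| := by
          ring_nf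
      _ ≤ w * ‖y - x‖ * ‖y - x‖ := remainder
      _ = _ := by ring
  · have hz' : ‖z - x‖ ≤ ‖y - x‖ := mem_closedBall_iff_norm.1 hz
    rw [sub_right_comm]
    exact (J.norm_grad_sub_linear_le hw (hz'.trans hy)).trans (by gcongr)

end Jet

end Jets

section Differences

variable {E : Type*} [NormedAddCommGroup E] [NormedSpace ℝ E]

/-- The jet of the first difference `x ↦ J.val (x + k) - J.val x`. -/
noncomputable def Jet.diff (J : Jet E) (k : E) : Jet E := J.translate k - J

/-- The jet of the difference quotient `x ↦ (J.val (x + t • v) - J.val x) / t`. -/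
noncomputable def Jet.diffQuot (J : Jet E) (v : E) (t : ℝ) : Jet E := t⁻¹ • J.diff (t • v)

namespace Jet

variable (J : Jet E)

theorem diff_val (k x : E) : (J.diff k).val x = J.val (x + k) - J.val x := rfl
theorem diff_grad (k x : E) : (J.diff k).grad x = J.grad (x + k) - J.grad x := rfl
theorem diff_hess (k x : E) : (J.diff k).hess x = J.hess (x + k) - J.hess x := rfl

theorem diffQuot_val (v x : E) (t : ℝ) :
    (J.diffQuot v t).val x = (J.val (x + t • v) - J.val x) / t :=
  inv_mul_eq_div _ _

theorem diffQuot_hess (v x : E) (t : ℝ) :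
    (J.diffQuot v t).hess x = t⁻¹ • (J.hess (x + t • v) - J.hess x) := rfl

theorem diff_diff_grad_comm (k h x : E) :
    ((J.diff k).diff h).grad x = ((J.diff h).diff k).grad x := by
  simp only [diff_grad, add_right_comm x h k]
  abel

variable {J} {v : E} {t G H : ℝ}

theorem abs_diffQuot_val_le (hG : ∀ x, ‖J.grad x‖ ≤ G) (hv : ‖v‖ = 1) (ht : 0 < t) (x : E) :
    |(J.diffQuot v t).val x| ≤ G := by
  rw [diffQuot_val, abs_div, abs_of_pos ht, div_le_iff₀ ht]
  simpa [norm_smul, hv, abs_of_pos ht] using J.abs_val_sub_le hG x (x + t • v)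

theorem abs_diffQuot_val_sub_grad_le (hH : ∀ x, ‖J.hess x‖ ≤ H) (hv : ‖v‖ = 1) (ht : 0 < t)
    (x : E) : |(J.diffQuot v t).val x - J.grad x v| ≤ H * t := by
  have taylor := J.abs_val_sub_linear_le hH x (x + t • v)
  rw [add_sub_cancel_left, norm_smul, hv, Real.norm_of_nonneg ht.le, mul_one, map_smul,
    smul_eq_mul] at taylor
  rw [diffQuot_val, div_sub' ht.ne', abs_div, abs_of_pos ht, div_le_iff₀ ht]
  calc _ ≤ H * t ^ 2 := taylor
    _ = _ := by ring

theorem norm_diff_diff_grad_le (hH : ∀ x y, ‖J.hess x - J.hess y‖ ≤ H * √‖x - y‖) (k h x : E) :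
    ‖((J.diff k).diff h).grad x‖ ≤ H * √‖k‖ * ‖h‖ := by
  have hess_le (y : E) : ‖(J.diff k).hess y‖ ≤ H * √‖k‖ := by
    simpa [diff_hess] using hH (y + k) y
  simpa [diff_grad] using (J.diff k).norm_grad_sub_le hess_le x (x + h)

theorem norm_diff_diff_hess_le (hH : ∀ x y, ‖J.hess x - J.hess y‖ ≤ H * √‖x - y‖) (k h x : E) :
    ‖((J.diff k).diff h).hess x‖ ≤ 2 * (H * √‖k‖) := by
  have hess_le (y : E) : ‖(J.diff k).hess y‖ ≤ H * √‖k‖ := by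
    simpa [diff_hess] using hH (y + k) y
  rw [diff_hess, two_mul]
  exact (norm_sub_le _ _).trans (add_le_add (hess_le _) (hess_le _))

/-- A second difference may be differenced a third time in either order, so its Hölder continuity
is read off from `norm_diff_diff_grad_le` with the roles of the increments exchanged. -/
theorem abs_diff_diff_val_sub_le (hH : ∀ x y, ‖J.hess x - J.hess y‖ ≤ H * √‖x - y‖)
    (k h x y : E) :
    |((J.diff k).diff h).val x - ((J.diff k).diff h).val y| ≤ H * ‖k‖ * ‖h‖ * √‖x - y‖ := by
  have grad_le (z : E) : ‖((J.diff k).diff (x - y)).grad z‖ ≤ H * √‖x - y‖ * ‖k‖ := by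
    rw [diff_diff_grad_comm]
    exact norm_diff_diff_grad_le hH (x - y) k z
  have lipschitz := ((J.diff k).diff (x - y)).abs_val_sub_le grad_le y (y + h)
  have swap : ((J.diff k).diff (x - y)).val (y + h) - ((J.diff k).diff (x - y)).val y
      = ((J.diff k).diff h).val x - ((J.diff k).diff h).val y := by
    simp only [diff_val, show y + h + (x - y) = x + h by abel, add_sub_cancel]
    ring
  rw [swap, add_sub_cancel_left] at lipschitz
  exact lipschitz.trans_eq (by ring)

end Jet

theorem exists_unit_vector_lt_apply {P : E →L[ℝ] ℝ} {r : ℝ} (hr : 0 ≤ r) (h : r < ‖P‖) :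
    ∃ e, ‖e‖ = 1 ∧ r < P e := by
  by_contra! hP
  refine h.not_ge (P.opNorm_le_of_unit_norm hr fun e he => abs_le.2 ⟨?_, hP e he⟩)
  have := hP (-e) (by rwa [norm_neg])
  rw [map_neg] at this
  linarith

end Differences

section Interpolation

variable {E : Type*} [NormedAddCommGroup E] [InnerProductSpace ℝ E]

theorem opNorm_le_of_abs_apply_self_le (Q : E →L[ℝ] E →L[ℝ] ℝ) (hQ : ∀ v w, Q v w = Q w v) {S : ℝ}
    (hS : 0 ≤ S) (h : ∀ v, |Q v v| ≤ S * ‖v‖ ^ 2) : ‖Q‖ ≤ S := by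
  have unit_bound (v w : E) (hv : ‖v‖ = 1) (hw : ‖w‖ = 1) : |Q v w| ≤ S := by
    have polarization : Q v w = 1 / 4 * (Q (v + w) (v + w) - Q (v - w) (v - w)) := by
      simp [hQ w v]; ring
    have parallelogram := parallelogram_law_with_norm ℝ v w
    rw [hv, hw] at parallelogram
    have h_add := abs_le.1 (h (v + w))
    have h_sub := abs_le.1 (h (v - w))
    rw [polarization, abs_le]
    constructor <;> nlinarith
  exact Q.opNorm_le_of_unit_norm hS fun v hv =>
    (Q v).opNorm_le_of_unit_norm hS fun w hw => unit_bound v w hv hw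

namespace Jet

variable (J : Jet E) {x : E} {h w U : ℝ}

/-- Evaluating the second-order Taylor formula at `x ± e` isolates the odd and the even part. -/
theorem abs_grad_hess_apply_le (hU : ∀ y, ‖y - x‖ ≤ h → |J.val y| ≤ U)
    (hw : ∀ y, ‖y - x‖ ≤ h → ‖J.hess y - J.hess x‖ ≤ w) {e : E} (he : ‖e‖ = h) :
    |J.grad x e| ≤ U + w * h ^ 2 ∧ |J.hess x e e| ≤ 4 * U + 2 * w * h ^ 2 := by
  have plus := J.abs_val_sub_quadratic_le hw (y := x + e) (by simp [he])
  have minus := J.abs_val_sub_quadratic_le hw (y := x - e) (by simp [he])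
  have val_plus := abs_le.1 (hU (x + e) (by simp [he]))
  have val_minus := abs_le.1 (hU (x - e) (by simp [he]))
  have val_center := abs_le.1 (hU x (by simp [← he]))
  rw [add_sub_cancel_left, he, abs_le] at plus
  rw [sub_sub_cancel_left, norm_neg, he, abs_le] at minus
  simp only [map_neg, neg_apply, neg_neg] at minus
  constructor <;> rw [abs_le] <;> constructor <;> linarith

theorem norm_hess_le (hh : 0 < h) (hU : ∀ y, ‖y - x‖ ≤ h → |J.val y| ≤ U)
    (hw : ∀ y, ‖y - x‖ ≤ h → ‖J.hess y - J.hess x‖ ≤ w) :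
    ‖J.hess x‖ ≤ 4 * U / h ^ 2 + 2 * w := by
  have U0 : 0 ≤ U := (abs_nonneg _).trans (hU x (by simp [hh.le]))
  have w0 : 0 ≤ w := (norm_nonneg (J.hess x - J.hess x)).trans (hw x (by simp [hh.le]))
  refine opNorm_le_of_abs_apply_self_le _ (J.hess_symm x) (by positivity) fun v => ?_
  rcases eq_or_ne v 0 with rfl | hv
  · simp
  have hv' := norm_pos_iff.2 hv
  have scaled := (J.abs_grad_hess_apply_le hU hw (e := (h / ‖v‖) • v)
    (by simp [norm_smul, abs_of_pos hh, hv])).2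
  simp only [map_smul, smul_apply, smul_eq_mul, abs_mul, abs_of_pos (div_pos hh hv')] at scaled
  calc |J.hess x v v|
      = (‖v‖ / h) ^ 2 * (h / ‖v‖ * (h / ‖v‖ * |J.hess x v v|)) := by field_simp
    _ ≤ (‖v‖ / h) ^ 2 * (4 * U + 2 * w * h ^ 2) := by gcongr
    _ = _ := by field_simp

theorem norm_grad_le (hh : 0 < h) (hU : ∀ y, ‖y - x‖ ≤ h → |J.val y| ≤ U)
    (hw : ∀ y, ‖y - x‖ ≤ h → ‖J.hess y - J.hess x‖ ≤ w) :
    ‖J.grad x‖ ≤ U / h + w * h := by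
  have U0 : 0 ≤ U := (abs_nonneg _).trans (hU x (by simp [hh.le]))
  have w0 : 0 ≤ w := (norm_nonneg (J.hess x - J.hess x)).trans (hw x (by simp [hh.le]))
  refine (J.grad x).opNorm_le_of_unit_norm (by positivity) fun v hv => ?_
  have scaled := (J.abs_grad_hess_apply_le hU hw (e := h • v)
    (by simp [norm_smul, abs_of_pos hh, hv])).1
  rw [map_smul, smul_eq_mul, abs_mul, abs_of_pos hh] at scaled
  calc |J.grad x v| = (h * |J.grad x v|) / h := by field_simp
    _ ≤ (U + w * h ^ 2) / h := by gcongr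
    _ = _ := by field_simp

end Jet

end Interpolation

section MaximumPrinciple

variable {E : Type*} [NormedAddCommGroup E] [NormedSpace ℝ E]

theorem second_derivative_nonpos_of_isLocalMax {u : ℝ → ℝ} {u' : ℝ → ℝ} {u'' t : ℝ}
    (hu : ∀ᶠ s in 𝓝 t, HasDerivAt u (u' s) s) (hu' : HasDerivAt u' u'' t) (hm : IsLocalMax u t) :
    u'' ≤ 0 := by
  by_contra! hpos
  have deriv_eq : deriv u =ᶠ[𝓝 t] u' := hu.mono fun s hs => hs.deriv
  have deriv2_eq : deriv (deriv u) t = u'' := deriv_eq.deriv_eq.trans hu'.deriv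
  have isMin : IsLocalMin u t := isLocalMin_of_deriv_deriv_pos (by rwa [deriv2_eq])
    hm.deriv_eq_zero hu.self_of_nhds.continuousAt
  have eventually_const : u =ᶠ[𝓝 t] fun _ => u t := by
    filter_upwards [isMin, hm] with s h_min h_max using le_antisymm h_max h_min
  have := eventually_const.deriv.deriv_eq
  simp only [deriv_const'] at this
  exact hpos.ne' (deriv2_eq.symm.trans this)

theorem fderiv_eq_zero_and_hess_nonpos_of_isLocalMax {u : E → ℝ} {p : E → E →L[ℝ] ℝ}
    {Q : E →L[ℝ] E →L[ℝ] ℝ} {x : E} (hu : ∀ᶠ y in 𝓝 x, HasFDerivAt u (p y) y)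
    (hp : HasFDerivAt p Q x) (hm : IsLocalMax u x) : p x = 0 ∧ ∀ e, Q e e ≤ 0 := by
  refine ⟨hm.hasFDerivAt_eq_zero hu.self_of_nhds, fun e => ?_⟩
  let line : ℝ → E := fun t => x + t • e
  have line_zero : line 0 = x := by simp [line]
  have line_deriv (t : ℝ) : HasDerivAt line e t := by
    simpa [line] using ((hasDerivAt_id t).smul_const e).const_add x
  have line_tendsto : Tendsto line (𝓝 0) (𝓝 x) := by
    simpa [line_zero] using (line_deriv 0).continuousAt.tendsto
  refine second_derivative_nonpos_of_isLocalMax (u := u ∘ line) (u' := fun t => p (line t) e)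
    (t := 0) ?_ ?_ ?_
  · filter_upwards [line_tendsto.eventually hu] with t ht
    exact ht.comp_hasDerivAt t (line_deriv t)
  · rw [← line_zero] at hp
    simpa using (hp.comp_hasDerivAt (0 : ℝ) (line_deriv 0)).clm_apply (hasDerivAt_const (0 : ℝ) e)
  · filter_upwards [line_tendsto.eventually hm] with t ht
    simpa [line_zero] using ht

theorem exists_critical_point_of_lt_on_sphere [ProperSpace E] {u : E → ℝ} {p : E → E →L[ℝ] ℝ}
    {q : E → E →L[ℝ] E →L[ℝ] ℝ} {c x₀ : E} {ρ : ℝ} (hc : ContinuousOn u (closedBall c ρ))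
    (hu : ∀ x ∈ ball c ρ, HasFDerivAt u (p x) x) (hp : ∀ x ∈ ball c ρ, HasFDerivAt p (q x) x)
    (hx₀ : x₀ ∈ ball c ρ) (hb : ∀ x ∈ sphere c ρ, u x < u x₀) :
    ∃ y ∈ ball c ρ, u x₀ ≤ u y ∧ p y = 0 ∧ ∀ e, q y e e ≤ 0 := by
  have hx₀' := ball_subset_closedBall hx₀
  obtain ⟨y, hy, hmax⟩ := (isCompact_closedBall c ρ).exists_isMaxOn ⟨x₀, hx₀'⟩ hc
  have y_ball : y ∈ ball c ρ :=
    (mem_closedBall.1 hy).lt_or_eq.resolve_right fun h => (hb y h).not_ge (hmax hx₀')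
  have nhds_ball := isOpen_ball.mem_nhds y_ball
  exact ⟨y, y_ball, hmax hx₀', fderiv_eq_zero_and_hess_nonpos_of_isLocalMax
    (eventually_of_mem nhds_ball hu) (hp y y_ball)
    (eventually_of_mem nhds_ball fun z hz => hmax (ball_subset_closedBall hz))⟩

theorem Jet.exists_critical_point_of_lt_on_sphere [ProperSpace E] (J : Jet E) {c x₀ : E} {ρ : ℝ}
    (hx₀ : x₀ ∈ ball c ρ) (hb : ∀ x ∈ sphere c ρ, J.val x < J.val x₀) :
    ∃ y ∈ ball c ρ, J.val x₀ ≤ J.val y ∧ J.grad y = 0 ∧ ∀ e, J.hess y e e ≤ 0 :=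
  SemilinearDirichlet.exists_critical_point_of_lt_on_sphere J.continuous_val.continuousOn
    (fun x _ => J.hasFDerivAt_val x) (fun x _ => J.hasFDerivAt_grad x) hx₀ hb

end MaximumPrinciple

section Ellipticity

variable {E : Type*} [NormedAddCommGroup E] [InnerProductSpace ℝ E]

/-- The inner product as a continuous bilinear form, i.e. the Hessian of `‖x‖² / 2`. -/
noncomputable def innerForm (E : Type*) [NormedAddCommGroup E] [InnerProductSpace ℝ E] :
    E →L[ℝ] E →L[ℝ] ℝ :=
  innerSL ℝ

@[simp] theorem innerForm_apply (v w : E) : innerForm E v w = inner ℝ v w :=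
  rfl

theorem norm_innerForm_le : ‖innerForm E‖ ≤ 1 :=
  norm_innerSL_le ℝ

/-- The jet of `x ↦ ‖x - x₀‖²`. -/
noncomputable def Jet.normSqSub (x₀ : E) : Jet E :=
  .quadratic x₀ 0 0 ((2 : ℝ) • innerForm E) fun v w => by simp [real_inner_comm]

@[simp] theorem Jet.normSqSub_val (x₀ x : E) : (Jet.normSqSub x₀).val x = ‖x - x₀‖ ^ 2 := by
  simp only [normSqSub, quadratic_val, smul_apply, innerForm_apply, real_inner_self_eq_norm_sq]
  simp

@[simp] theorem Jet.normSqSub_grad (x₀ x : E) :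
    (Jet.normSqSub x₀).grad x = (2 : ℝ) • innerForm E (x - x₀) := by
  simp [normSqSub]

@[simp] theorem Jet.normSqSub_hess (x₀ x : E) :
    (Jet.normSqSub x₀).hess x = (2 : ℝ) • innerForm E := rfl

/-- A uniformly elliptic second-order operator with frozen coefficients, encoded by the functional
`L` that maps the Hessian `D²u(x)` to `∑ i j, a i j ∂²u/∂x_i∂x_j (x)`. One constant serves as
bound, as inverse of the ellipticity and, through `1 ≤ C`, as normalization. -/
structure IsElliptic (C : ℝ) (L : (E →L[ℝ] E →L[ℝ] ℝ) →L[ℝ] ℝ) : Prop where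
  one_le : 1 ≤ C
  norm_le : ‖L‖ ≤ C
  apply_nonpos : ∀ Q : E →L[ℝ] E →L[ℝ] ℝ, (∀ e, Q e e ≤ 0) → L Q ≤ 0
  le_apply_smulRight : ∀ P : E →L[ℝ] ℝ, C⁻¹ * ‖P‖ ^ 2 ≤ L (P.smulRight P)

namespace IsElliptic

variable {C : ℝ} {L : (E →L[ℝ] E →L[ℝ] ℝ) →L[ℝ] ℝ}

theorem pos (hL : IsElliptic C L) : 0 < C := one_pos.trans_le hL.one_le

theorem abs_apply_le (hL : IsElliptic C L) (Q : E →L[ℝ] E →L[ℝ] ℝ) : |L Q| ≤ C * ‖Q‖ :=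
  L.le_of_opNorm_le hL.norm_le Q

theorem apply_nonneg (hL : IsElliptic C L) {Q : E →L[ℝ] E →L[ℝ] ℝ} (hQ : ∀ e, 0 ≤ Q e e) :
    0 ≤ L Q := by
  simpa using hL.apply_nonpos (-Q) fun e => by simpa using hQ e

theorem apply_smulRight_nonneg (hL : IsElliptic C L) (P : E →L[ℝ] ℝ) : 0 ≤ L (P.smulRight P) :=
  hL.apply_nonneg fun e => mul_self_nonneg (P e)

theorem apply_innerForm_le (hL : IsElliptic C L) : L (innerForm E) ≤ C :=
  calc L (innerForm E) ≤ C * ‖innerForm E‖ := (le_abs_self _).trans (hL.abs_apply_le _)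
    _ ≤ C * 1 := mul_le_mul_of_nonneg_left norm_innerForm_le hL.pos.le
    _ = C := mul_one C

end IsElliptic

end Ellipticity

section Liouville

variable {E : Type*} [NormedAddCommGroup E] [InnerProductSpace ℝ E]
variable [FiniteDimensional ℝ E] {C : ℝ} {L : (E →L[ℝ] E →L[ℝ] ℝ) →L[ℝ] ℝ}

/-- Bernstein's method: maximize `T² + α (D - D x₀)² - β ‖x - x₀‖²`. -/
theorem exists_small_grad_of_lt_on_sphere (hL : IsElliptic C L) {T D : Jet E}
    (hT : ∀ x, L (T.hess x) = 0) (hD : ∀ x, L (D.hess x) = 0)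
    {α β ℓ : ℝ} (hα : 0 ≤ α) (hβ : 0 ≤ β) (hℓ : 0 < ℓ) (x₀ : E)
    (h : ∀ x ∈ sphere x₀ ℓ,
      T.val x ^ 2 + α * (D.val x - D.val x₀) ^ 2 < T.val x₀ ^ 2 + β * ℓ ^ 2) :
    ∃ y ∈ ball x₀ ℓ, T.val x₀ ^ 2 ≤ T.val y ^ 2 + α * (D.val y - D.val x₀) ^ 2 ∧
      α * (C⁻¹ * ‖D.grad y‖ ^ 2) ≤ β * C := by
  let Φ := T.sqSub 0 + α • D.sqSub (D.val x₀) - β • Jet.normSqSub x₀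
  have Φ_val (x : E) :
      Φ.val x = T.val x ^ 2 + α * (D.val x - D.val x₀) ^ 2 - β * ‖x - x₀‖ ^ 2 := by simp [Φ]
  obtain ⟨y, hy, val_le, -, hess_le⟩ := Φ.exists_critical_point_of_lt_on_sphere
    (mem_ball_self hℓ) fun x hx => by
      have := h x hx
      rw [Φ_val, Φ_val, mem_sphere_iff_norm.1 hx]
      simp only [sub_self, norm_zero]
      linarith
  refine ⟨y, hy, ?_, ?_⟩
  · rw [Φ_val, Φ_val] at val_le
    simp only [sub_self, norm_zero] at val_le
    nlinarith [mul_nonneg hβ (sq_nonneg ‖y - x₀‖)]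
  · have L_Φ : L (Φ.hess y) = 2 * L ((T.grad y).smulRight (T.grad y))
        + α * (2 * L ((D.grad y).smulRight (D.grad y)))
        - β * (2 * L (innerForm E)) := by
      simp only [Φ, Jet.hess_sub, Jet.hess_add, Jet.hess_smul, Jet.sqSub_hess, Jet.normSqSub_hess,
        map_add, map_sub, map_smul, smul_eq_mul, hT, hD, mul_zero, zero_add]
    have apply_nonpos := L_Φ ▸ hL.apply_nonpos _ hess_le
    have T_nonneg := hL.apply_smulRight_nonneg (T.grad y)
    have D_ge := mul_le_mul_of_nonneg_left (hL.le_apply_smulRight (D.grad y)) hα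
    have trace_le := mul_le_mul_of_nonneg_left hL.apply_innerForm_le hβ
    linarith

theorem exists_bernstein_constants {G C : ℝ} (hG : 0 < G) (hC : 0 < C) (c : ℝ) :
    ∃ α β ℓ : ℝ, 0 < α ∧ 0 < β ∧ 0 < ℓ ∧ α * (c ^ 2 * ℓ) ≤ G ^ 2 / 16 ∧ β * ℓ ^ 2 = 4 * G ^ 2 ∧
      β * C < α * (C⁻¹ * (G / 8) ^ 2) := by
  obtain ⟨κ, κ_pos, hκ⟩ : ∃ κ > 0, κ * c ^ 2 ≤ G / 32 := by
    refine ⟨G / (32 * (c ^ 2 + 1)), by positivity, ?_⟩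
    rw [div_mul_eq_mul_div, div_le_div_iff₀ (by positivity) (by positivity)]
    nlinarith
  obtain ⟨θ, θ_pos, hθ⟩ : ∃ θ > 0, θ * C < κ * (C⁻¹ * (G / 8) ^ 2) := by
    refine ⟨κ * (C⁻¹ * (G / 8) ^ 2) / (C + 1), by positivity, ?_⟩
    rw [div_mul_eq_mul_div, div_lt_iff₀ (by positivity)]
    have : 0 < κ * (C⁻¹ * (G / 8) ^ 2) := by positivity
    linarith
  refine ⟨κ * θ, θ ^ 2, 2 * G / θ, by positivity, by positivity, by positivity, ?_, ?_, ?_⟩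
  · calc κ * θ * (c ^ 2 * (2 * G / θ)) = κ * c ^ 2 * (2 * G) := by field_simp
      _ ≤ G / 32 * (2 * G) := by gcongr
      _ = _ := by ring
  · field_simp
    ring
  · calc θ ^ 2 * C = θ * (θ * C) := by ring
      _ < θ * (κ * (C⁻¹ * (G / 8) ^ 2)) := by gcongr
      _ = _ := by ring

theorem sq_le_sq_mul_of_abs_le_mul_sqrt {t c δ ℓ : ℝ} (ht : |t| ≤ c * √δ) (hδ : 0 ≤ δ)
    (hδℓ : δ ≤ ℓ) : t ^ 2 ≤ c ^ 2 * ℓ :=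
  calc t ^ 2 = |t| ^ 2 := (sq_abs t).symm
    _ ≤ (c * √δ) ^ 2 := by gcongr
    _ = c ^ 2 * δ := by rw [mul_pow, Real.sq_sqrt hδ]
    _ ≤ c ^ 2 * ℓ := by gcongr

theorem grad_eq_zero_of_apply_hess_eq_zero (hL : IsElliptic C L) {D : Jet E}
    (hD : ∀ x, L (D.hess x) = 0) {G H c : ℝ} (hG : ∀ x, ‖D.grad x‖ ≤ G)
    (hH : ∀ x, ‖D.hess x‖ ≤ H) (hc : ∀ x y, |D.val x - D.val y| ≤ c * √‖x - y‖) (x : E) :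
    D.grad x = 0 := by
  let S := ⨆ x, ‖D.grad x‖
  have grad_le (x : E) : ‖D.grad x‖ ≤ S := le_ciSup ⟨G, forall_mem_range.2 hG⟩ x
  by_contra hx
  have S_pos : 0 < S := (norm_pos_iff.2 hx).trans_le (grad_le x)
  have H0 : 0 ≤ H := (norm_nonneg (D.hess x)).trans (hH x)
  obtain ⟨x₀, hx₀⟩ : ∃ x₀, 3 / 4 * S < ‖D.grad x₀‖ := exists_lt_of_lt_ciSup (by linarith)
  obtain ⟨e, he, grad_e⟩ := exists_unit_vector_lt_apply (by positivity) hx₀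
  obtain ⟨t, ht, hHt⟩ : ∃ t > 0, H * t < S / 4 :=
    ⟨S / (4 * (H + 1)), by positivity, by
      rw [← mul_div_assoc, div_lt_div_iff₀ (by positivity) (by positivity)]; nlinarith⟩
  obtain ⟨α, β, ℓ, α_pos, β_pos, ℓ_pos, hα, hβ, hαβ⟩ :=
    exists_bernstein_constants S_pos hL.pos c
  let T := D.diffQuot e t
  have T_le (x : E) : |T.val x| ≤ S := D.abs_diffQuot_val_le grad_le he ht x
  have T_near (x : E) := abs_le.1 ((D.abs_diffQuot_val_sub_grad_le hH he ht x).trans hHt.le)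
  have oscillation (x : E) (hx : ‖x - x₀‖ ≤ ℓ) : α * (D.val x - D.val x₀) ^ 2 ≤ S ^ 2 / 16 := by
    refine le_trans ?_ hα
    gcongr
    exact sq_le_sq_mul_of_abs_le_mul_sqrt (hc x x₀) (norm_nonneg _) hx
  obtain ⟨y, hy, T_y, grad_y⟩ := exists_small_grad_of_lt_on_sphere hL
    (T := T) (fun x => by simp [T, Jet.diffQuot_hess, hD]) hD α_pos.le β_pos.le ℓ_pos x₀
    fun x hx => by
      have := oscillation x (mem_sphere_iff_norm.1 hx).le
      have := sq_le_sq' (abs_le.1 (T_le x)).1 (abs_le.1 (T_le x)).2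
      nlinarith [sq_nonneg (T.val x₀)]
  have T_large : 3 / 8 * S ≤ |T.val y| := by
    have := oscillation y (mem_ball_iff_norm.1 hy).le
    have : S / 2 ≤ T.val x₀ := by linarith [(T_near x₀).1]
    refine le_of_not_gt fun small => ?_
    have := pow_lt_pow_left₀ small (abs_nonneg _) two_ne_zero
    rw [sq_abs] at this
    nlinarith
  have grad_large : S / 8 ≤ ‖D.grad y‖ := by
    have := (D.grad y).unit_le_opNorm e he.le
    have := abs_sub_abs_le_abs_sub (T.val y) (D.grad y e)
    rw [Real.norm_eq_abs] at *
    linarith [abs_le.2 (T_near y)]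
  have C_inv := inv_pos.2 hL.pos
  exact hαβ.not_ge (le_trans (by gcongr) grad_y)

theorem hess_eq_of_apply_hess_eq_zero (hL : IsElliptic C L) {J : Jet E}
    (hJ : ∀ x, L (J.hess x) = 0) {H : ℝ}
    (hH : ∀ x y, ‖J.hess x - J.hess y‖ ≤ H * √‖x - y‖) (x : E) : J.hess x = J.hess 0 := by
  have additive (y : E) : J.grad (y + x) = J.grad y + (J.grad x - J.grad 0) := by
    have := grad_eq_zero_of_apply_hess_eq_zero hL (D := (J.diff x).diff y)
      (fun z => by simp [Jet.diff_hess, hJ]) (J.norm_diff_diff_grad_le hH x y)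
      (J.norm_diff_diff_hess_le hH x y) (J.abs_diff_diff_val_sub_le hH x y) 0
    simp only [Jet.diff_grad, zero_add] at this
    rw [← sub_eq_zero, ← this]
    abel
  have deriv_translate : HasFDerivAt (fun y => J.grad (y + x)) (J.hess x) 0 := by
    have := (J.translate x).hasFDerivAt_grad 0
    rwa [Jet.translate_hess, zero_add] at this
  simp only [additive] at deriv_translate
  exact deriv_translate.unique ((J.hasFDerivAt_grad 0).add_const _)

end Liouville

section Compactness

variable {E : Type*} [NormedAddCommGroup E] [InnerProductSpace ℝ E]
variable {ι F : Type*} [NormedAddCommGroup F]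

theorem exists_tendsto_of_eventually_norm_le [ProperSpace F] (𝒰 : Ultrafilter ι) {g : ι → F}
    {A : ℝ} (h : ∀ᶠ i in 𝒰, ‖g i‖ ≤ A) : ∃ l, Tendsto g 𝒰 (𝓝 l) := by
  obtain ⟨l, -, hl⟩ := (isCompact_closedBall (0 : F) A).ultrafilter_le_nhds (𝒰.map g)
    (le_principal_iff.2 (h.mono fun i hi => mem_closedBall_zero_iff.2 hi))
  exact ⟨l, hl⟩

variable [NormedSpace ℝ F]

theorem hasFDerivAt_of_norm_sub_le_sqrt {f : E → F} {f' : E →L[ℝ] F} {x : E} {A : ℝ}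
    (h : ∀ᶠ y in 𝓝 x, ‖f y - f x - f' (y - x)‖ ≤ A * √‖y - x‖ * ‖y - x‖) :
    HasFDerivAt f f' x := by
  have remainder : (fun y => f y - f x - f' (y - x)) =O[𝓝 x] fun y => √‖y - x‖ * ‖y - x‖ :=
    .of_bound A (h.mono fun y hy => by rwa [Real.norm_of_nonneg (by positivity), ← mul_assoc])
  have sqrt_small : (fun y => √‖y - x‖) =o[𝓝 x] fun _ => (1 : ℝ) := by
    have : Continuous fun y => √‖y - x‖ := by fun_prop
    simpa [Asymptotics.isLittleO_one_iff] using this.tendsto x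
  refine .of_isLittleO (remainder.trans_isLittleO ?_)
  simpa using sqrt_small.mul_isBigO (Asymptotics.isBigO_refl (fun y => ‖y - x‖) (𝓝 x))

theorem hasFDerivAt_of_tendsto_of_norm_sub_le_sqrt {l : Filter ι} [l.NeBot] {f : ι → E → F}
    {f' : ι → E →L[ℝ] F} {g : E → F} {g' : E →L[ℝ] F} {x : E} {r A : ℝ} (hr : 0 < r)
    (hf : ∀ᶠ y in 𝓝 x, Tendsto (f · y) l (𝓝 (g y))) (hf' : Tendsto f' l (𝓝 g'))
    (h : ∀ᶠ i in l, ∀ y, ‖y - x‖ ≤ r →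
      ‖f i y - f i x - f' i (y - x)‖ ≤ A * √‖y - x‖ * ‖y - x‖) :
    HasFDerivAt g g' x := by
  refine hasFDerivAt_of_norm_sub_le_sqrt (A := A) ?_
  filter_upwards [hf, closedBall_mem_nhds x hr] with y hy y_near
  have apply_tendsto : Tendsto (fun i => f' i (y - x)) l (𝓝 (g' (y - x))) :=
    (Continuous.tendsto (f := fun φ : E →L[ℝ] F => φ (y - x)) (by fun_prop) _).comp hf'
  exact le_of_tendsto ((hy.sub hf.self_of_nhds).sub apply_tendsto).norm
    (h.mono fun i hi => hi y (mem_closedBall_iff_norm.1 y_near))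

namespace Jet

/-- Uniform control of a family of jets near a point: along `l`, the values, gradients and Hessians
at `x` are eventually bounded and the Hessians have a common `1/2`-Hölder modulus at `x`. -/
def EventuallyHolderAt (Js : ι → Jet E) (l : Filter ι) (x : E) : Prop :=
  ∃ r > 0, ∃ A, ∀ᶠ i in l, |(Js i).val x| ≤ A ∧ ‖(Js i).grad x‖ ≤ A ∧ ‖(Js i).hess x‖ ≤ A ∧
    ∀ y, ‖y - x‖ ≤ r → ‖(Js i).hess y - (Js i).hess x‖ ≤ A * √‖y - x‖

/-- Pointwise convergence of a family of jets, in all three components. -/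
structure TendstoAt (Js : ι → Jet E) (l : Filter ι) (x : E) (c : ℝ) (P : E →L[ℝ] ℝ)
    (Q : E →L[ℝ] E →L[ℝ] ℝ) : Prop where
  val : Tendsto (fun i => (Js i).val x) l (𝓝 c)
  grad : Tendsto (fun i => (Js i).grad x) l (𝓝 P)
  hess : Tendsto (fun i => (Js i).hess x) l (𝓝 Q)

theorem abs_val_sub_linear_le_sqrt (J : Jet E) {x : E} {r A : ℝ} (hA : ‖J.hess x‖ ≤ A)
    (h : ∀ y, ‖y - x‖ ≤ r → ‖J.hess y - J.hess x‖ ≤ A * √‖y - x‖) {y : E} (hr : ‖y - x‖ ≤ r)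
    (h1 : ‖y - x‖ ≤ 1) :
    |J.val y - J.val x - J.grad x (y - x)| ≤ 2 * A * √‖y - x‖ * ‖y - x‖ := by
  have A0 := (norm_nonneg _).trans hA
  have taylor := J.abs_val_sub_quadratic_le (h := ‖y - x‖) (w := A * √‖y - x‖)
    (fun z hz => (h z (hz.trans hr)).trans (by gcongr)) le_rfl
  have hess_le : |J.hess x (y - x) (y - x)| ≤ A * ‖y - x‖ * ‖y - x‖ :=
    (J.hess x).le_of_opNorm₂_le_of_le hA le_rfl le_rfl
  set n := ‖y - x‖
  have n0 : 0 ≤ n := norm_nonneg _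
  have n_le : n ≤ √n := Real.le_sqrt_of_sq_le (by nlinarith)
  have taylor_le : A * √n * n ^ 2 ≤ A * √n * n := by gcongr; nlinarith
  have hess_le_sqrt : A * n * n ≤ A * √n * n := by gcongr
  rw [abs_le] at *
  constructor <;> nlinarith

theorem exists_tendstoAt_of_eventuallyHolderAt [FiniteDimensional ℝ E] (𝒰 : Ultrafilter ι)
    {Js : ι → Jet E} {x : E} (h : EventuallyHolderAt Js 𝒰 x) :
    ∃ c P Q, TendstoAt Js 𝒰 x c P Q := by
  obtain ⟨r, -, A, hA⟩ := h
  obtain ⟨c, hc⟩ := exists_tendsto_of_eventually_norm_le 𝒰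
    (g := fun i => (Js i).val x) (hA.mono fun i hi => hi.1)
  obtain ⟨P, hP⟩ := exists_tendsto_of_eventually_norm_le 𝒰 (hA.mono fun i hi => hi.2.1)
  obtain ⟨Q, hQ⟩ := exists_tendsto_of_eventually_norm_le 𝒰 (hA.mono fun i hi => hi.2.2.1)
  exact ⟨c, P, Q, hc, hP, hQ⟩

theorem continuousAt_of_eventually_tendstoAt {l : Filter ι} [l.NeBot] {Js : ι → Jet E} {x : E}
    (h : EventuallyHolderAt Js l x) {u : E → ℝ} {p : E → E →L[ℝ] ℝ} {q : E → E →L[ℝ] E →L[ℝ] ℝ}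
    (hq : ∀ᶠ y in 𝓝 x, TendstoAt Js l y (u y) (p y) (q y)) : ContinuousAt q x := by
  obtain ⟨r, hr, A, hA⟩ := h
  have modulus_tendsto : Tendsto (fun y => A * √‖y - x‖) (𝓝 x) (𝓝 0) := by
    have : Continuous fun y => A * √‖y - x‖ := by fun_prop
    simpa using this.tendsto x
  refine tendsto_iff_norm_sub_tendsto_zero.2
    (squeeze_zero' (Eventually.of_forall fun _ => norm_nonneg _) ?_ modulus_tendsto)
  filter_upwards [hq, closedBall_mem_nhds x hr] with y hy y_near
  exact le_of_tendsto (hy.hess.sub hq.self_of_nhds.hess).norm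
    (hA.mono fun i hi => hi.2.2.2 y (mem_closedBall_iff_norm.1 y_near))

theorem exists_hasFDerivAt_of_eventuallyHolderAt [FiniteDimensional ℝ E] (𝒰 : Ultrafilter ι)
    {Js : ι → Jet E} {Ω : Set E} (hΩ : IsOpen Ω) (h : ∀ x ∈ Ω, EventuallyHolderAt Js 𝒰 x) :
    ∃ (u : E → ℝ) (p : E → E →L[ℝ] ℝ) (q : E → E →L[ℝ] E →L[ℝ] ℝ), ContinuousOn q Ω ∧ ∀ x ∈ Ω,
      HasFDerivAt u (p x) x ∧ HasFDerivAt p (q x) x ∧ TendstoAt Js 𝒰 x (u x) (p x) (q x) := by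
  choose! u p q tendsto using fun x hx => exists_tendstoAt_of_eventuallyHolderAt 𝒰 (h x hx)
  have near (x : E) (hx : x ∈ Ω) : ∀ᶠ y in 𝓝 x, TendstoAt Js 𝒰 y (u y) (p y) (q y) :=
    (hΩ.eventually_mem hx).mono tendsto
  refine ⟨u, p, q, fun x hx =>
    (continuousAt_of_eventually_tendstoAt (h x hx) (near x hx)).continuousWithinAt, fun x hx => ?_⟩
  obtain ⟨r, hr, A, hA⟩ := h x hx
  refine ⟨hasFDerivAt_of_tendsto_of_norm_sub_le_sqrt (A := 2 * A) (lt_min hr one_pos)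
      ((near x hx).mono fun y hy => hy.val) (tendsto x hx).grad (hA.mono fun i hi y hy => ?_),
    hasFDerivAt_of_tendsto_of_norm_sub_le_sqrt (A := A) hr
      ((near x hx).mono fun y hy => hy.grad) (tendsto x hx).hess (hA.mono fun i hi y hy => ?_),
    tendsto x hx⟩
  · exact (Js i).abs_val_sub_linear_le_sqrt hi.2.2.1 hi.2.2.2 (hy.trans (min_le_left _ _))
      (hy.trans (min_le_right _ _))
  · have A0 := (abs_nonneg _).trans hi.1
    exact (Js i).norm_grad_sub_linear_le (h := ‖y - x‖)
      (fun z hz => (hi.2.2.2 z (hz.trans hy)).trans (by gcongr)) le_rfl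

theorem exists_jet_of_eventuallyHolderAt [FiniteDimensional ℝ E] (𝒰 : Ultrafilter ι)
    {Js : ι → Jet E} (h : ∀ x, EventuallyHolderAt Js 𝒰 x) :
    ∃ J : Jet E, ∀ x, TendstoAt Js 𝒰 x (J.val x) (J.grad x) (J.hess x) := by
  obtain ⟨u, p, q, -, hJ⟩ := exists_hasFDerivAt_of_eventuallyHolderAt 𝒰 isOpen_univ fun x _ => h x
  exact ⟨⟨u, p, q, fun x => (hJ x trivial).1, fun x => (hJ x trivial).2.1⟩,
    fun x => (hJ x trivial).2.2⟩

end Jet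

end Compactness

section Weights

open scoped NNReal

variable {E F : Type*} [NormedAddCommGroup E] [NormedAddCommGroup F]

/-- A weight measuring the distance to the complement of the set where it is positive. The constant
weight `1` gives global estimates, a truncated distance to the boundary interior ones. -/
structure IsWeight (δ : E → ℝ) : Prop where
  lipschitz : LipschitzWith 1 δ
  nonneg : ∀ x, 0 ≤ δ x
  le_one : ∀ x, δ x ≤ 1

/-- The scale-invariant `1/2`-Hölder bound for second derivatives: rescaled by `δ x`, the function
`δ x ^ 2 • f` has `1/2`-Hölder constant `A` at `x`, up to distance `1/2`. -/
def IsHolder (δ : E → ℝ) (A : ℝ) (f : E → F) : Prop :=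
  ∀ ⦃x y : E⦄ ⦃t : ℝ⦄, 0 < δ x → t ≤ 1 / 2 → ‖y - x‖ ≤ t * δ x → δ x ^ 2 * ‖f y - f x‖ ≤ A * √t

variable {δ : E → ℝ} {A : ℝ}

theorem IsWeight.half_le (hδ : IsWeight δ) {x y : E} (h : ‖y - x‖ ≤ δ x / 2) : δ x / 2 ≤ δ y := by
  have := (abs_le.1 (hδ.lipschitz.norm_sub_le y x)).1
  rw [NNReal.coe_one, one_mul] at this
  linarith

theorem IsHolder.mono {f : E → F} (h : IsHolder δ A f) {A' : ℝ} (hA : A ≤ A') :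
    IsHolder δ A' f :=
  fun _ _ _ hx ht hy => (h hx ht hy).trans (by gcongr)

end Weights

section WeightedNorms

open scoped NNReal

variable {E : Type*} [NormedAddCommGroup E] [InnerProductSpace ℝ E]

/-- A field of uniformly elliptic operators with Lipschitz coefficients. -/
structure IsEllipticField (C : ℝ) (K : ℝ≥0) (a : E → (E →L[ℝ] E →L[ℝ] ℝ) →L[ℝ] ℝ) : Prop where
  isElliptic : ∀ x, IsElliptic C (a x)
  lipschitz : LipschitzWith K a

theorem IsEllipticField.abs_apply_sub_le {C : ℝ} {K : ℝ≥0}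
    {a : E → (E →L[ℝ] E →L[ℝ] ℝ) →L[ℝ] ℝ} (ha : IsEllipticField C K a) (x y : E)
    (Q : E →L[ℝ] E →L[ℝ] ℝ) : |a x Q - a y Q| ≤ K * ‖x - y‖ * ‖Q‖ :=
  (a x - a y).le_of_opNorm_le (ha.lipschitz.norm_sub_le x y) Q

/-- The scale-invariant `C²` norm of `J` with weight `δ` is at most `A`. -/
structure Jet.IsBoundedC2 (δ : E → ℝ) (A : ℝ) (J : Jet E) : Prop where
  val : ∀ x, 0 < δ x → |J.val x| ≤ A
  grad : ∀ x, 0 < δ x → δ x * ‖J.grad x‖ ≤ A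
  hess : ∀ x, 0 < δ x → δ x ^ 2 * ‖J.hess x‖ ≤ A

/-- The scale-invariant `C^{2,1/2}` norm of `J` with weight `δ` is at most `A`. -/
structure Jet.IsBoundedC2Holder (δ : E → ℝ) (A : ℝ) (J : Jet E) : Prop
    extends J.IsBoundedC2 δ A where
  holder : IsHolder δ A J.hess

namespace Jet

variable {δ : E → ℝ} {A : ℝ} {J : Jet E}

theorem IsBoundedC2.mono (h : J.IsBoundedC2 δ A) {A' : ℝ} (hA : A ≤ A') : J.IsBoundedC2 δ A' :=
  ⟨fun x hx => (h.val x hx).trans hA, fun x hx => (h.grad x hx).trans hA,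
    fun x hx => (h.hess x hx).trans hA⟩

theorem IsBoundedC2.norm_grad_le_of_norm_sub_le (h : J.IsBoundedC2 δ A) (hδ : IsWeight δ) {x y : E}
    (hx : 0 < δ x) (hyx : ‖y - x‖ ≤ δ x / 2) : ‖J.grad y‖ ≤ 2 * A / δ x := by
  have half_le := hδ.half_le hyx
  have := h.grad y (by linarith)
  rw [le_div_iff₀ hx]
  nlinarith [norm_nonneg (J.grad y)]

theorem IsBoundedC2.norm_hess_le_of_norm_sub_le (h : J.IsBoundedC2 δ A) (hδ : IsWeight δ) {x y : E}
    (hx : 0 < δ x) (hyx : ‖y - x‖ ≤ δ x / 2) : ‖J.hess y‖ ≤ 4 * A / δ x ^ 2 := by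
  have half_le := hδ.half_le hyx
  have := h.hess y (by linarith)
  have : (δ x / 2) ^ 2 ≤ δ y ^ 2 := by gcongr
  rw [le_div_iff₀ (by positivity)]
  nlinarith [norm_nonneg (J.hess y)]

theorem IsBoundedC2.abs_val_sub_le (h : J.IsBoundedC2 δ A) (hδ : IsWeight δ) {x y : E}
    (hx : 0 < δ x) (hyx : ‖y - x‖ ≤ δ x / 2) : |J.val y - J.val x| ≤ 2 * A / δ x * ‖y - x‖ :=
  Convex.norm_image_sub_le_of_norm_hasFDerivWithin_le (𝕜 := ℝ) (s := closedBall x (δ x / 2))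
    (fun z _ => (J.hasFDerivAt_val z).hasFDerivWithinAt)
    (fun _ hz => h.norm_grad_le_of_norm_sub_le hδ hx (mem_closedBall_iff_norm.1 hz))
    (convex_closedBall _ _) (mem_closedBall_self (by positivity)) (mem_closedBall_iff_norm.2 hyx)

theorem IsBoundedC2.norm_grad_sub_le (h : J.IsBoundedC2 δ A) (hδ : IsWeight δ) {x y : E}
    (hx : 0 < δ x) (hyx : ‖y - x‖ ≤ δ x / 2) :
    ‖J.grad y - J.grad x‖ ≤ 4 * A / δ x ^ 2 * ‖y - x‖ :=
  Convex.norm_image_sub_le_of_norm_hasFDerivWithin_le (𝕜 := ℝ) (s := closedBall x (δ x / 2))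
    (fun z _ => (J.hasFDerivAt_grad z).hasFDerivWithinAt)
    (fun _ hz => h.norm_hess_le_of_norm_sub_le hδ hx (mem_closedBall_iff_norm.1 hz))
    (convex_closedBall _ _) (mem_closedBall_self (by positivity)) (mem_closedBall_iff_norm.2 hyx)

theorem IsBoundedC2Holder.mono (h : J.IsBoundedC2Holder δ A) {A' : ℝ} (hA : A ≤ A') :
    J.IsBoundedC2Holder δ A' :=
  ⟨h.toIsBoundedC2.mono hA, h.holder.mono hA⟩

theorem IsBoundedC2Holder.of_forall_pos_add
    (h : ∀ ε > 0, J.IsBoundedC2Holder δ (A + ε)) : J.IsBoundedC2Holder δ A where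
  val x hx := le_of_forall_pos_le_add fun ε hε => (h ε hε).val x hx
  grad x hx := le_of_forall_pos_le_add fun ε hε => (h ε hε).grad x hx
  hess x hx := le_of_forall_pos_le_add fun ε hε => (h ε hε).hess x hx
  holder x y t hx ht hy := by
    have limit : Tendsto (fun ε : ℝ => (A + ε) * √t) (𝓝[>] 0) (𝓝 ((A + 0) * √t)) :=
      (Continuous.tendsto (by fun_prop) _).mono_left nhdsWithin_le_nhds
    rw [add_zero] at limit
    exact ge_of_tendsto limit (eventually_mem_nhdsWithin.mono fun ε hε =>
      (h ε hε).holder hx ht hy)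

theorem isBoundedC2_of_isHolder (hδ : IsWeight δ) (hA : 0 ≤ A) (hJ : IsHolder δ A J.hess) {U τ : ℝ}
    (hU : ∀ x, 0 < δ x → |J.val x| ≤ U) (hU0 : 0 ≤ U) (hτ : 0 < τ) (hτ' : τ ≤ 1 / 2) :
    J.IsBoundedC2 δ (4 * U / τ ^ 2 + 2 * A * √τ) := by
  have val_le {x : E} (hx : 0 < δ x) (y : E) (hy : ‖y - x‖ ≤ τ * δ x) : |J.val y| ≤ U :=
    hU y ((half_pos hx).trans_le (hδ.half_le (hy.trans (by nlinarith))))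
  have hess_sub_le {x : E} (hx : 0 < δ x) (y : E) (hy : ‖y - x‖ ≤ τ * δ x) :
      ‖J.hess y - J.hess x‖ ≤ A * √τ / δ x ^ 2 := by
    rw [le_div_iff₀' (by positivity)]
    exact hJ hx hτ' hy
  refine ⟨fun x hx => (hU x hx).trans ?_, fun x hx => ?_, fun x hx => ?_⟩
  · have : U ≤ 4 * U / τ ^ 2 := by
      rw [le_div_iff₀ (by positivity), mul_comm 4]
      gcongr
      nlinarith
    have : 0 ≤ 2 * A * √τ := by positivity
    linarith
  · calc δ x * ‖J.grad x‖
        ≤ δ x * (U / (τ * δ x) + A * √τ / δ x ^ 2 * (τ * δ x)) := by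
          gcongr; exact J.norm_grad_le (by positivity) (val_le hx) (hess_sub_le hx)
      _ = U * τ / τ ^ 2 + A * √τ * τ := by field_simp
      _ ≤ U * 4 / τ ^ 2 + A * √τ * 2 := by gcongr <;> linarith
      _ = _ := by ring
  · calc δ x ^ 2 * ‖J.hess x‖
        ≤ δ x ^ 2 * (4 * U / (τ * δ x) ^ 2 + 2 * (A * √τ / δ x ^ 2)) := by
          gcongr; exact J.norm_hess_le (by positivity) (val_le hx) (hess_sub_le hx)
      _ = _ := by field_simp

end Jet

end WeightedNorms

section BlowUp

open scoped NNReal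

variable {E : Type*} [NormedAddCommGroup E] [InnerProductSpace ℝ E]

/-- The normalized blow-up of `J` at `x` with amplitude `s` and scale `ρ`: the second-order Taylor
polynomial is subtracted, so that value, gradient and Hessian vanish at the origin. -/
noncomputable def Jet.blowUp (J : Jet E) (s ρ : ℝ) (x : E) : Jet E :=
  J.rescale s ρ x - .quadratic 0 (s * J.val x) ((s * ρ) • J.grad x) ((s * ρ ^ 2) • J.hess x)
    fun v w => by simp [J.hess_symm x v w]

theorem Jet.blowUp_val_zero (J : Jet E) (s ρ : ℝ) (x : E) : (J.blowUp s ρ x).val 0 = 0 := by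
  simp [blowUp]

theorem Jet.blowUp_grad_zero (J : Jet E) (s ρ : ℝ) (x : E) : (J.blowUp s ρ x).grad 0 = 0 := by
  simp [blowUp]

theorem Jet.blowUp_hess (J : Jet E) (s ρ : ℝ) (x z : E) :
    (J.blowUp s ρ x).hess z = (s * ρ ^ 2) • (J.hess (x + ρ • z) - J.hess x) := by
  simp [blowUp, smul_sub]

/-- The outcome of blowing up a jet at a place where the Hölder bound of its Hessian is nearly
attained: `m` is the blow-up scale, `L` the frozen operator, and the direction `ζ` witnesses that
the Hessian of the blow-up `v` does not become trivial. As `m` and `η` tend to zero, `v` becomes an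
entire solution of `L (D²v) = 0`. -/
structure IsBlowUp (K η m : ℝ) (L : (E →L[ℝ] E →L[ℝ] ℝ) →L[ℝ] ℝ) (v : Jet E) (ζ : E) : Prop where
  pos : 0 < m
  val_zero : v.val 0 = 0
  grad_zero : v.grad 0 = 0
  hess_zero : v.hess 0 = 0
  holder : ∀ ⦃z z'⦄, m * ‖z‖ ≤ 1 / 4 → m * ‖z' - z‖ ≤ 1 / 4 →
    ‖v.hess z' - v.hess z‖ ≤ 8 * √‖z' - z‖
  abs_apply_le : ∀ ⦃z⦄, m * ‖z‖ ≤ 1 / 4 → |L (v.hess z)| ≤ η * √‖z‖ + 4 * K * ‖z‖ * √m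
  norm_le : ‖ζ‖ ≤ 1
  half_le : 1 / 2 ≤ ‖v.hess ζ‖

variable {C : ℝ} {K : ℝ≥0} {a : E → (E →L[ℝ] E →L[ℝ] ℝ) →L[ℝ] ℝ} {δ : E → ℝ} {J : Jet E}
  {A η m : ℝ} {x y : E}

theorem IsWeight.half_le_add_smul (hδ : IsWeight δ) (hm : 0 ≤ m) {z : E} (hz : m * ‖z‖ ≤ 1 / 4) :
    δ x / 2 ≤ δ (x + (m * δ x) • z) := by
  refine hδ.half_le ?_
  rw [add_sub_cancel_left, norm_smul, Real.norm_of_nonneg (mul_nonneg hm (hδ.nonneg x))]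
  nlinarith [hδ.nonneg x]

theorem IsHolder.rescaled (hδ : IsWeight δ) (hA : 0 < A) (hJ : IsHolder δ A J.hess) (hx : 0 < δ x)
    (hm : 0 < m) {z z' : E} (hz : m * ‖z‖ ≤ 1 / 4) (hz' : m * ‖z' - z‖ ≤ 1 / 4) :
    δ x ^ 2 / (A * √m) * ‖J.hess (x + (m * δ x) • z') - J.hess (x + (m * δ x) • z)‖
      ≤ 8 * √‖z' - z‖ := by
  have half_le := hδ.half_le_add_smul (x := x) hm.le hz
  have dist_le : ‖x + (m * δ x) • z' - (x + (m * δ x) • z)‖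
      ≤ 2 * (m * ‖z' - z‖) * δ (x + (m * δ x) • z) := by
    rw [add_sub_add_left_eq_sub, ← smul_sub, norm_smul, Real.norm_of_nonneg (by positivity)]
    nlinarith [mul_nonneg hm.le (norm_nonneg (z' - z))]
  have holder := hJ (by linarith) (by linarith) dist_le
  have sqrt_le : √(2 * (m * ‖z' - z‖)) ≤ 2 * (√m * √‖z' - z‖) := by
    rw [← Real.sqrt_mul hm.le, Real.sqrt_mul two_pos.le]
    gcongr
    exact Real.sqrt_le_iff.2 (by norm_num)
  rw [div_mul_eq_mul_div, div_le_iff₀ (by positivity)]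
  set w := x + (m * δ x) • z
  set D := ‖J.hess (x + (m * δ x) • z') - J.hess w‖
  calc δ x ^ 2 * D ≤ (2 * δ w) ^ 2 * D := by gcongr; linarith
    _ = 4 * (δ w ^ 2 * D) := by ring
    _ ≤ 4 * (A * (2 * (√m * √‖z' - z‖))) := by linarith [mul_le_mul_of_nonneg_left sqrt_le hA.le]
    _ = 8 * √‖z' - z‖ * (A * √m) := by ring

theorem IsEllipticField.rescaled_apply_le (ha : IsEllipticField C K a) (hδ : IsWeight δ)
    (hA : 0 < A) (hJ : J.IsBoundedC2 δ A) (hg : IsHolder δ (η * A) fun x => a x (J.hess x))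
    (hx : 0 < δ x) (hm : 0 < m) {z : E} (hz : m * ‖z‖ ≤ 1 / 4) :
    δ x ^ 2 / (A * √m) * |a x (J.hess (x + (m * δ x) • z)) - a x (J.hess x)|
      ≤ η * √‖z‖ + 4 * K * ‖z‖ * √m := by
  have half_le := hδ.half_le_add_smul (x := x) hm.le hz
  set x' := x + (m * δ x) • z
  have dist_eq : ‖x' - x‖ = m * ‖z‖ * δ x := by
    rw [add_sub_cancel_left, norm_smul, Real.norm_of_nonneg (by positivity)]
    ring
  have coefficient := ha.abs_apply_sub_le x x' (J.hess x')
  rw [norm_sub_rev, dist_eq] at coefficient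
  have holder := hg hx (by linarith) dist_eq.le
  rw [Real.norm_eq_abs, Real.sqrt_mul hm.le] at holder
  have hess_le : δ x ^ 2 * ‖J.hess x'‖ ≤ 4 * A :=
    calc δ x ^ 2 * ‖J.hess x'‖ ≤ (2 * δ x') ^ 2 * ‖J.hess x'‖ := by gcongr; linarith
      _ = 4 * (δ x' ^ 2 * ‖J.hess x'‖) := by ring
      _ ≤ 4 * A := by linarith [hJ.hess x' (by linarith)]
  have sqrt_sq := Real.mul_self_sqrt hm.le
  rw [div_mul_eq_mul_div, div_le_iff₀ (by positivity)]
  calc δ x ^ 2 * |a x (J.hess x') - a x (J.hess x)|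
      ≤ δ x ^ 2 * (K * (m * ‖z‖ * δ x) * ‖J.hess x'‖ + |a x' (J.hess x') - a x (J.hess x)|) := by
        gcongr; exact (abs_sub_le _ _ _).trans (by gcongr)
    _ = K * (m * ‖z‖) * δ x * (δ x ^ 2 * ‖J.hess x'‖)
        + δ x ^ 2 * |a x' (J.hess x') - a x (J.hess x)| := by ring
    _ ≤ K * (m * ‖z‖) * 1 * (4 * A) + η * A * (√m * √‖z‖) := by
        gcongr; exact hδ.le_one x
    _ = (η * √‖z‖ + 4 * K * ‖z‖ * √m) * (A * √m) := by
        linear_combination (4 * K * ‖z‖ * A) * -sqrt_sq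

theorem exists_isBlowUp (ha : IsEllipticField C K a) (hδ : IsWeight δ) (hA : 0 < A)
    (hJ : J.IsBoundedC2Holder δ A) (hg : IsHolder δ (η * A) fun x => a x (J.hess x))
    (hx : 0 < δ x) (hxy : ‖y - x‖ ≤ m * δ x)
    (hbad : A / 2 * √m < δ x ^ 2 * ‖J.hess y - J.hess x‖) :
    ∃ v ζ, IsBlowUp K η m (a x) v ζ := by
  have hm : 0 < m := by
    by_contra! hm
    obtain rfl : y = x := sub_eq_zero.1 <| norm_le_zero_iff.1 <|
      hxy.trans (mul_nonpos_of_nonpos_of_nonneg hm hx.le)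
    simp [Real.sqrt_eq_zero_of_nonpos hm] at hbad
  have : 0 < √m := Real.sqrt_pos.2 hm
  let v := J.blowUp ((A * √m * m ^ 2)⁻¹) (m * δ x) x
  have v_hess (z : E) :
      v.hess z = (δ x ^ 2 / (A * √m)) • (J.hess (x + (m * δ x) • z) - J.hess x) := by
    rw [Jet.blowUp_hess]
    congr 1
    field_simp
  have N0 : 0 ≤ δ x ^ 2 / (A * √m) := by positivity
  refine ⟨v, (m * δ x)⁻¹ • (y - x), hm, J.blowUp_val_zero _ _ _, J.blowUp_grad_zero _ _ _,
    by simp [v_hess], fun z z' hz hz' => ?_, fun z hz => ?_, ?_, ?_⟩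
  · rw [v_hess, v_hess, ← smul_sub, sub_sub_sub_cancel_right, norm_smul, Real.norm_of_nonneg N0]
    exact hJ.holder.rescaled hδ hA hx hm hz hz'
  · rw [v_hess, map_smul, map_sub, smul_eq_mul, abs_mul, abs_of_nonneg N0]
    exact ha.rescaled_apply_le hδ hA hJ.toIsBoundedC2 hg hx hm hz
  · rw [norm_smul, norm_inv, Real.norm_of_nonneg (by positivity), inv_mul_le_one₀ (by positivity)]
    exact hxy
  · rw [v_hess, smul_inv_smul₀ (by positivity), add_sub_cancel, norm_smul, Real.norm_of_nonneg N0,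
      div_mul_eq_mul_div, le_div_iff₀ (by positivity)]
    linarith

/-- By interpolation, a jet that is small compared with its `C^{2,1/2}` norm can violate the Hölder
bound only at small distances. -/
theorem scale_le_of_isBoundedC2Holder (hδ : IsWeight δ) (hA : 0 < A)
    (hJ : J.IsBoundedC2Holder δ A) (hη : 0 ≤ η) (hU : ∀ x, 0 < δ x → |J.val x| ≤ η * A)
    (hx : 0 < δ x) (hm : m ≤ 1 / 2) (hxy : ‖y - x‖ ≤ m * δ x)
    (hbad : A / 2 * √m < δ x ^ 2 * ‖J.hess y - J.hess x‖) {τ : ℝ} (hτ : 0 < τ) (hτ' : τ ≤ 1 / 2)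
    (hητ : 4 * η / τ ^ 2 ≤ √τ) : m ≤ 900 * τ := by
  have interpolation : J.IsBoundedC2 δ (3 * √τ * A) :=
    (Jet.isBoundedC2_of_isHolder hδ hA.le hJ.holder hU (by positivity) hτ hτ').mono <| by
      calc _ = 4 * η / τ ^ 2 * A + 2 * A * √τ := by ring
        _ ≤ √τ * A + 2 * A * √τ := by gcongr
        _ = _ := by ring
  have half_le := hδ.half_le (hxy.trans (by nlinarith))
  have hess_y : δ x ^ 2 * ‖J.hess y‖ ≤ 12 * √τ * A :=
    calc δ x ^ 2 * ‖J.hess y‖ ≤ (2 * δ y) ^ 2 * ‖J.hess y‖ := by gcongr; linarith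
      _ = 4 * (δ y ^ 2 * ‖J.hess y‖) := by ring
      _ ≤ 12 * √τ * A := by linarith [interpolation.hess y (by linarith)]
  have sqrt_le : √m ≤ 30 * √τ := by
    have difference : δ x ^ 2 * ‖J.hess y - J.hess x‖ ≤ δ x ^ 2 * (‖J.hess y‖ + ‖J.hess x‖) := by
      gcongr; exact norm_sub_le _ _
    refine le_of_mul_le_mul_left ?_ hA
    linarith [interpolation.hess x hx]
  calc m ≤ (30 * √τ) ^ 2 := (Real.sqrt_le_left (by positivity)).1 sqrt_le
    _ = 900 * τ := by rw [mul_pow, Real.sq_sqrt hτ.le]; norm_num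

end BlowUp

section Schauder

open scoped NNReal

variable {E : Type*} [NormedAddCommGroup E] [InnerProductSpace ℝ E] {ι : Type*} {C : ℝ} {K : ℝ≥0}

theorem IsElliptic.of_tendsto {l : Filter ι} [l.NeBot] {Ls : ι → (E →L[ℝ] E →L[ℝ] ℝ) →L[ℝ] ℝ}
    (h : ∀ i, IsElliptic C (Ls i)) {L : (E →L[ℝ] E →L[ℝ] ℝ) →L[ℝ] ℝ} (hL : Tendsto Ls l (𝓝 L)) :
    IsElliptic C L := by
  have apply_tendsto (Q : E →L[ℝ] E →L[ℝ] ℝ) : Tendsto (fun i => Ls i Q) l (𝓝 (L Q)) :=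
    ((ContinuousLinearMap.apply ℝ ℝ Q).continuous.tendsto L).comp hL
  exact
    { one_le := (h (nonempty_of_neBot l).some).one_le
      norm_le := le_of_tendsto' hL.norm fun i => (h i).norm_le
      apply_nonpos := fun Q hQ => le_of_tendsto' (apply_tendsto Q) fun i => (h i).apply_nonpos Q hQ
      le_apply_smulRight := fun P =>
        ge_of_tendsto' (apply_tendsto _) fun i => (h i).le_apply_smulRight P }

variable {η m : ι → ℝ} {Ls : ι → (E →L[ℝ] E →L[ℝ] ℝ) →L[ℝ] ℝ} {vs : ι → Jet E} {ζ : ι → E}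

theorem eventuallyHolderAt_of_isBlowUp {l : Filter ι}
    (h : ∀ i, IsBlowUp K (η i) (m i) (Ls i) (vs i) (ζ i))
    (hm : Tendsto m l (𝓝 0)) (z : E) : Jet.EventuallyHolderAt vs l z := by
  have scale_small (t : ℝ) : ∀ᶠ i in l, m i * t ≤ 1 / 4 :=
    (hm.mul_const t).eventually_le_const (by norm_num)
  refine ⟨1, one_pos, 8 + 8 * √‖z‖ * (1 + ‖z‖ + ‖z‖ ^ 2), ?_⟩
  filter_upwards [scale_small ‖z‖, scale_small 1] with i hz h1
  obtain ⟨m0, v_val, v_grad, v_hess, holder, -, -, -⟩ := h i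
  have hess_le (w : E) (hw : ‖w - 0‖ ≤ ‖z‖) : ‖(vs i).hess w - (vs i).hess 0‖ ≤ 8 * √‖z‖ := by
    refine (holder (by simp) (le_trans (by gcongr) hz)).trans ?_
    gcongr
  have hess_z := hess_le z (by simp)
  have grad_z := (vs i).norm_grad_sub_linear_le hess_le (y := z) (by simp)
  have val_z := (vs i).abs_val_sub_quadratic_le hess_le (y := z) (by simp)
  rw [v_hess, v_grad] at val_z grad_z
  rw [v_hess] at hess_z
  simp only [v_val, sub_zero, zero_apply, mul_zero] at hess_z grad_z val_z
  have : 0 ≤ 8 * √‖z‖ := by positivity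
  have : 0 ≤ 8 * √‖z‖ * ‖z‖ := by positivity
  have : 0 ≤ 8 * √‖z‖ * ‖z‖ ^ 2 := by positivity
  refine ⟨by linarith, by linarith, by linarith, fun w hw => ?_⟩
  refine (holder hz (le_trans (by gcongr) h1)).trans ?_
  gcongr
  linarith

theorem not_forall_isBlowUp [FiniteDimensional ℝ E] {𝒰 : Ultrafilter ι}
    (hL : ∀ i, IsElliptic C (Ls i)) (hm : Tendsto m 𝒰 (𝓝 0)) (hη : Tendsto η 𝒰 (𝓝 0)) :
    ¬ ∀ i, IsBlowUp K (η i) (m i) (Ls i) (vs i) (ζ i) := by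
  intro h
  have scale_small (t : ℝ) : ∀ᶠ i in (𝒰 : Filter ι), m i * t ≤ 1 / 4 :=
    (hm.mul_const t).eventually_le_const (by norm_num)
  obtain ⟨V, hV⟩ :=
    Jet.exists_jet_of_eventuallyHolderAt 𝒰 (eventuallyHolderAt_of_isBlowUp h hm)
  obtain ⟨ζ₀, hζ₀⟩ := exists_tendsto_of_eventually_norm_le 𝒰 (.of_forall fun i => (h i).norm_le)
  obtain ⟨L, tendsto_L⟩ :=
    exists_tendsto_of_eventually_norm_le 𝒰 (.of_forall fun i => (hL i).norm_le)
  have equation (z : E) : L (V.hess z) = 0 := by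
    have bound : Tendsto (fun i => η i * √‖z‖ + 4 * K * ‖z‖ * √(m i)) 𝒰 (𝓝 0) := by
      simpa using (hη.mul_const √‖z‖).add (hm.sqrt.const_mul (4 * K * ‖z‖))
    exact tendsto_nhds_unique (isBoundedBilinearMap_apply.continuous.tendsto (L, V.hess z) |>.comp
      (tendsto_L.prodMk_nhds (hV z).hess)) <| squeeze_zero_norm'
      ((scale_small ‖z‖).mono fun i hi => (h i).abs_apply_le hi) bound
  have holder (z z' : E) : ‖V.hess z - V.hess z'‖ ≤ 8 * √‖z - z'‖ := by
    refine le_of_tendsto ((hV z).hess.sub (hV z').hess).norm ?_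
    filter_upwards [scale_small ‖z'‖, scale_small ‖z - z'‖] with i hz' hz using
      (h i).holder hz' hz
  have hess_zero : V.hess ζ₀ = 0 :=
    (hess_eq_of_apply_hess_eq_zero (.of_tendsto hL tendsto_L) equation holder ζ₀).trans <|
      tendsto_nhds_unique (hV 0).hess (by simp [(h _).hess_zero])
  have limit : Tendsto (fun i => ‖(vs i).hess ζ₀‖ + 8 * √‖ζ i - ζ₀‖) 𝒰 (𝓝 0) := by
    simpa [hess_zero] using (hV ζ₀).hess.norm.add ((hζ₀.sub_const ζ₀).norm.sqrt.const_mul 8)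
  have norm_ζ₀ : ‖ζ₀‖ ≤ 1 := le_of_tendsto' hζ₀.norm fun i => (h i).norm_le
  have lower : ∀ᶠ i in (𝒰 : Filter ι), 1 / 2 ≤ ‖(vs i).hess ζ₀‖ + 8 * √‖ζ i - ζ₀‖ := by
    filter_upwards [scale_small 2] with i hi
    have m0 := (h i).pos
    have dist_le : ‖ζ i - ζ₀‖ ≤ 2 := (norm_sub_le _ _).trans (by linarith [(h i).norm_le])
    have near := (h i).holder (z := ζ₀) (z' := ζ i) (by nlinarith) (by nlinarith)
    linarith [norm_sub_norm_le ((vs i).hess (ζ i)) ((vs i).hess ζ₀), (h i).half_le]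
  linarith [ge_of_tendsto limit lower]

variable {a : E → (E →L[ℝ] E →L[ℝ] ℝ) →L[ℝ] ℝ} {δ : E → ℝ} {J : Jet E} {A : ℝ}

theorem tendsto_zero_of_forall_le_mul {l : Filter ι} (hη : Tendsto η l (𝓝 0)) (hm : ∀ i, 0 ≤ m i)
    (h : ∀ i τ, 0 < τ → τ ≤ 1 / 2 → 4 * η i / τ ^ 2 ≤ √τ → m i ≤ 900 * τ) :
    Tendsto m l (𝓝 0) := by
  rw [Metric.tendsto_nhds]
  intro ε hε
  let τ := min (1 / 2) (ε / 1800)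
  have hτ : 0 < τ := by positivity
  have limit : Tendsto (fun i => 4 * η i / τ ^ 2) l (𝓝 0) := by
    simpa using (hη.const_mul 4).div_const (τ ^ 2)
  filter_upwards [limit.eventually_le_const (Real.sqrt_pos.2 hτ)] with i hi
  rw [Real.dist_0_eq_abs, abs_of_nonneg (hm i)]
  linarith [h i τ hτ (min_le_left _ _) hi, min_le_right (1 / 2) (ε / 1800)]

variable (E) in
/-- If the improvement failed for every `η`, the blow-ups at the offending points would contradict
the Liouville theorem in the limit `η → 0`. -/
theorem exists_isHolder_half [FiniteDimensional ℝ E] (C : ℝ) (K : ℝ≥0) :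
    ∃ η > 0, ∀ ⦃a : E → (E →L[ℝ] E →L[ℝ] ℝ) →L[ℝ] ℝ⦄, IsEllipticField C K a →
      ∀ ⦃δ : E → ℝ⦄, IsWeight δ → ∀ ⦃J : Jet E⦄ ⦃A : ℝ⦄, 0 < A → J.IsBoundedC2Holder δ A →
      (∀ x, 0 < δ x → |J.val x| ≤ η * A) → IsHolder δ (η * A) (fun x => a x (J.hess x)) →
      IsHolder δ (A / 2) J.hess := by
  by_contra! counterexample
  choose a ha δ hδ J A A0 hJ hU hg hbad using
    fun k : ℕ => counterexample (1 / ((k : ℝ) + 1)) (by positivity)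
  simp only [IsHolder, not_forall, not_le] at hbad
  choose x y m hx hm hxy hbad using hbad
  choose v ζ h_blowUp using fun k =>
    exists_isBlowUp (ha k) (hδ k) (A0 k) (hJ k) (hg k) (hx k) (hxy k) (hbad k)
  have tendsto_η : Tendsto (fun k : ℕ => 1 / ((k : ℝ) + 1)) (hyperfilter ℕ) (𝓝 0) :=
    tendsto_one_div_add_atTop_nhds_zero_nat.mono_left Nat.hyperfilter_le_atTop
  have tendsto_m : Tendsto m (hyperfilter ℕ) (𝓝 0) :=
    tendsto_zero_of_forall_le_mul tendsto_η (fun k => (h_blowUp k).pos.le) fun k τ =>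
      scale_le_of_isBoundedC2Holder (hδ k) (A0 k) (hJ k) (by positivity) (hU k) (hx k) (hm k)
        (hxy k) (hbad k)
  exact not_forall_isBlowUp (fun k => (ha k).isElliptic (x k)) tendsto_m tendsto_η h_blowUp

variable (E) in
theorem exists_isBoundedC2Holder_half [FiniteDimensional ℝ E] (C : ℝ) (K : ℝ≥0) :
    ∃ η > 0, ∀ ⦃a : E → (E →L[ℝ] E →L[ℝ] ℝ) →L[ℝ] ℝ⦄, IsEllipticField C K a →
      ∀ ⦃δ : E → ℝ⦄, IsWeight δ → ∀ ⦃J : Jet E⦄ ⦃A : ℝ⦄, 0 < A → J.IsBoundedC2Holder δ A →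
      (∀ x, 0 < δ x → |J.val x| ≤ η * A) → IsHolder δ (η * A) (fun x => a x (J.hess x)) →
      J.IsBoundedC2Holder δ (A / 2) := by
  obtain ⟨η, η0, h⟩ := exists_isHolder_half E C K
  refine ⟨min η (1 / 16 ^ 5), by positivity, fun a ha δ hδ J A A0 hJ hU hg => ?_⟩
  have η_le : min η (1 / 16 ^ 5) * A ≤ η * A := by gcongr; exact min_le_left _ _
  have le : min η (1 / 16 ^ 5) * A ≤ 1 / 16 ^ 5 * A := by gcongr; exact min_le_right _ _
  have sqrt_eq : √(1 / 16 ^ 2 : ℝ) = 1 / 16 := by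
    rw [Real.sqrt_eq_iff_mul_self_eq_of_pos] <;> norm_num
  refine ⟨(Jet.isBoundedC2_of_isHolder hδ A0.le hJ.holder (τ := 1 / 16 ^ 2)
    (fun x hx => (hU x hx).trans le) (by positivity) (by positivity) (by norm_num)).mono ?_,
    h ha hδ A0 hJ (fun x hx => (hU x hx).trans η_le) (hg.mono η_le)⟩
  calc 4 * (1 / 16 ^ 5 * A) / (1 / 16 ^ 2) ^ 2 + 2 * A * √(1 / 16 ^ 2) = 3 / 8 * A := by
        rw [sqrt_eq]; ring
    _ ≤ A / 2 := by linarith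

variable (E) in
/-- The constants balance the interpolation inequality at scale `τ` against the improvement `η`. -/
theorem exists_schauder_constants [FiniteDimensional ℝ E] (C : ℝ) (K : ℝ≥0) {B : ℝ} (hB : 0 ≤ B) :
    ∃ C₀ > 0, ∀ ⦃a : E → (E →L[ℝ] E →L[ℝ] ℝ) →L[ℝ] ℝ⦄, IsEllipticField C K a →
      ∀ ⦃δ : E → ℝ⦄, IsWeight δ → ∀ ⦃J : Jet E⦄ ⦃A U F : ℝ⦄, 0 < A → 0 ≤ U → 0 ≤ F →
      C₀ * (U + F) ≤ A → J.IsBoundedC2Holder δ A → (∀ x, 0 < δ x → |J.val x| ≤ U) →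
      (∀ M, J.IsBoundedC2 δ M → IsHolder δ (B * (M + F)) fun x => a x (J.hess x)) →
      J.IsBoundedC2Holder δ (A / 2) := by
  obtain ⟨η, η0, improve⟩ := exists_isBoundedC2Holder_half E C K
  let σ := min (1 / 2) (η / (4 * (B + 1)))
  have σ0 : 0 < σ := by positivity
  have σ_le : σ ≤ 1 / 2 := min_le_left _ _
  have small : B * (2 * σ) ≤ η / 2 := by
    have : σ ≤ η / (4 * (B + 1)) := min_le_right _ _
    rw [le_div_iff₀ (by positivity)] at this
    linarith
  let D := 1 + 2 * B * (4 / (σ ^ 2) ^ 2 + 1)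
  refine ⟨D / η, by positivity, fun a ha δ hδ J A U F A0 U0 F0 hA hJ hU hg => ?_⟩
  have le_A : D * (U + F) ≤ η * A := by
    rw [div_mul_eq_mul_div, div_le_iff₀ η0] at hA
    linarith
  have : 0 ≤ B * (4 / (σ ^ 2) ^ 2) * F := by positivity
  have : 0 ≤ B * (4 / (σ ^ 2) ^ 2) * U := by positivity
  have : 0 ≤ B * U := by positivity
  have : 0 ≤ B * F := by positivity
  have interpolation := Jet.isBoundedC2_of_isHolder hδ A0.le hJ.holder hU U0 (τ := σ ^ 2)
    (by positivity) (by nlinarith)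
  refine improve ha hδ A0 hJ (fun x hx => (hU x hx).trans ?_) ((hg _ interpolation).mono ?_)
  · linarith
  · rw [Real.sqrt_sq σ0.le]
    calc B * (4 * U / (σ ^ 2) ^ 2 + 2 * A * σ + F)
        = B * (4 / (σ ^ 2) ^ 2) * U + B * F + B * (2 * σ) * A := by ring
      _ ≤ D * (U + F) / 2 + η / 2 * A := by
        gcongr
        linarith
      _ ≤ η * A := by linarith

variable (E) in
/-- Schauder's estimate: iterate the improvement until the threshold `C₀ * (U + F)` is reached. -/
theorem exists_schauder_estimate [FiniteDimensional ℝ E] (C : ℝ) (K : ℝ≥0) {B : ℝ} (hB : 0 ≤ B) :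
    ∃ C₀ > 0, ∀ ⦃a : E → (E →L[ℝ] E →L[ℝ] ℝ) →L[ℝ] ℝ⦄, IsEllipticField C K a →
      ∀ ⦃δ : E → ℝ⦄, IsWeight δ → ∀ ⦃J : Jet E⦄ ⦃A U F : ℝ⦄, 0 ≤ U → 0 ≤ F →
      J.IsBoundedC2Holder δ A → (∀ x, 0 < δ x → |J.val x| ≤ U) →
      (∀ M, J.IsBoundedC2 δ M → IsHolder δ (B * (M + F)) fun x => a x (J.hess x)) →
      J.IsBoundedC2Holder δ (C₀ * (U + F)) := by
  obtain ⟨C₀, C₀_pos, improve⟩ := exists_schauder_constants E C K hB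
  refine ⟨C₀, C₀_pos, fun a ha δ hδ J A U F U0 F0 hJ hU hg => .of_forall_pos_add fun ε hε => ?_⟩
  set T := C₀ * (U + F)
  have : 0 ≤ T := by positivity
  have iterate (n : ℕ) : J.IsBoundedC2Holder δ (max (T + ε) (max A 1 * (1 / 2) ^ n)) := by
    induction n with
    | zero => exact hJ.mono (by simp)
    | succ n ih =>
      rcases le_total (max A 1 * (1 / 2) ^ n) (T + ε) with h | h
      · rw [max_eq_left h] at ih
        exact ih.mono (le_max_left _ _)
      · rw [max_eq_right h] at ih
        refine (improve ha hδ (by positivity) U0 F0 (by linarith) ih hU hg).mono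
          (le_max_of_le_right ?_)
        rw [pow_succ]
        linarith
  have limit : Tendsto (fun n : ℕ => max A 1 * (1 / 2) ^ n) atTop (𝓝 0) := by
    simpa using (tendsto_pow_atTop_nhds_zero_of_lt_one (by norm_num : (0 : ℝ) ≤ 1 / 2)
      (by norm_num)).const_mul (max A 1)
  obtain ⟨n, hn⟩ := (limit.eventually_le_const (show 0 < T + ε by positivity)).exists
  exact (iterate n).mono (max_le le_rfl hn)

end Schauder

section GlobalMaximumPrinciple

variable {E : Type*} [NormedAddCommGroup E] [InnerProductSpace ℝ E] [ProperSpace E]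
  {a : E → (E →L[ℝ] E →L[ℝ] ℝ) →L[ℝ] ℝ} {J : Jet E} {C Λ A F : ℝ}

/-- A bounded function need not attain its maximum, but it does so nearby after subtracting a
small multiple of the squared distance to a near-maximizer. -/
theorem mul_val_le_of_le_apply_hess (ha : ∀ x, IsElliptic C (a x)) (hΛ : 0 < Λ)
    (hA : ∀ x, J.val x ≤ A) (h : ∀ x, Λ * J.val x ≤ a x (J.hess x) + F) (x : E) :
    Λ * J.val x ≤ F := by
  set M := ⨆ x, J.val x
  have val_le (x : E) : J.val x ≤ M := le_ciSup ⟨A, forall_mem_range.2 hA⟩ x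
  have mul_sup_le (η : ℝ) (hη : 0 < η) : Λ * M ≤ F + (2 * C + Λ) * η := by
    obtain ⟨x₁, hx₁⟩ := exists_lt_of_lt_ciSup (show M - η < ⨆ x, J.val x by linarith)
    obtain ⟨y, -, hy, -, hess_nonpos⟩ :=
      (J - η • Jet.normSqSub x₁).exists_critical_point_of_lt_on_sphere (c := x₁) (x₀ := x₁)
        (mem_ball_self one_pos) fun x hx => by
          rw [mem_sphere_iff_norm] at hx
          simp only [Jet.val_sub, Jet.val_smul, Jet.normSqSub_val, hx, sub_self, norm_zero]
          linarith [val_le x]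
    have apply_nonpos := (ha y).apply_nonpos _ hess_nonpos
    simp only [Jet.hess_sub, Jet.hess_smul, Jet.normSqSub_hess, map_sub, map_smul, smul_eq_mul]
      at apply_nonpos
    simp only [Jet.val_sub, Jet.val_smul, Jet.normSqSub_val, sub_self, norm_zero] at hy
    have : M - η ≤ J.val y := by nlinarith [mul_nonneg hη.le (sq_nonneg ‖y - x₁‖)]
    nlinarith [(ha y).apply_innerForm_le, h y]
  have limit : Tendsto (fun η : ℝ => F + (2 * C + Λ) * η) (𝓝[>] 0) (𝓝 (F + (2 * C + Λ) * 0)) :=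
    (Continuous.tendsto (by fun_prop) _).mono_left nhdsWithin_le_nhds
  calc Λ * J.val x ≤ Λ * M := by gcongr; exact val_le x
    _ ≤ F + (2 * C + Λ) * 0 := ge_of_tendsto limit (eventually_mem_nhdsWithin.mono mul_sup_le)
    _ = F := by ring

theorem abs_val_le_div_of_apply_hess_sub_eq (ha : ∀ x, IsElliptic C (a x)) (hΛ : 0 < Λ)
    (hA : ∀ x, |J.val x| ≤ A) {g : E → ℝ} (hg : ∀ x, |g x| ≤ F)
    (h : ∀ x, a x (J.hess x) - Λ * J.val x = g x) (x : E) : |J.val x| ≤ F / Λ := by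
  have upper := mul_val_le_of_le_apply_hess ha hΛ (fun x => (abs_le.1 (hA x)).2) (F := F)
    (fun x => by linarith [(abs_le.1 (hg x)).1, h x]) x
  have lower := mul_val_le_of_le_apply_hess (J := (-1 : ℝ) • J) ha hΛ (A := A) (F := F)
    (fun x => by simpa using neg_le.1 (abs_le.1 (hA x)).1)
    (fun x => by
      simp only [Jet.val_smul, Jet.hess_smul, map_smul, smul_eq_mul]
      linarith [(abs_le.1 (hg x)).2, h x]) x
  rw [Jet.val_smul] at lower
  rw [le_div_iff₀ hΛ, ← abs_of_pos hΛ, ← abs_mul, abs_le]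
  constructor <;> linarith

end GlobalMaximumPrinciple

section HolderNorms

variable {E F : Type*} [NormedAddCommGroup E] [NormedAddCommGroup F] {A B : ℝ} {f g : E → F}

/-- The sup norm and the `1/2`-Hölder seminorm of `f` are at most `A`. -/
structure HolderNormLE (A : ℝ) (f : E → F) : Prop where
  norm_le : ∀ x, ‖f x‖ ≤ A
  norm_sub_le : ∀ x y, ‖f y - f x‖ ≤ A * √‖y - x‖

theorem isWeight_one : IsWeight (1 : E → ℝ) :=
  ⟨(LipschitzWith.const 1).weaken zero_le_one, fun _ => zero_le_one, fun _ => le_rfl⟩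

theorem le_sqrt_self_of_le_one {t : ℝ} (h0 : 0 ≤ t) (h1 : t ≤ 1) : t ≤ √t :=
  Real.le_sqrt_of_sq_le (by nlinarith)

theorem norm_sub_le_mul_sqrt_of_norm_le (hA : ∀ x, ‖f x‖ ≤ A) {x y : E}
    (hB : ‖y - x‖ ≤ 1 → ‖f y - f x‖ ≤ B * √‖y - x‖) (hB0 : 0 ≤ B) :
    ‖f y - f x‖ ≤ (B + 2 * A) * √‖y - x‖ := by
  have A0 : 0 ≤ A := (norm_nonneg (f x)).trans (hA x)
  rcases le_total ‖y - x‖ 1 with hyx | hyx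
  · exact (hB hyx).trans (by gcongr; linarith)
  · calc ‖f y - f x‖ ≤ ‖f y‖ + ‖f x‖ := norm_sub_le _ _
      _ ≤ (B + 2 * A) * 1 := by linarith [hA x, hA y]
      _ ≤ (B + 2 * A) * √‖y - x‖ := by gcongr; exact Real.one_le_sqrt.2 hyx

namespace HolderNormLE

theorem nonneg (h : HolderNormLE A f) : 0 ≤ A := (norm_nonneg (f 0)).trans (h.norm_le 0)

theorem mono (h : HolderNormLE A f) (hAB : A ≤ B) : HolderNormLE B f :=
  ⟨fun x => (h.norm_le x).trans hAB, fun x y => (h.norm_sub_le x y).trans (by gcongr)⟩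

theorem continuous (h : HolderNormLE A f) : Continuous f := by
  refine continuous_iff_continuousAt.2 fun x => tendsto_iff_norm_sub_tendsto_zero.2 ?_
  refine squeeze_zero (fun _ => norm_nonneg _) (h.norm_sub_le x) ?_
  have : Continuous fun y : E => A * √‖y - x‖ := by fun_prop
  simpa using this.tendsto x

protected theorem zero (hA : 0 ≤ A) : HolderNormLE A (0 : E → F) :=
  ⟨fun x => by simpa, fun x y => by simpa using mul_nonneg hA (Real.sqrt_nonneg _)⟩

protected theorem add (hf : HolderNormLE A f) (hg : HolderNormLE B g) :
    HolderNormLE (A + B) fun x => f x + g x where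
  norm_le x := (norm_add_le _ _).trans (add_le_add (hf.norm_le x) (hg.norm_le x))
  norm_sub_le x y := by
    rw [add_sub_add_comm, add_mul]
    exact (norm_add_le _ _).trans (add_le_add (hf.norm_sub_le x y) (hg.norm_sub_le x y))

protected theorem smul [NormedSpace ℝ F] (hf : HolderNormLE A f) (c : ℝ) :
    HolderNormLE (|c| * A) fun x => c • f x where
  norm_le x := by
    rw [norm_smul]
    exact mul_le_mul_of_nonneg_left (hf.norm_le x) (abs_nonneg c)
  norm_sub_le x y := by
    rw [← smul_sub, norm_smul, mul_assoc]
    exact mul_le_mul_of_nonneg_left (hf.norm_sub_le x y) (abs_nonneg c)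

protected theorem sub [NormedSpace ℝ F] (hf : HolderNormLE A f) (hg : HolderNormLE B g) :
    HolderNormLE (A + B) fun x => f x - g x := by
  simpa [sub_eq_add_neg] using hf.add (hg.smul (-1))

protected theorem sum {ι : Type*} {s : Finset ι} {f : ι → E → F}
    (h : ∀ i ∈ s, HolderNormLE A (f i)) : HolderNormLE (s.card * A) fun x => ∑ i ∈ s, f i x where
  norm_le x := by
    simpa using norm_sum_le_of_le s fun i hi => (h i hi).norm_le x
  norm_sub_le x y := by
    simpa [← Finset.sum_sub_distrib, mul_assoc] using
      norm_sum_le_of_le s fun i hi => (h i hi).norm_sub_le x y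

theorem isHolder (hf : HolderNormLE A f) {δ : E → ℝ} (hδ : IsWeight δ) : IsHolder δ A f := by
  intro x y t hx _ hyx
  have A0 := hf.nonneg
  have t0 : 0 ≤ t := nonneg_of_mul_nonneg_left ((norm_nonneg _).trans hyx) hx
  calc δ x ^ 2 * ‖f y - f x‖ ≤ 1 * (A * √‖y - x‖) :=
        mul_le_mul (pow_le_one₀ hx.le (hδ.le_one x)) (hf.norm_sub_le x y) (norm_nonneg _)
          zero_le_one
    _ ≤ A * √t := by
        rw [one_mul]
        gcongr
        exact hyx.trans (mul_le_of_le_one_right t0 (hδ.le_one x))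

theorem translate (hf : HolderNormLE A f) (k : E) : HolderNormLE A fun x => f (x + k) :=
  ⟨fun x => hf.norm_le (x + k), fun x y => by simpa using hf.norm_sub_le (x + k) (y + k)⟩

end HolderNormLE

end HolderNorms

section GlobalEstimates

open scoped NNReal

variable {E : Type*} [NormedAddCommGroup E] [InnerProductSpace ℝ E]

/-- The global `C^{2,1/2}` norm of `J` is at most `A`. -/
structure Jet.HolderNormLE (A : ℝ) (J : Jet E) : Prop where
  abs_val_le : ∀ x, |J.val x| ≤ A
  norm_grad_le : ∀ x, ‖J.grad x‖ ≤ A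
  hess : SemilinearDirichlet.HolderNormLE A J.hess

namespace Jet

variable {A B : ℝ} {J J' : Jet E}

namespace HolderNormLE

theorem nonneg (h : J.HolderNormLE A) : 0 ≤ A := h.hess.nonneg

theorem norm_hess_le (h : J.HolderNormLE A) (x : E) : ‖J.hess x‖ ≤ A := h.hess.norm_le x

theorem mono (h : J.HolderNormLE A) (hAB : A ≤ B) : J.HolderNormLE B :=
  ⟨fun x => (h.abs_val_le x).trans hAB, fun x => (h.norm_grad_le x).trans hAB, h.hess.mono hAB⟩

protected theorem zero (hA : 0 ≤ A) : (0 : Jet E).HolderNormLE A :=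
  ⟨fun x => by simpa, fun x => by simpa, .zero hA⟩

protected theorem add (h : J.HolderNormLE A) (h' : J'.HolderNormLE B) :
    (J + J').HolderNormLE (A + B) :=
  ⟨fun x => (abs_add_le _ _).trans (add_le_add (h.abs_val_le x) (h'.abs_val_le x)),
    fun x => (norm_add_le _ _).trans (add_le_add (h.norm_grad_le x) (h'.norm_grad_le x)),
    h.hess.add h'.hess⟩

protected theorem smul (h : J.HolderNormLE A) (c : ℝ) : (c • J).HolderNormLE (|c| * A) where
  abs_val_le x := by
    rw [val_smul, abs_mul]
    exact mul_le_mul_of_nonneg_left (h.abs_val_le x) (abs_nonneg c)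
  norm_grad_le x := by
    rw [grad_smul, norm_smul]
    exact mul_le_mul_of_nonneg_left (h.norm_grad_le x) (abs_nonneg c)
  hess := h.hess.smul c

protected theorem sub (h : J.HolderNormLE A) (h' : J'.HolderNormLE B) :
    (J - J').HolderNormLE (A + B) :=
  ⟨fun x => (abs_sub _ _).trans (add_le_add (h.abs_val_le x) (h'.abs_val_le x)),
    fun x => (norm_sub_le _ _).trans (add_le_add (h.norm_grad_le x) (h'.norm_grad_le x)),
    h.hess.sub h'.hess⟩

protected theorem sum {ι : Type*} {s : Finset ι} {J : ι → Jet E}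
    (h : ∀ i ∈ s, (J i).HolderNormLE A) : (Jet.sum s J).HolderNormLE (s.card * A) where
  abs_val_le x := by
    simpa using norm_sum_le_of_le s fun i hi =>
      (Real.norm_eq_abs _).trans_le ((h i hi).abs_val_le x)
  norm_grad_le x := by
    simpa using norm_sum_le_of_le s fun i hi => (h i hi).norm_grad_le x
  hess := .sum fun i hi => (h i hi).hess

theorem translate (h : J.HolderNormLE A) (k : E) : (J.translate k).HolderNormLE A :=
  ⟨fun x => h.abs_val_le (x + k), fun x => h.norm_grad_le (x + k), h.hess.translate k⟩

theorem isBoundedC2Holder (h : J.HolderNormLE A) {δ : E → ℝ} (hδ : IsWeight δ) :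
    J.IsBoundedC2Holder δ A where
  val x _ := h.abs_val_le x
  grad x _ := (mul_le_of_le_one_left (norm_nonneg _) (hδ.le_one x)).trans (h.norm_grad_le x)
  hess x _ := (mul_le_of_le_one_left (norm_nonneg _)
    (pow_le_one₀ (hδ.nonneg x) (hδ.le_one x))).trans (h.norm_hess_le x)
  holder := h.hess.isHolder hδ

end HolderNormLE

theorem IsBoundedC2.of_one {J : Jet E} (h : J.IsBoundedC2 1 A) (x : E) :
    |J.val x| ≤ A ∧ ‖J.grad x‖ ≤ A ∧ ‖J.hess x‖ ≤ A := by
  simpa using And.intro (h.val x one_pos) (And.intro (h.grad x one_pos) (h.hess x one_pos))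

theorem IsBoundedC2Holder.holderNormLE (h : J.IsBoundedC2Holder 1 A) :
    J.HolderNormLE (3 * A) := by
  have bounds := h.toIsBoundedC2.of_one
  have A0 : 0 ≤ A := (abs_nonneg _).trans (bounds 0).1
  refine ⟨fun x => by linarith [bounds x], fun x => by linarith [bounds x],
    fun x => by linarith [bounds x], fun x y => ?_⟩
  rcases le_total ‖y - x‖ (1 / 2) with hyx | hyx
  · have := h.holder (x := x) (y := y) one_pos hyx (by simp)
    simp only [Pi.one_apply, one_pow, one_mul] at this
    exact this.trans (by gcongr; linarith)
  · have : 2 / 3 ≤ √‖y - x‖ := Real.le_sqrt_of_sq_le (by linarith)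
    calc ‖J.hess y - J.hess x‖ ≤ ‖J.hess y‖ + ‖J.hess x‖ := norm_sub_le _ _
      _ ≤ 3 * A * (2 / 3) := by linarith [bounds x, bounds y]
      _ ≤ 3 * A * √‖y - x‖ := by gcongr

theorem exists_tendstoAt_of_eventually_holderNormLE [FiniteDimensional ℝ E] {ι : Type*}
    (𝒰 : Ultrafilter ι) {Js : ι → Jet E} (h : ∀ᶠ i in 𝒰, (Js i).HolderNormLE A) :
    ∃ J : Jet E, J.HolderNormLE A ∧
      ∀ x, TendstoAt Js 𝒰 x (J.val x) (J.grad x) (J.hess x) := by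
  obtain ⟨J, hJ⟩ := exists_jet_of_eventuallyHolderAt 𝒰 (Js := Js) fun x =>
    ⟨1, one_pos, A, h.mono fun i hi => ⟨hi.abs_val_le x, hi.norm_grad_le x, hi.norm_hess_le x,
      fun y _ => hi.hess.norm_sub_le x y⟩⟩
  exact ⟨J,
    ⟨fun x => le_of_tendsto (hJ x).val.abs (h.mono fun i hi => hi.abs_val_le x),
      fun x => le_of_tendsto (hJ x).grad.norm (h.mono fun i hi => hi.norm_grad_le x),
      fun x => le_of_tendsto (hJ x).hess.norm (h.mono fun i hi => hi.norm_hess_le x),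
      fun x y => le_of_tendsto ((hJ y).hess.sub (hJ x).hess).norm
        (h.mono fun i hi => hi.hess.norm_sub_le x y)⟩, hJ⟩

end Jet

theorem exists_global_schauder_estimate (E : Type*) [NormedAddCommGroup E] [InnerProductSpace ℝ E]
    [FiniteDimensional ℝ E] (C : ℝ) (K : ℝ≥0) {Λ : ℝ} (hΛ : 0 < Λ) :
    ∃ C₀ > 0, ∀ ⦃a⦄, IsEllipticField C K a → ∀ ⦃J : Jet E⦄ ⦃A F g⦄, J.HolderNormLE A →
      HolderNormLE F g → (∀ x, a x (J.hess x) - Λ * J.val x = g x) → J.HolderNormLE (C₀ * F) := by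
  obtain ⟨C₀, C₀_pos, schauder⟩ :=
    exists_schauder_estimate E C K (add_nonneg zero_le_one hΛ.le)
  refine ⟨3 * (C₀ * (1 / Λ + 1)), by positivity, fun a ha J A F g hJ hg eq => ?_⟩
  have F0 := hg.nonneg
  have val_le := abs_val_le_div_of_apply_hess_sub_eq ha.isElliptic hΛ hJ.abs_val_le hg.norm_le eq
  refine (schauder ha isWeight_one (by positivity) F0 (hJ.isBoundedC2Holder isWeight_one)
    (fun x _ => val_le x) fun M hM x y t _ ht hyx => ?_).holderNormLE.mono (by ring_nf; rfl)
  have M0 : 0 ≤ M := (abs_nonneg _).trans (hM.of_one 0).1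
  simp only [Pi.one_apply, mul_one, one_pow, one_mul] at hyx ⊢
  have le_sqrt : ‖y - x‖ ≤ √t := by
    have := (norm_nonneg _).trans hyx
    exact hyx.trans (le_sqrt_self_of_le_one this (by linarith))
  have := mul_nonneg (mul_nonneg hΛ.le F0) (Real.sqrt_nonneg t)
  have := mul_nonneg M0 (Real.sqrt_nonneg t)
  calc ‖a y (J.hess y) - a x (J.hess x)‖
      = ‖(g y - g x) + Λ * (J.val y - J.val x)‖ := by rw [← eq, ← eq]; ring_nf
    _ ≤ ‖g y - g x‖ + Λ * |J.val y - J.val x| := by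
        rw [← abs_of_pos hΛ, ← abs_mul, abs_of_pos hΛ]; exact norm_add_le _ _
    _ ≤ F * √t + Λ * (M * √t) := by
        gcongr
        · exact (hg.norm_sub_le x y).trans (by gcongr)
        · exact (J.abs_val_sub_le (fun x => (hM.of_one x).2.1) x y).trans (by gcongr)
    _ ≤ (1 + Λ) * (M + F) * √t := by linarith

end GlobalEstimates

section DiscreteLaplacian

variable {E : Type*} [NormedAddCommGroup E] [InnerProductSpace ℝ E] {ι : Type*} [Fintype ι]

/-- The functional `Q ↦ ∑ i, Q (v i) (v i)`. For an orthonormal basis `v` it maps the Hessian of a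
function to its Laplacian. -/
noncomputable def diagonalSum (v : ι → E) : (E →L[ℝ] E →L[ℝ] ℝ) →L[ℝ] ℝ :=
  ∑ i, (ContinuousLinearMap.apply ℝ ℝ (v i)).comp (ContinuousLinearMap.apply ℝ (E →L[ℝ] ℝ) (v i))

@[simp] theorem diagonalSum_apply (v : ι → E) (Q : E →L[ℝ] E →L[ℝ] ℝ) :
    diagonalSum v Q = ∑ i, Q (v i) (v i) := by
  simp [diagonalSum]

theorem isElliptic_diagonalSum [CompleteSpace E] (b : OrthonormalBasis ι ℝ E) :
    IsElliptic (max 1 (Fintype.card ι)) (diagonalSum b) where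
  one_le := le_max_left _ _
  norm_le := by
    refine ContinuousLinearMap.opNorm_le_bound _ (zero_le_one.trans (le_max_left _ _)) fun Q => ?_
    calc ‖diagonalSum b Q‖ ≤ ∑ _i : ι, ‖Q‖ := by
          rw [diagonalSum_apply]
          exact norm_sum_le_of_le _ fun i _ => by simpa using Q.le_opNorm₂ (b i) (b i)
      _ = Fintype.card ι * ‖Q‖ := by simp
      _ ≤ _ := by gcongr; exact le_max_right _ _
  apply_nonpos Q hQ := by
    rw [diagonalSum_apply]
    exact Finset.sum_nonpos fun i _ => hQ (b i)
  le_apply_smulRight P := by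
    have parseval : diagonalSum b (P.smulRight P) = ‖P‖ ^ 2 := by
      rw [← (InnerProductSpace.toDual ℝ E).symm.norm_map P, ← b.sum_sq_norm_inner_left]
      simp [sq]
    rw [parseval]
    exact mul_le_of_le_one_left (sq_nonneg _) (inv_le_one_of_one_le₀ (le_max_left _ _))

/-- The second-order central difference approximating `diagonalSum v` applied to the Hessian. -/
noncomputable def centralDifference (v : ι → E) (ε : ℝ) (u : E → ℝ) (x : E) : ℝ :=
  (∑ i, (u (x + ε • v i) + u (x - ε • v i) - 2 * u x)) / ε ^ 2

variable {v : ι → E} {f w w' J : Jet E} {Λ ε A M : ℝ}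

theorem Jet.HolderNormLE.abs_centralDifference_sub_le (hJ : J.HolderNormLE A) (hε : 0 < ε)
    (hv : ∀ i, ‖v i‖ = 1) (x : E) :
    |centralDifference v ε J.val x - diagonalSum v (J.hess x)|
      ≤ Fintype.card ι * (2 * (A * √ε)) := by
  have taylor (i : ι) :
      |J.val (x + ε • v i) + J.val (x - ε • v i) - 2 * J.val x - ε ^ 2 * J.hess x (v i) (v i)|
        ≤ 2 * (A * √ε) * ε ^ 2 := by
    have hess_sub_le (y : E) (hy : ‖y - x‖ ≤ ε) : ‖J.hess y - J.hess x‖ ≤ A * √ε :=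
      (hJ.hess.norm_sub_le x y).trans (by have := hJ.nonneg; gcongr)
    have norm_eq : ‖ε • v i‖ = ε := by rw [norm_smul, hv i, mul_one, Real.norm_of_nonneg hε.le]
    have plus := J.abs_val_sub_quadratic_le hess_sub_le (y := x + ε • v i) (by simp [norm_eq])
    have minus := J.abs_val_sub_quadratic_le hess_sub_le (y := x - ε • v i) (by simp [norm_eq])
    simp only [add_sub_cancel_left, sub_sub_cancel_left, norm_neg, norm_eq, map_neg, map_smul,
      neg_apply, smul_apply, smul_eq_mul] at plus minus
    rw [abs_le] at *
    constructor <;> linarith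
  have eq : centralDifference v ε J.val x - diagonalSum v (J.hess x) = (∑ i, (J.val (x + ε • v i) +
      J.val (x - ε • v i) - 2 * J.val x - ε ^ 2 * J.hess x (v i) (v i))) / ε ^ 2 := by
    rw [centralDifference, diagonalSum_apply, Finset.sum_sub_distrib _
      fun i => ε ^ 2 * J.hess x (v i) (v i), ← Finset.mul_sum]
    field_simp
  rw [eq, abs_div, abs_of_pos (pow_pos hε 2), div_le_iff₀ (pow_pos hε 2)]
  calc _ ≤ ∑ _i : ι, 2 * (A * √ε) * ε ^ 2 :=
        (Finset.abs_sum_le_sum_abs _ _).trans (Finset.sum_le_sum fun i _ => taylor i)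
    _ = _ := by simp only [Finset.sum_const, Finset.card_univ, nsmul_eq_mul]; ring

/-- One step of the Jacobi iteration for `centralDifference v ε w - Λ * w = f`. -/
noncomputable def Jet.jacobiStep (v : ι → E) (Λ ε : ℝ) (f w : Jet E) : Jet E :=
  (2 * Fintype.card ι / ε ^ 2 + Λ)⁻¹ • ((ε ^ 2)⁻¹ •
    Jet.sum Finset.univ (fun i => w.translate (ε • v i) + w.translate (-(ε • v i))) - f)

theorem Jet.jacobiStep_val (v : ι → E) (Λ ε : ℝ) (f w : Jet E) (x : E) :
    (jacobiStep v Λ ε f w).val x = (2 * Fintype.card ι / ε ^ 2 + Λ)⁻¹ *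
      ((ε ^ 2)⁻¹ * ∑ i, (w.val (x + ε • v i) + w.val (x - ε • v i)) - f.val x) := by
  simp [jacobiStep, sub_eq_add_neg]

theorem Jet.HolderNormLE.jacobiStep (hf : f.HolderNormLE A) (hw : w.HolderNormLE (A / Λ))
    (hΛ : 0 < Λ) : (Jet.jacobiStep v Λ ε f w).HolderNormLE (A / Λ) := by
  have bound := (((Jet.HolderNormLE.sum (s := Finset.univ) fun i _ =>
    (hw.translate (ε • v i)).add (hw.translate (-(ε • v i)))).smul (ε ^ 2)⁻¹).sub hf).smul
      (2 * Fintype.card ι / ε ^ 2 + Λ)⁻¹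
  refine bound.mono (le_of_eq ?_)
  rw [abs_of_nonneg (by positivity), abs_of_nonneg (by positivity), Finset.card_univ,
    inv_mul_eq_iff_eq_mul₀ (by positivity)]
  field_simp
  ring

theorem Jet.abs_jacobiStep_val_sub_le (hΛ : 0 < Λ) (h : ∀ x, |w.val x - w'.val x| ≤ M) (x : E) :
    |(jacobiStep v Λ ε f w).val x - (jacobiStep v Λ ε f w').val x|
      ≤ 2 * Fintype.card ι / ε ^ 2 / (2 * Fintype.card ι / ε ^ 2 + Λ) * M := by
  set D := 2 * Fintype.card ι / ε ^ 2 + Λ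
  have D_pos : 0 < D := by positivity
  have eq : (jacobiStep v Λ ε f w).val x - (jacobiStep v Λ ε f w').val x = D⁻¹ * ((ε ^ 2)⁻¹ *
      ∑ i, ((w.val (x + ε • v i) - w'.val (x + ε • v i)) +
        (w.val (x - ε • v i) - w'.val (x - ε • v i)))) := by
    simp only [jacobiStep_val, Finset.sum_add_distrib, Finset.sum_sub_distrib]
    ring
  rw [eq, abs_mul, abs_mul, abs_of_pos (inv_pos.2 D_pos), abs_of_nonneg (by positivity)]
  calc _ ≤ D⁻¹ * ((ε ^ 2)⁻¹ * ∑ _i : ι, (M + M)) := by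
        gcongr
        exact (Finset.abs_sum_le_sum_abs _ _).trans
          (Finset.sum_le_sum fun i _ => (abs_add_le _ _).trans (add_le_add (h _) (h _)))
    _ = _ := by simp only [Finset.sum_const, Finset.card_univ, nsmul_eq_mul]; ring

theorem Jet.HolderNormLE.exists_centralDifference_sub_eq [FiniteDimensional ℝ E] (v : ι → E)
    (hΛ : 0 < Λ) (ε : ℝ) (hf : f.HolderNormLE A) : ∃ w : Jet E, w.HolderNormLE (A / Λ) ∧
      ∀ x, centralDifference v ε w.val x - Λ * w.val x = f.val x := by
  set D := 2 * Fintype.card ι / ε ^ 2 + Λ with hD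
  have D_pos : 0 < D := by positivity
  let w : ℕ → Jet E := fun n => (Jet.jacobiStep v Λ ε f)^[n] 0
  have w_succ (n : ℕ) : w (n + 1) = Jet.jacobiStep v Λ ε f (w n) :=
    Function.iterate_succ_apply' _ _ _
  have A0 := hf.nonneg
  have w_bound (n : ℕ) : (w n).HolderNormLE (A / Λ) := by
    induction n with
    | zero => exact .zero (by positivity)
    | succ n ih => rw [w_succ]; exact hf.jacobiStep ih hΛ
  have contraction (n : ℕ) :
      ∀ x, |(w (n + 1)).val x - (w n).val x| ≤ (2 * Fintype.card ι / ε ^ 2 / D) ^ n * (A / Λ) := by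
    induction n with
    | zero => intro x; simpa [w] using (w_bound 1).abs_val_le x
    | succ n ih =>
      intro x
      rw [pow_succ', mul_assoc, w_succ (n + 1)]
      nth_rw 2 [w_succ]
      exact Jet.abs_jacobiStep_val_sub_le hΛ ih x
  let 𝒰 : Ultrafilter ℕ := hyperfilter ℕ
  obtain ⟨w₀, w₀_bound, lim⟩ :=
    Jet.exists_tendstoAt_of_eventually_holderNormLE 𝒰 (.of_forall w_bound)
  refine ⟨w₀, w₀_bound, fun x => ?_⟩
  have lim_succ : Tendsto (fun n => (w (n + 1)).val x) 𝒰 (𝓝 (w₀.val x)) := by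
    have ratio_lt_one : 2 * Fintype.card ι / ε ^ 2 / D < 1 := by
      rw [div_lt_one D_pos]; exact lt_add_of_pos_right _ hΛ
    have := ((tendsto_pow_atTop_nhds_zero_of_lt_one (by positivity) ratio_lt_one).mono_left
      Nat.hyperfilter_le_atTop).mul_const (A / Λ)
    rw [zero_mul] at this
    simpa using (squeeze_zero_norm (fun n => contraction n x) this).add (lim x).val
  have lim_step : Tendsto (fun n => (w (n + 1)).val x) 𝒰
      (𝓝 ((Jet.jacobiStep v Λ ε f w₀).val x)) := by
    simp only [w_succ, Jet.jacobiStep_val]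
    exact ((tendsto_finsetSum _ fun i _ => (lim _).val.add (lim _).val).const_mul _
      |>.sub_const _).const_mul _
  have fixed := tendsto_nhds_unique lim_succ lim_step
  rw [Jet.jacobiStep_val, ← hD, eq_inv_mul_iff_mul_eq₀ D_pos.ne', hD] at fixed
  simp only [centralDifference, Finset.sum_sub_distrib, Finset.sum_const, Finset.card_univ,
    nsmul_eq_mul]
  linear_combination -fixed

end DiscreteLaplacian

section Mollification

open scoped Convolution

variable {E : Type*} [NormedAddCommGroup E] {A : ℝ}

theorem HolderNormLE.convolution {V W G : Type*} [NormedAddCommGroup V] [NormedSpace ℝ V]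
    [NormedAddCommGroup W] [NormedSpace ℝ W] [NormedAddCommGroup G] [NormedSpace ℝ G]
    [MeasurableSpace E] [BorelSpace E] [SecondCountableTopologyEither E W] {μ : Measure E}
    [IsLocallyFiniteMeasure μ] [μ.IsAddLeftInvariant] [μ.IsNegInvariant] {ψ : E → V}
    (hψ : Continuous ψ) (hc : HasCompactSupport ψ) (L : V →L[ℝ] W →L[ℝ] G) {g : E → W}
    (hg : HolderNormLE A g) : HolderNormLE (‖L‖ * (∫ t, ‖ψ t‖ ∂μ) * A) (ψ ⋆[L, μ] g) := by
  have integral_le {h : E → W} {M : ℝ} (hM : ∀ t, ‖h t‖ ≤ M) :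
      ‖∫ t, L (ψ t) (h t) ∂μ‖ ≤ ‖L‖ * (∫ t, ‖ψ t‖ ∂μ) * M := by
    rw [← integral_const_mul, ← integral_mul_const]
    have integrable : Integrable (fun t => ‖ψ t‖) μ := (hψ.integrable_of_hasCompactSupport hc).norm
    refine norm_integral_le_of_norm_le ((integrable.const_mul _).mul_const _)
      (.of_forall fun t => ?_)
    exact (L.le_opNorm₂ _ _).trans (by gcongr; exact hM t)
  refine ⟨fun x => integral_le fun t => hg.norm_le _, fun x y => ?_⟩
  have exists_conv := hc.convolutionExists_left L hψ (μ := μ) hg.continuous.locallyIntegrable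
  rw [convolution_def, convolution_def, ← integral_sub (exists_conv y) (exists_conv x), mul_assoc]
  simp only [← map_sub]
  exact integral_le fun t => by simpa using hg.norm_sub_le (x - t) (y - t)

theorem HolderNormLE.exists_jet_abs_val_sub_le [InnerProductSpace ℝ E] [FiniteDimensional ℝ E]
    {g : E → ℝ} (hg : HolderNormLE A g) {ε : ℝ} (hε : 0 < ε) :
    ∃ f : Jet E, (∃ B, f.HolderNormLE B) ∧ HolderNormLE A f.val ∧
      ∀ x, |f.val x - g x| ≤ A * √ε := by
  borelize E
  let φ : ContDiffBump (0 : E) := ⟨ε / 2, ε, half_pos hε, half_lt_self hε⟩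
  set ψ : E → ℝ := φ.normed volume
  have ψ_supp : HasCompactSupport ψ := φ.hasCompactSupport_normed
  have ψ_smooth : ContDiff ℝ 2 ψ := φ.contDiff_normed
  have dψ_smooth : ContDiff ℝ 1 (fderiv ℝ ψ) := ψ_smooth.fderiv_right le_rfl
  have g_int : LocallyIntegrable g volume := hg.continuous.locallyIntegrable
  let L := ContinuousLinearMap.lsmul ℝ ℝ (E := ℝ)
  let f : Jet E :=
    { val := ψ ⋆[L, volume] g
      grad := fderiv ℝ ψ ⋆[L.precompL E, volume] g
      hess := fderiv ℝ (fderiv ℝ ψ) ⋆[(L.precompL E).precompL E, volume] g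
      hasFDerivAt_val :=
        ψ_supp.hasFDerivAt_convolution_left L (ψ_smooth.of_le one_le_two) g_int
      hasFDerivAt_grad :=
        (ψ_supp.fderiv (𝕜 := ℝ)).hasFDerivAt_convolution_left (L.precompL E) dψ_smooth g_int }
  have val_bound := hg.convolution (μ := volume) ψ_smooth.continuous ψ_supp L
  have grad_bound := hg.convolution (μ := volume) dψ_smooth.continuous (ψ_supp.fderiv (𝕜 := ℝ))
    (L.precompL E)
  have hess_bound := hg.convolution (μ := volume) (dψ_smooth.continuous_fderiv one_ne_zero)
    ((ψ_supp.fderiv (𝕜 := ℝ)).fderiv (𝕜 := ℝ)) ((L.precompL E).precompL E)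
  refine ⟨f, ⟨_, fun x => (val_bound.norm_le x).trans (le_max_left _ _),
    fun x => (grad_bound.norm_le x).trans ((le_max_left _ _).trans (le_max_right _ _)),
    hess_bound.mono ((le_max_right _ _).trans (le_max_right _ _))⟩, ?_, fun x => ?_⟩
  · refine val_bound.mono (mul_le_of_le_one_left hg.nonneg ?_)
    have mass_eq : ∫ t, ‖ψ t‖ = 1 := by
      simp only [← φ.integral_normed (μ := volume), ψ, Real.norm_of_nonneg (φ.nonneg_normed _)]
    rw [mass_eq, mul_one]
    exact ContinuousLinearMap.opNorm_lsmul_le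
  · refine φ.dist_normed_convolution_le hg.continuous.aestronglyMeasurable fun y hy => ?_
    have A0 := hg.nonneg
    exact (hg.norm_sub_le x y).trans (by gcongr; exact (mem_ball_iff_norm.1 hy).le)

end Mollification

section BaseProblem

variable {E : Type*} [NormedAddCommGroup E] [InnerProductSpace ℝ E] [FiniteDimensional ℝ E]
  {ι : Type*} [Fintype ι] {Λ A : ℝ}

theorem tendsto_mul_sqrt_nhdsGT_zero (c : ℝ) : Tendsto (fun ε => c * √ε) (𝓝[>] 0) (𝓝 0) := by
  have : Continuous fun ε => c * √ε := by fun_prop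
  exact (this.tendsto' 0 0 (by simp)).mono_left nhdsWithin_le_nhds

theorem Jet.HolderNormLE.exists_diagonalSum_sub_eq {v : ι → E} (hv : ∀ i, ‖v i‖ = 1) (hΛ : 0 < Λ)
    {f : Jet E} (hf : f.HolderNormLE A) : ∃ J : Jet E, J.HolderNormLE (A / Λ) ∧
      ∀ x, diagonalSum v (J.hess x) - Λ * J.val x = f.val x := by
  choose w w_bound w_eq using hf.exists_centralDifference_sub_eq v hΛ
  let 𝒰 : Ultrafilter ℝ := .of (𝓝[>] 0)
  have le_nhds : (𝒰 : Filter ℝ) ≤ 𝓝[>] 0 := Ultrafilter.of_le _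
  obtain ⟨J, hJ, lim⟩ := Jet.exists_tendstoAt_of_eventually_holderNormLE 𝒰 (.of_forall w_bound)
  refine ⟨J, hJ, fun x => ?_⟩
  have residual : Tendsto
      (fun ε => f.val x - (diagonalSum v ((w ε).hess x) - Λ * (w ε).val x)) 𝒰 (𝓝 0) := by
    refine squeeze_zero_norm' (a := fun ε => Fintype.card ι * (2 * (A / Λ)) * √ε) ?_
      ((tendsto_mul_sqrt_nhdsGT_zero _).mono_left le_nhds)
    filter_upwards [le_nhds self_mem_nhdsWithin] with ε hε
    rw [← w_eq ε x, sub_sub_sub_cancel_right, Real.norm_eq_abs]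
    exact ((w_bound ε).abs_centralDifference_sub_le hε hv x).trans_eq (by ring)
  have lim_eq := (((diagonalSum v).continuous.tendsto _).comp (lim x).hess).sub
    ((lim x).val.const_mul Λ)
  exact (sub_eq_zero.1 (tendsto_nhds_unique (tendsto_const_nhds.sub lim_eq) residual)).symm

/-- The equation `a x (D²u) - Λ u = g` has a global `C^{2,1/2}` solution for every global
`1/2`-Hölder right-hand side `g`. -/
def IsSolvable (Λ : ℝ) (a : E → (E →L[ℝ] E →L[ℝ] ℝ) →L[ℝ] ℝ) : Prop :=
  ∀ ⦃A g⦄, HolderNormLE A g →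
    ∃ J : Jet E, (∃ B, J.HolderNormLE B) ∧ ∀ x, a x (J.hess x) - Λ * J.val x = g x

theorem isEllipticField_diagonalSum (b : OrthonormalBasis ι ℝ E) :
    IsEllipticField (max 1 (Fintype.card ι)) 0 fun _ => diagonalSum b :=
  ⟨fun _ => isElliptic_diagonalSum b, .const _⟩

theorem isSolvable_diagonalSum (b : OrthonormalBasis ι ℝ E) (hΛ : 0 < Λ) :
    IsSolvable Λ fun _ => diagonalSum b := by
  intro A g hg
  obtain ⟨C₀, -, schauder⟩ := exists_global_schauder_estimate E (max 1 (Fintype.card ι)) 0 hΛ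
  choose! f f_bound f_holder f_sub using fun (ε : ℝ) (hε : 0 < ε) =>
    hg.exists_jet_abs_val_sub_le hε
  choose! B hB using f_bound
  choose! J hJ J_eq using fun (ε : ℝ) (hε : 0 < ε) =>
    (hB ε hε).exists_diagonalSum_sub_eq b.norm_eq_one hΛ
  let 𝒰 : Ultrafilter ℝ := .of (𝓝[>] 0)
  have le_nhds : (𝒰 : Filter ℝ) ≤ 𝓝[>] 0 := Ultrafilter.of_le _
  have eventually_pos : ∀ᶠ ε : ℝ in 𝒰, 0 < ε := le_nhds self_mem_nhdsWithin
  obtain ⟨J₀, hJ₀, lim⟩ := Jet.exists_tendstoAt_of_eventually_holderNormLE 𝒰 (Js := J)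
    (eventually_pos.mono fun ε hε =>
      schauder (isEllipticField_diagonalSum b) (hJ ε hε) (f_holder ε hε) (J_eq ε hε))
  refine ⟨J₀, ⟨_, hJ₀⟩, fun x => tendsto_nhds_unique
    ((((diagonalSum b).continuous.tendsto _).comp (lim x).hess).sub ((lim x).val.const_mul Λ)) ?_⟩
  rw [tendsto_iff_norm_sub_tendsto_zero]
  refine squeeze_zero' (.of_forall fun _ => norm_nonneg _) (eventually_pos.mono fun ε hε => ?_)
    ((tendsto_mul_sqrt_nhdsGT_zero A).mono_left le_nhds)
  simpa only [Function.comp_apply, J_eq ε hε, Real.norm_eq_abs] using f_sub ε hε x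

end BaseProblem

section ConvexCombinations

open scoped NNReal

variable {E : Type*} [NormedAddCommGroup E] [InnerProductSpace ℝ E] {C : ℝ} {K : ℝ≥0}

theorem IsElliptic.mono {L : (E →L[ℝ] E →L[ℝ] ℝ) →L[ℝ] ℝ} (hL : IsElliptic C L) {C' : ℝ}
    (hC : C ≤ C') : IsElliptic C' L where
  one_le := hL.one_le.trans hC
  norm_le := hL.norm_le.trans hC
  apply_nonpos := hL.apply_nonpos
  le_apply_smulRight P := by
    have := hL.pos
    exact le_trans (by gcongr) (hL.le_apply_smulRight P)

theorem convex_setOf_isElliptic :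
    Convex ℝ {L : (E →L[ℝ] E →L[ℝ] ℝ) →L[ℝ] ℝ | IsElliptic C L} := by
  intro L hL L' hL' s t s0 t0 hst
  refine ⟨hL.one_le, ?_, fun Q hQ => ?_, fun P => ?_⟩
  · simpa using (convex_closedBall (0 : (E →L[ℝ] E →L[ℝ] ℝ) →L[ℝ] ℝ) C)
      (by simpa using hL.norm_le) (by simpa using hL'.norm_le) s0 t0 hst
  · exact add_nonpos (mul_nonpos_of_nonneg_of_nonpos s0 (hL.apply_nonpos Q hQ))
      (mul_nonpos_of_nonneg_of_nonpos t0 (hL'.apply_nonpos Q hQ))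
  · calc C⁻¹ * ‖P‖ ^ 2 = s * (C⁻¹ * ‖P‖ ^ 2) + t * (C⁻¹ * ‖P‖ ^ 2) := by
          rw [← add_mul, hst, one_mul]
      _ ≤ s * L (P.smulRight P) + t * L' (P.smulRight P) := by
        gcongr
        exacts [hL.le_apply_smulRight P, hL'.le_apply_smulRight P]

variable {a a₀ a₁ : E → (E →L[ℝ] E →L[ℝ] ℝ) →L[ℝ] ℝ}

theorem IsEllipticField.mono (ha : IsEllipticField C K a) {C' : ℝ} {K' : ℝ≥0} (hC : C ≤ C')
    (hK : K ≤ K') : IsEllipticField C' K' a :=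
  ⟨fun x => (ha.isElliptic x).mono hC, ha.lipschitz.weaken hK⟩

theorem IsEllipticField.lineMap (h₀ : IsEllipticField C K a₀) (h₁ : IsEllipticField C K a₁) {s : ℝ}
    (hs : s ∈ Icc (0 : ℝ) 1) :
    IsEllipticField C K fun x => AffineMap.lineMap (a₀ x) (a₁ x) s where
  isElliptic x := convex_setOf_isElliptic.lineMap_mem (h₀.isElliptic x) (h₁.isElliptic x) hs
  lipschitz := LipschitzWith.of_dist_le_mul fun x y => by
    simp only [AffineMap.lineMap_apply_module, dist_eq_norm]
    have s0 : 0 ≤ 1 - s := sub_nonneg.2 hs.2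
    calc ‖(1 - s) • a₀ x + s • a₁ x - ((1 - s) • a₀ y + s • a₁ y)‖
        = ‖(1 - s) • (a₀ x - a₀ y) + s • (a₁ x - a₁ y)‖ := by
          congr 1
          module
      _ ≤ (1 - s) * (K * ‖x - y‖) + s * (K * ‖x - y‖) := by
          refine norm_add_le_of_le ?_ ?_
          · rw [norm_smul, Real.norm_of_nonneg s0]
            exact mul_le_mul_of_nonneg_left (h₀.lipschitz.norm_sub_le x y) s0
          · rw [norm_smul, Real.norm_of_nonneg hs.1]
            exact mul_le_mul_of_nonneg_left (h₁.lipschitz.norm_sub_le x y) hs.1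
      _ = K * ‖x - y‖ := by ring

theorem Jet.HolderNormLE.apply_hess (ha : IsEllipticField C K a) {J : Jet E} {A : ℝ}
    (hJ : J.HolderNormLE A) :
    SemilinearDirichlet.HolderNormLE ((3 * C + K) * A) fun x => a x (J.hess x) := by
  have A0 := hJ.nonneg
  have C0 := (ha.isElliptic 0).pos
  have norm_le (x : E) : ‖a x (J.hess x)‖ ≤ C * A :=
    ((ha.isElliptic x).abs_apply_le _).trans (by gcongr; exact hJ.norm_hess_le x)
  refine ⟨fun x => (norm_le x).trans (by gcongr; linarith [K.2]), fun x y => ?_⟩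
  refine (norm_sub_le_mul_sqrt_of_norm_le norm_le (B := (C + K) * A) (fun hyx => ?_)
    (by positivity)).trans_eq (by ring)
  have dist_le := le_sqrt_self_of_le_one (norm_nonneg (y - x)) hyx
  calc ‖a y (J.hess y) - a x (J.hess x)‖
      = ‖a y (J.hess y - J.hess x) + (a y (J.hess x) - a x (J.hess x))‖ := by
        rw [map_sub, sub_add_sub_cancel]
    _ ≤ C * (A * √‖y - x‖) + K * √‖y - x‖ * A :=
        norm_add_le_of_le
          (((ha.isElliptic y).abs_apply_le _).trans (by gcongr; exact hJ.hess.norm_sub_le x y))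
          ((ha.abs_apply_sub_le y x _).trans (by gcongr; exact hJ.norm_hess_le x))
    _ = (C + K) * A * √‖y - x‖ := by ring

end ConvexCombinations

section ContinuityMethod

open scoped NNReal

variable {E : Type*} [NormedAddCommGroup E] [InnerProductSpace ℝ E] {C Λ C₀ η : ℝ}
  {K : ℝ≥0} {a a' a₀ a₁ : E → (E →L[ℝ] E →L[ℝ] ℝ) →L[ℝ] ℝ}

theorem IsSolvable.exists_iteration (h : IsSolvable Λ a)
    (schauder : ∀ ⦃J : Jet E⦄ ⦃A F g⦄, J.HolderNormLE A → HolderNormLE F g →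
      (∀ x, a x (J.hess x) - Λ * J.val x = g x) → J.HolderNormLE (C₀ * F))
    (hη : ∀ ⦃J : Jet E⦄ ⦃A⦄, J.HolderNormLE A →
      HolderNormLE (η * A) fun x => (a x - a' x) (J.hess x))
    (hC : 0 ≤ C₀) (hCη : C₀ * η ≤ 1 / 2) {F : ℝ} {g : E → ℝ} (hg : HolderNormLE F g) :
    ∃ S : ℕ → Jet E, (∀ n, (S n).HolderNormLE (2 * C₀ * F)) ∧
      (∀ n, (S (n + 1) - S n).HolderNormLE (2 * C₀ * F / 2 ^ n)) ∧
      ∀ n x, a x ((S (n + 1)).hess x) - Λ * (S (n + 1)).val x =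
        g x + (a x - a' x) ((S n).hess x) := by
  have F0 := hg.nonneg
  choose! T T_bound T_eq using fun (J : Jet E) (hJ : ∃ A, J.HolderNormLE A) =>
    h (hg.add (hη hJ.choose_spec))
  set M := 2 * C₀ * F
  have M0 : 0 ≤ M := by positivity
  have T_le {J : Jet E} (hJ : J.HolderNormLE M) : (T J).HolderNormLE M := by
    refine (schauder (T_bound J ⟨_, hJ⟩).choose_spec (hg.add (hη hJ)) (T_eq J ⟨_, hJ⟩)).mono ?_
    linarith [mul_le_mul_of_nonneg_right hCη M0]
  have T_sub_le {J J' : Jet E} (hJ : J.HolderNormLE M) (hJ' : J'.HolderNormLE M) {A : ℝ}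
      (hA : (J - J').HolderNormLE A) : (T J - T J').HolderNormLE (A / 2) := by
    refine (schauder ((T_le hJ).sub (T_le hJ')) (hη hA) fun x => ?_).mono ?_
    · have := T_eq J ⟨_, hJ⟩ x
      have := T_eq J' ⟨_, hJ'⟩ x
      simp only [Jet.hess_sub, Jet.val_sub, map_sub]
      linarith
    · linarith [mul_le_mul_of_nonneg_right hCη hA.nonneg]
  let S : ℕ → Jet E := fun n => T^[n] 0
  have S_succ (n : ℕ) : S (n + 1) = T (S n) := Function.iterate_succ_apply' T n 0
  have S_le (n : ℕ) : (S n).HolderNormLE M := by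
    induction n with
    | zero => exact .zero M0
    | succ n ih => exact S_succ n ▸ T_le ih
  refine ⟨S, S_le, fun n => ?_, fun n x => S_succ n ▸ T_eq _ ⟨_, S_le n⟩ x⟩
  induction n with
  | zero => simpa [S] using (S_le 1).sub (.zero le_rfl)
  | succ n ih =>
    rw [pow_succ, ← div_div]
    simpa only [S_succ] using T_sub_le (S_le (n + 1)) (S_le n) ih

variable [FiniteDimensional ℝ E]

theorem IsSolvable.of_perturbation (h : IsSolvable Λ a)
    (schauder : ∀ ⦃J : Jet E⦄ ⦃A F g⦄, J.HolderNormLE A → HolderNormLE F g →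
      (∀ x, a x (J.hess x) - Λ * J.val x = g x) → J.HolderNormLE (C₀ * F))
    (hη : ∀ ⦃J : Jet E⦄ ⦃A⦄, J.HolderNormLE A →
      HolderNormLE (η * A) fun x => (a x - a' x) (J.hess x))
    (hC : 0 ≤ C₀) (hCη : C₀ * η ≤ 1 / 2) : IsSolvable Λ a' := by
  intro F g hg
  obtain ⟨S, S_le, S_sub_le, S_eq⟩ := h.exists_iteration schauder hη hC hCη hg
  let 𝒰 : Ultrafilter ℕ := hyperfilter ℕ
  obtain ⟨J, hJ, lim⟩ := Jet.exists_tendstoAt_of_eventually_holderNormLE 𝒰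
    (Js := fun n => S (n + 1)) (.of_forall fun n => S_le (n + 1))
  refine ⟨J, ⟨_, hJ⟩, fun x => tendsto_nhds_unique
    ((((a' x).continuous.tendsto _).comp (lim x).hess).sub ((lim x).val.const_mul Λ)) ?_⟩
  have geometric : Tendsto (fun n : ℕ => η * (2 * C₀ * F / 2 ^ n)) 𝒰 (𝓝 0) := by
    have := (tendsto_pow_atTop_nhds_zero_of_lt_one (r := (1 / 2 : ℝ)) (by norm_num)
      (by norm_num)).const_mul (η * (2 * C₀ * F))
    simp only [one_div, inv_pow, mul_zero] at this
    simpa only [mul_div_assoc, div_eq_mul_inv, mul_assoc] using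
      this.mono_left Nat.hyperfilter_le_atTop
  refine (tendsto_iff_norm_sub_tendsto_zero.2 (squeeze_zero (fun _ => norm_nonneg _) (fun n => ?_)
    geometric))
  convert (hη (S_sub_le n)).norm_le x using 1
  rw [← norm_neg]
  congr 1
  have := S_eq n x
  simp only [Function.comp_apply, Jet.hess_sub, map_sub, sub_apply] at this ⊢
  linarith

theorem IsSolvable.of_isEllipticField (h : IsSolvable Λ a₀) (h₀ : IsEllipticField C K a₀)
    (h₁ : IsEllipticField C K a₁) (hΛ : 0 < Λ) : IsSolvable Λ a₁ := by
  obtain ⟨C₀, C₀_pos, schauder⟩ := exists_global_schauder_estimate E C K hΛ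
  have C_pos := (h₀.isElliptic 0).pos
  obtain ⟨N, hN⟩ := exists_nat_gt (2 * C₀ * (2 * (3 * C + K)))
  have N_pos : (0 : ℝ) < N := lt_of_le_of_lt (by positivity) hN
  suffices ∀ k ≤ N, IsSolvable Λ fun x => AffineMap.lineMap (a₀ x) (a₁ x) (k / N : ℝ) by
    simpa [N_pos.ne'] using this N le_rfl
  intro k
  induction k with
  | zero => simpa using h
  | succ k ih =>
    intro hk
    have hs : (k / N : ℝ) ∈ Icc (0 : ℝ) 1 :=
      ⟨by positivity, div_le_one_of_le₀ (by exact_mod_cast (Nat.le_succ k).trans hk) N_pos.le⟩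
    refine (ih (Nat.le_of_succ_le hk)).of_perturbation (schauder (h₀.lineMap h₁ hs))
      (η := 1 / N * (2 * (3 * C + K))) (fun J A hJ => ?_) C₀_pos.le ?_
    · convert ((hJ.apply_hess h₀).sub (hJ.apply_hess h₁)).smul (1 / N) using 1
      · rw [abs_of_pos (by positivity)]
        ring
      · ext x
        simp only [AffineMap.lineMap_apply_module, sub_apply, add_apply, smul_apply, smul_eq_mul]
        push_cast
        ring
    · rw [one_div_mul_eq_div, mul_div_assoc', div_le_iff₀ N_pos]
      linarith

theorem IsEllipticField.isSolvable (ha : IsEllipticField C K a) (hΛ : 0 < Λ) : IsSolvable Λ a :=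
  (isSolvable_diagonalSum (stdOrthonormalBasis ℝ E) hΛ).of_isEllipticField
    ((isEllipticField_diagonalSum _).mono (le_max_right C _) (zero_le (a := K)))
    (ha.mono (le_max_left C _) le_rfl) hΛ

end ContinuityMethod

section Infimum

variable {U : Type*} {f g : U → ℝ} {B δ : ℝ}

theorem bddBelow_range_of_abs_le (h : ∀ υ, |f υ| ≤ B) : BddBelow (range f) :=
  ⟨-B, by rintro _ ⟨υ, rfl⟩; exact (abs_le.1 (h υ)).1⟩

variable [Nonempty U]

theorem abs_ciInf_sub_ciInf_sub_le (hf : BddBelow (range f)) (c : ℝ)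
    (h : ∀ υ, |f υ - g υ - c| ≤ δ) : |(⨅ υ, f υ) - (⨅ υ, g υ) - c| ≤ δ := by
  have bounds (υ : U) := abs_le.1 (h υ)
  obtain ⟨m, hm⟩ := hf
  have hf' : ∀ υ, m ≤ f υ := forall_mem_range.1 hm
  have hg : BddBelow (range g) := ⟨m - δ - c, forall_mem_range.2 fun υ => by
    linarith [bounds υ, hf' υ]⟩
  have f_ge : (⨅ υ, g υ) + c - δ ≤ ⨅ υ, f υ := le_ciInf fun υ => by
    linarith [bounds υ, ciInf_le hg υ]
  have g_ge : (⨅ υ, f υ) - c - δ ≤ ⨅ υ, g υ := le_ciInf fun υ => by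
    linarith [bounds υ, ciInf_le ⟨m, hm⟩ υ]
  exact abs_le.2 ⟨by linarith, by linarith⟩

theorem abs_ciInf_sub_ciInf_le (hf : BddBelow (range f)) (h : ∀ υ, |f υ - g υ| ≤ δ) :
    |(⨅ υ, f υ) - ⨅ υ, g υ| ≤ δ := by
  simpa using abs_ciInf_sub_ciInf_sub_le hf 0 (by simpa using h)

theorem abs_ciInf_le (h : ∀ υ, |f υ| ≤ B) : |⨅ υ, f υ| ≤ B := by
  simpa using abs_ciInf_sub_ciInf_le (g := fun _ => 0) (bddBelow_range_of_abs_le h) (by simpa)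

end Infimum

section Hamiltonian

open scoped NNReal

variable {E : Type*} [NormedAddCommGroup E] {U : Type*}

/-- Drift `b` and discount `r` of a controlled diffusion, bounded by `M` and `K`-Lipschitz in space,
uniformly in the control. -/
structure IsControlField (M : ℝ) (K : ℝ≥0) (b : E → U → E) (r : E → U → ℝ) : Prop where
  norm_drift_le : ∀ x υ, ‖b x υ‖ ≤ M
  neg_le_discount : ∀ x υ, -M ≤ r x υ
  discount_nonpos : ∀ x υ, r x υ ≤ 0
  lipschitz_drift : ∀ υ, LipschitzWith K fun x => b x υ
  lipschitz_discount : ∀ υ, LipschitzWith K fun x => r x υ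

variable {M ε : ℝ} {K : ℝ≥0} {b : E → U → E} {r : E → U → ℝ}

namespace IsControlField

theorem nonneg [Nonempty U] (h : IsControlField M K b r) : 0 ≤ M :=
  (norm_nonneg _).trans (h.norm_drift_le 0 (Classical.arbitrary U))

theorem abs_discount_le (h : IsControlField M K b r) (x : E) (υ : U) : |r x υ| ≤ M :=
  abs_le.2 ⟨h.neg_le_discount x υ,
    (h.discount_nonpos x υ).trans ((norm_nonneg _).trans (h.norm_drift_le 0 υ))⟩

theorem abs_discount_sub_le (h : IsControlField M K b r) (x y : E) (υ : U) :
    |r y υ - r x υ| ≤ K * ‖y - x‖ :=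
  (h.lipschitz_discount υ).norm_sub_le y x

theorem norm_drift_sub_le (h : IsControlField M K b r) (x y : E) (υ : U) :
    ‖b y υ - b x υ‖ ≤ K * ‖y - x‖ :=
  (h.lipschitz_drift υ).norm_sub_le y x

end IsControlField

variable [NormedSpace ℝ E]

/-- The Hamiltonian `H(x, p, u) = inf_υ (p · b(x, υ) + r(x, υ) u)`. -/
noncomputable def hamiltonian (b : E → U → E) (r : E → U → ℝ) (x : E) (p : E →L[ℝ] ℝ) (u : ℝ) : ℝ :=
  ⨅ υ, (p (b x υ) + r x υ * u)

/-- The Hamiltonian with its directional derivatives replaced by difference quotients of step `ε`,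
shifted by `(M + 1 / ε) u` so that it becomes a monotone functional of the function `u`. -/
noncomputable def discreteHamiltonian (M ε : ℝ) (b : E → U → E) (r : E → U → ℝ) (u : E → ℝ)
    (x : E) : ℝ :=
  ⨅ υ, ((M + r x υ) * u x + u (x + ε • b x υ) / ε)

namespace IsControlField

theorem abs_apply_drift_add_le (h : IsControlField M K b r) (x : E) (υ : U) (p : E →L[ℝ] ℝ)
    (u : ℝ) : |p (b x υ) + r x υ * u| ≤ M * (‖p‖ + |u|) := by
  have drift := (p.le_opNorm (b x υ)).trans
    (mul_le_mul_of_nonneg_left (h.norm_drift_le x υ) (norm_nonneg p))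
  have discount := mul_le_mul_of_nonneg_right (h.abs_discount_le x υ) (abs_nonneg u)
  calc |p (b x υ) + r x υ * u| ≤ ‖p‖ * M + M * |u| :=
        (abs_add_le _ _).trans (add_le_add drift ((abs_mul _ _).trans_le discount))
    _ = M * (‖p‖ + |u|) := by ring

theorem bddBelow_range_apply_drift_add (h : IsControlField M K b r) (x : E) (p : E →L[ℝ] ℝ)
    (u : ℝ) : BddBelow (range fun υ => p (b x υ) + r x υ * u) :=
  bddBelow_range_of_abs_le fun υ => h.abs_apply_drift_add_le x υ p u

theorem abs_hamiltonian_sub_le [Nonempty U] (h : IsControlField M K b r) (x y : E)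
    (p p' : E →L[ℝ] ℝ) (u u' : ℝ) :
    |hamiltonian b r y p u - hamiltonian b r x p' u'| ≤
      M * (‖p - p'‖ + |u - u'|) + K * ‖y - x‖ * (‖p'‖ + |u'|) := by
  refine abs_ciInf_sub_ciInf_le (h.bddBelow_range_apply_drift_add y p u) fun υ => ?_
  have drift : |p' (b y υ - b x υ)| ≤ ‖p'‖ * (K * ‖y - x‖) :=
    p'.le_opNorm_of_le (h.norm_drift_sub_le x y υ)
  have discount : |(r y υ - r x υ) * u'| ≤ K * ‖y - x‖ * |u'| := by
    rw [abs_mul]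
    gcongr
    exact h.abs_discount_sub_le x y υ
  calc |p (b y υ) + r y υ * u - (p' (b x υ) + r x υ * u')|
      = |((p - p') (b y υ) + r y υ * (u - u')) + p' (b y υ - b x υ) + (r y υ - r x υ) * u'| := by
        rw [sub_apply, map_sub]
        ring_nf
    _ ≤ M * (‖p - p'‖ + |u - u'|) + ‖p'‖ * (K * ‖y - x‖) + K * ‖y - x‖ * |u'| :=
        (abs_add_three _ _ _).trans
          (add_le_add_three (h.abs_apply_drift_add_le y υ _ _) drift discount)
    _ = M * (‖p - p'‖ + |u - u'|) + K * ‖y - x‖ * (‖p'‖ + |u'|) := by ring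

theorem tendsto_hamiltonian [Nonempty U] (h : IsControlField M K b r) (x : E) {ι : Type*}
    {l : Filter ι} {p : ι → E →L[ℝ] ℝ} {p' : E →L[ℝ] ℝ} {u : ι → ℝ} {u' : ℝ}
    (hp : Tendsto p l (𝓝 p')) (hu : Tendsto u l (𝓝 u')) :
    Tendsto (fun i => hamiltonian b r x (p i) (u i)) l (𝓝 (hamiltonian b r x p' u')) := by
  refine tendsto_iff_norm_sub_tendsto_zero.2 (squeeze_zero (fun _ => norm_nonneg _)
    (fun i => h.abs_hamiltonian_sub_le x x (p i) p' (u i) u') ?_)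
  simpa using ((tendsto_iff_norm_sub_tendsto_zero.1 hp).add
    (tendsto_iff_norm_sub_tendsto_zero.1 hu)).const_mul M

theorem abs_discreteHamiltonian_term_le (h : IsControlField M K b r) (hε : 0 < ε) {u : E → ℝ}
    {B : ℝ} (hu : ∀ x, |u x| ≤ B) (x : E) (υ : U) :
    |(M + r x υ) * u x + u (x + ε • b x υ) / ε| ≤ (M + 1 / ε) * B := by
  have coeff_nonneg : 0 ≤ M + r x υ := by linarith [h.neg_le_discount x υ]
  have coeff_le : M + r x υ ≤ M := by linarith [h.discount_nonpos x υ]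
  calc |(M + r x υ) * u x + u (x + ε • b x υ) / ε|
      ≤ (M + r x υ) * |u x| + |u (x + ε • b x υ)| / ε := by
        refine (abs_add_le _ _).trans_eq ?_
        rw [abs_mul, abs_div, abs_of_pos hε, abs_of_nonneg coeff_nonneg]
    _ ≤ M * B + B / ε :=
        add_le_add (mul_le_mul coeff_le (hu x) (abs_nonneg _) (coeff_nonneg.trans coeff_le))
          (div_le_div_of_nonneg_right (hu _) hε.le)
    _ = (M + 1 / ε) * B := by ring

variable [Nonempty U]

theorem abs_discreteHamiltonian_le (h : IsControlField M K b r) (hε : 0 < ε) {u : E → ℝ} {B : ℝ}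
    (hu : ∀ x, |u x| ≤ B) (x : E) : |discreteHamiltonian M ε b r u x| ≤ (M + 1 / ε) * B :=
  abs_ciInf_le fun υ => h.abs_discreteHamiltonian_term_le hε hu x υ

theorem abs_discreteHamiltonian_sub_le (h : IsControlField M K b r) (hε : 0 < ε) {u w : E → ℝ}
    {A B : ℝ} (hu : ∀ x, |u x| ≤ A) (hw : ∀ x, |u x - w x| ≤ B) (x : E) :
    |discreteHamiltonian M ε b r u x - discreteHamiltonian M ε b r w x| ≤ (M + 1 / ε) * B := by
  refine abs_ciInf_sub_ciInf_le
    (bddBelow_range_of_abs_le fun υ => h.abs_discreteHamiltonian_term_le hε hu x υ) fun υ => ?_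
  convert h.abs_discreteHamiltonian_term_le hε (u := fun x => u x - w x) hw x υ using 2
  ring

theorem holderNormLE_discreteHamiltonian (h : IsControlField M K b r) (hε : 0 < ε) {J : Jet E}
    {m : ℝ} (hval : ∀ x, |J.val x| ≤ m) (hgrad : ∀ x, ‖J.grad x‖ ≤ m) :
    HolderNormLE ((3 * (M + 1 / ε) + 2 * K) * m) (discreteHamiltonian M ε b r J.val) := by
  have M0 := h.nonneg
  have m0 : 0 ≤ m := (abs_nonneg _).trans (hval 0)
  have bound := h.abs_discreteHamiltonian_le hε hval
  refine ⟨fun x => (bound x).trans ?_, fun x y => (norm_sub_le_mul_sqrt_of_norm_le bound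
    (B := (M + 1 / ε + 2 * K) * m) (fun hyx => ?_) (by positivity)).trans_eq (by ring)⟩
  · have : 0 ≤ 1 / ε := by positivity
    exact mul_le_mul_of_nonneg_right (by linarith [K.2]) m0
  refine le_trans (abs_ciInf_sub_ciInf_le (bddBelow_range_of_abs_le fun υ =>
    h.abs_discreteHamiltonian_term_le hε hval y υ) fun υ => ?_)
    (mul_le_mul_of_nonneg_left (le_sqrt_self_of_le_one (norm_nonneg _) hyx) (by positivity))
  have step_sub : ‖y + ε • b y υ - (x + ε • b x υ)‖ ≤ (1 + ε * K) * ‖y - x‖ :=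
    calc ‖y + ε • b y υ - (x + ε • b x υ)‖ = ‖(y - x) + ε • (b y υ - b x υ)‖ := by
          rw [smul_sub, add_sub_add_comm]
      _ ≤ ‖y - x‖ + ε * (K * ‖y - x‖) := by
          refine (norm_add_le _ _).trans (add_le_add le_rfl ?_)
          rw [norm_smul, Real.norm_of_nonneg hε.le]
          exact mul_le_mul_of_nonneg_left (h.norm_drift_sub_le x y υ) hε.le
      _ = (1 + ε * K) * ‖y - x‖ := by ring
  calc |(M + r y υ) * J.val y + J.val (y + ε • b y υ) / ε
        - ((M + r x υ) * J.val x + J.val (x + ε • b x υ) / ε)|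
      = |(M + r y υ) * (J.val y - J.val x) + (r y υ - r x υ) * J.val x
          + (J.val (y + ε • b y υ) - J.val (x + ε • b x υ)) / ε| := by ring_nf
    _ ≤ M * (m * ‖y - x‖) + (K * ‖y - x‖) * m + m * ((1 + ε * K) * ‖y - x‖) / ε := by
        refine (abs_add_three _ _ _).trans (add_le_add_three ?_ ?_ ?_)
        · rw [abs_mul, abs_of_nonneg (by linarith [h.neg_le_discount y υ])]
          exact mul_le_mul (by linarith [h.discount_nonpos y υ]) (J.abs_val_sub_le hgrad x y)
            (abs_nonneg _) M0
        · rw [abs_mul]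
          exact mul_le_mul (h.abs_discount_sub_le x y υ) (hval x) (abs_nonneg _) (by positivity)
        · rw [abs_div, abs_of_pos hε]
          gcongr
          exact (J.abs_val_sub_le hgrad _ _).trans (by gcongr)
    _ = (M + 1 / ε + 2 * K) * m * ‖y - x‖ := by field_simp; ring

theorem abs_discreteHamiltonian_sub_linear_le (h : IsControlField M K b r) (hε : 0 < ε) {J : Jet E}
    {m : ℝ} (hval : ∀ x, |J.val x| ≤ m) (hgrad : ∀ x, ‖J.grad x‖ ≤ m) (hhess : ∀ x, ‖J.hess x‖ ≤ m)
    (x y : E) :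
    |discreteHamiltonian M ε b r J.val y - discreteHamiltonian M ε b r J.val x -
      (M + 1 / ε) * (J.val y - J.val x)| ≤ 2 * (M + K) * m * ‖y - x‖ := by
  have M0 := h.nonneg
  have m0 : 0 ≤ m := (abs_nonneg _).trans (hval 0)
  refine abs_ciInf_sub_ciInf_sub_le (bddBelow_range_of_abs_le fun υ =>
    h.abs_discreteHamiltonian_term_le hε hval y υ) _ fun υ => ?_
  set k := ε • b y υ
  have k_le : ‖k‖ ≤ ε * M := by
    rw [norm_smul, Real.norm_of_nonneg hε.le]
    exact mul_le_mul_of_nonneg_left (h.norm_drift_le y υ) hε.le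
  have parallel : |(J.val (y + k) - J.val y) - (J.val (x + k) - J.val x)| ≤
      m * (ε * M) * ‖y - x‖ :=
    (J.diff k).abs_val_sub_le (fun z => by
      simpa only [Jet.diff_grad, add_sub_cancel_left] using
        (J.norm_grad_sub_le hhess z (z + k)).trans
          (by simpa using mul_le_mul_of_nonneg_left k_le m0)) x y
  have shift : |J.val (x + k) - J.val (x + ε • b x υ)| ≤ m * (ε * (K * ‖y - x‖)) := by
    refine (J.abs_val_sub_le hgrad _ _).trans (mul_le_mul_of_nonneg_left ?_ m0)
    rw [add_sub_add_left_eq_sub, ← smul_sub, norm_smul, Real.norm_of_nonneg hε.le]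
    exact mul_le_mul_of_nonneg_left (h.norm_drift_sub_le x y υ) hε.le
  calc |(M + r y υ) * J.val y + J.val (y + k) / ε
        - ((M + r x υ) * J.val x + J.val (x + ε • b x υ) / ε) - (M + 1 / ε) * (J.val y - J.val x)|
      = |r y υ * (J.val y - J.val x) + (r y υ - r x υ) * J.val x
          + (((J.val (y + k) - J.val y) - (J.val (x + k) - J.val x))
            + (J.val (x + k) - J.val (x + ε • b x υ))) / ε| := by ring_nf
    _ ≤ M * (m * ‖y - x‖) + (K * ‖y - x‖) * m
          + (m * (ε * M) * ‖y - x‖ + m * (ε * (K * ‖y - x‖))) / ε := by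
        refine (abs_add_three _ _ _).trans (add_le_add_three ?_ ?_ ?_)
        · rw [abs_mul]
          exact mul_le_mul (h.abs_discount_le y υ) (J.abs_val_sub_le hgrad x y) (abs_nonneg _) M0
        · rw [abs_mul]
          exact mul_le_mul (h.abs_discount_sub_le x y υ) (hval x) (abs_nonneg _) (by positivity)
        · rw [abs_div, abs_of_pos hε]
          gcongr
          exact (abs_add_le _ _).trans (add_le_add parallel shift)
    _ = 2 * (M + K) * m * ‖y - x‖ := by field_simp; ring

theorem abs_discreteHamiltonian_sub_hamiltonian_sub_le (h : IsControlField M K b r) (hε : 0 < ε)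
    {J : Jet E} {m : ℝ} (hval : ∀ x, |J.val x| ≤ m) (hhess : ∀ x, ‖J.hess x‖ ≤ m) (x : E) :
    |discreteHamiltonian M ε b r J.val x - hamiltonian b r x (J.grad x) (J.val x) -
      (M + 1 / ε) * J.val x| ≤ ε * (M ^ 2 * m) := by
  have m0 : 0 ≤ m := (abs_nonneg _).trans (hval 0)
  refine abs_ciInf_sub_ciInf_sub_le (bddBelow_range_of_abs_le fun υ =>
    h.abs_discreteHamiltonian_term_le hε hval x υ) _ fun υ => ?_
  have taylor := J.abs_val_sub_linear_le hhess x (x + ε • b x υ)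
  rw [add_sub_cancel_left, map_smul, norm_smul, Real.norm_of_nonneg hε.le, smul_eq_mul] at taylor
  calc |(M + r x υ) * J.val x + J.val (x + ε • b x υ) / ε - (J.grad x (b x υ) + r x υ * J.val x)
        - (M + 1 / ε) * J.val x|
      = |(J.val (x + ε • b x υ) - J.val x - ε * J.grad x (b x υ)) / ε| := by
        congr 1
        field_simp
        ring
    _ ≤ m * (ε * M) ^ 2 / ε := by
        rw [abs_div, abs_of_pos hε]
        gcongr
        exact taylor.trans (by gcongr; exact h.norm_drift_le x υ)
    _ = ε * (M ^ 2 * m) := by field_simp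

end IsControlField

end Hamiltonian

section MonotoneIteration

variable {E : Type*} [NormedAddCommGroup E] [InnerProductSpace ℝ E] [FiniteDimensional ℝ E]
  {a : E → (E →L[ℝ] E →L[ℝ] ℝ) →L[ℝ] ℝ} {C A Λ κ : ℝ} {f : E → ℝ} {P : (E → ℝ) → E → ℝ}
  {S : ℕ → Jet E}

theorem abs_val_sub_val_succ_le_of_iteration (ha : ∀ x, IsElliptic C (a x)) (hΛ : 0 < Λ)
    (hκ : 0 ≤ κ) (hP : ∀ ⦃v w : E → ℝ⦄ ⦃A B : ℝ⦄, (∀ x, |v x| ≤ A) → (∀ x, |v x - w x| ≤ B) →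
      ∀ x, |P v x - P w x| ≤ κ * B)
    (hS : ∀ n, (S n).HolderNormLE A)
    (h : ∀ n x, a x ((S (n + 1)).hess x) - (Λ + κ) * (S (n + 1)).val x = f x - P (S n).val x)
    (n : ℕ) (x : E) : |(S n).val x - (S (n + 1)).val x| ≤ 2 * A * (κ / (Λ + κ)) ^ n := by
  induction n generalizing x with
  | zero =>
    rw [pow_zero, mul_one, two_mul]
    exact ((hS 0).sub (hS 1)).abs_val_le x
  | succ n ih =>
    refine (abs_val_le_div_of_apply_hess_sub_eq (Λ := Λ + κ) ha (by positivity)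
      ((hS (n + 1)).sub (hS (n + 1 + 1))).abs_val_le
      (g := fun x => P (S (n + 1)).val x - P (S n).val x)
      (fun x => (abs_sub_comm _ _).trans_le (hP (hS n).abs_val_le ih x)) (fun x => ?_) x).trans_eq
      (by ring)
    simp only [Jet.hess_sub, Jet.val_sub, map_sub]
    linarith [h n x, h (n + 1) x]

theorem exists_tendsto_of_iteration (ha : ∀ x, IsElliptic C (a x)) (hΛ : 0 < Λ)
    (hκ : 0 ≤ κ) (hP : ∀ ⦃v w : E → ℝ⦄ ⦃A B : ℝ⦄, (∀ x, |v x| ≤ A) → (∀ x, |v x - w x| ≤ B) →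
      ∀ x, |P v x - P w x| ≤ κ * B)
    (hS : ∀ n, (S n).HolderNormLE A)
    (h : ∀ n x, a x ((S (n + 1)).hess x) - (Λ + κ) * (S (n + 1)).val x = f x - P (S n).val x) :
    ∃ V : Jet E, V.HolderNormLE A ∧ (∀ x, Tendsto (fun n => (S n).val x) atTop (𝓝 (V.val x))) ∧
      ∀ x, a x (V.hess x) - (Λ + κ) * V.val x = f x - P V.val x := by
  set θ := κ / (Λ + κ)
  have θ_nonneg : 0 ≤ θ := by positivity
  have θ_lt_one : θ < 1 := (div_lt_one (by positivity)).2 (by linarith)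
  have geometric (x : E) (n : ℕ) : dist ((S n).val x) ((S (n + 1)).val x) ≤ 2 * A * θ ^ n :=
    abs_val_sub_val_succ_le_of_iteration ha hΛ hκ hP hS h n x
  let 𝒰 : Ultrafilter ℕ := hyperfilter ℕ
  have 𝒰_le : (𝒰 : Filter ℕ) ≤ atTop := Nat.hyperfilter_le_atTop
  obtain ⟨V, hV, lim⟩ := Jet.exists_tendstoAt_of_eventually_holderNormLE 𝒰
    (Eventually.of_forall fun n => hS (n + 1))
  have tendsto_val (x : E) : Tendsto (fun n => (S n).val x) atTop (𝓝 (V.val x)) := by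
    obtain ⟨l, hl⟩ := cauchySeq_tendsto_of_complete
      (cauchySeq_of_le_geometric θ (2 * A) θ_lt_one (geometric x))
    have shifted := (hl.comp (tendsto_add_atTop_nat 1)).mono_left 𝒰_le
    rwa [tendsto_nhds_unique (lim x).val shifted]
  refine ⟨V, hV, tendsto_val, fun x => ?_⟩
  have lhs : Tendsto (fun n => f x - P (S n).val x) 𝒰
      (𝓝 (a x (V.hess x) - (Λ + κ) * V.val x)) := by
    simpa only [← h, Function.comp_def] using
      (((a x).continuous.tendsto _).comp (lim x).hess).sub ((lim x).val.const_mul (Λ + κ))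
  have P_tendsto : Tendsto (fun n => P (S n).val x) 𝒰 (𝓝 (P V.val x)) := by
    rw [tendsto_iff_norm_sub_tendsto_zero]
    refine squeeze_zero (fun _ => norm_nonneg _) (fun n => hP (hS n).abs_val_le (fun y =>
      dist_le_of_le_geometric_of_tendsto θ (2 * A) θ_lt_one (geometric y) (tendsto_val y) n) x) ?_
    have pow_tendsto := (tendsto_pow_atTop_nhds_zero_of_lt_one θ_nonneg θ_lt_one).mono_left 𝒰_le
    simpa using ((pow_tendsto.const_mul (2 * A)).div_const (1 - θ)).const_mul κ
  exact tendsto_nhds_unique lhs (P_tendsto.const_sub _)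

end MonotoneIteration

section SemilinearEquation

open scoped NNReal

variable {E : Type*} [NormedAddCommGroup E] [InnerProductSpace ℝ E] [FiniteDimensional ℝ E]
  {U : Type*} [Nonempty U] {a : E → (E →L[ℝ] E →L[ℝ] ℝ) →L[ℝ] ℝ} {b : E → U → E} {r : E → U → ℝ}
  {C M F Λ ε : ℝ} {K : ℝ≥0} {f : E → ℝ}

/-- By interpolation the first-order terms of `v` cost only a small multiple of its `C^{2,1/2}`
norm, which the Schauder estimate for `w` can absorb. -/
theorem exists_holderNormLE_of_discrete_equation (ha : IsEllipticField C K a)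
    (h : IsControlField M K b r) (hΛ : 0 < Λ) (hf : HolderNormLE F f) (hε : 0 < ε) :
    ∃ A ≥ 0, ∀ v : Jet E, v.HolderNormLE A → (∀ x, |v.val x| ≤ F / Λ) →
      ∃ w : Jet E, w.HolderNormLE A ∧ (∀ x, |w.val x| ≤ F / Λ) ∧
        ∀ x, a x (w.hess x) - (Λ + (M + 1 / ε)) * w.val x =
          f x - discreteHamiltonian M ε b r v.val x := by
  have M0 := h.nonneg
  have F0 := hf.nonneg
  have sum_pos : 0 < Λ + (M + 1 / ε) := by positivity
  obtain ⟨C₀, C₀_pos, schauder⟩ := exists_global_schauder_estimate E C K sum_pos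
  set c := 3 * (M + 1 / ε) + 2 * K
  have c_pos : 0 < c := by positivity
  set σ := min (1 / 2) (1 / (4 * (C₀ * c)))
  have σ_pos : 0 < σ := by positivity
  have σ_le_half : σ ≤ 1 / 2 := min_le_left _ _
  have absorb : C₀ * c * (2 * σ) ≤ 1 / 2 :=
    calc C₀ * c * (2 * σ) ≤ C₀ * c * (2 * (1 / (4 * (C₀ * c)))) := by
          gcongr
          exact min_le_right _ _
      _ = 1 / 2 := by field_simp; norm_num
  set A := 2 * (C₀ * (F + c * (4 * (F / Λ) / (σ ^ 2) ^ 2)))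
  have A0 : 0 ≤ A := by positivity
  refine ⟨A, A0, fun v hv v_le => ?_⟩
  have interpolation := (Jet.isBoundedC2_of_isHolder isWeight_one A0
    (hv.isBoundedC2Holder isWeight_one).holder (fun x _ => v_le x) (by positivity)
    (sq_pos_of_pos σ_pos) (by nlinarith)).of_one
  rw [Real.sqrt_sq σ_pos.le] at interpolation
  have rhs_holder := hf.sub (h.holderNormLE_discreteHamiltonian hε
    (fun x => (interpolation x).1) fun x => (interpolation x).2.1)
  obtain ⟨w, ⟨B, hw⟩, eq⟩ := ha.isSolvable sum_pos rhs_holder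
  refine ⟨w, (schauder ha hw rhs_holder eq).mono ?_, fun x => ?_, eq⟩
  · have := mul_le_mul_of_nonneg_right absorb A0
    linarith
  · refine (abs_val_le_div_of_apply_hess_sub_eq ha.isElliptic sum_pos hw.abs_val_le
      (fun x => (abs_sub _ _).trans (add_le_add (hf.norm_le x)
        (h.abs_discreteHamiltonian_le hε v_le x))) eq x).trans_eq ?_
    field_simp

theorem exists_solution_discrete_equation (ha : IsEllipticField C K a)
    (h : IsControlField M K b r) (hΛ : 0 < Λ) (hf : HolderNormLE F f) (hε : 0 < ε) :
    ∃ J : Jet E, (∃ A, J.HolderNormLE A) ∧ (∀ x, |J.val x| ≤ F / Λ) ∧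
      ∀ x, a x (J.hess x) - (Λ + (M + 1 / ε)) * J.val x =
        f x - discreteHamiltonian M ε b r J.val x := by
  have M0 := h.nonneg
  obtain ⟨A, A0, step⟩ := exists_holderNormLE_of_discrete_equation ha h hΛ hf hε
  have start : (0 : Jet E).HolderNormLE A ∧ ∀ x, |(0 : Jet E).val x| ≤ F / Λ :=
    ⟨.zero A0, fun x => by simpa using div_nonneg hf.nonneg hΛ.le⟩
  choose! T T_holder T_le T_eq using step
  set S : ℕ → Jet E := fun n => T^[n] 0
  have S_succ (n : ℕ) : S (n + 1) = T (S n) := Function.iterate_succ_apply' T n 0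
  have bounds (n : ℕ) : (S n).HolderNormLE A ∧ ∀ x, |(S n).val x| ≤ F / Λ := by
    induction n with
    | zero => exact start
    | succ n ih => rw [S_succ]; exact ⟨T_holder _ ih.1 ih.2, T_le _ ih.1 ih.2⟩
  obtain ⟨V, hV, lim, eq⟩ := exists_tendsto_of_iteration ha.isElliptic hΛ (by positivity)
    (fun _ _ _ _ hv hvw => h.abs_discreteHamiltonian_sub_le hε hv hvw) (fun n => (bounds n).1)
    fun n x => by rw [S_succ]; exact T_eq _ (bounds n).1 (bounds n).2 x
  exact ⟨V, ⟨A, hV⟩, fun x => le_of_tendsto' (lim x).abs fun n => (bounds n).2 x, eq⟩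

theorem exists_holderNormLE_discrete_solution (ha : IsEllipticField C K a)
    (h : IsControlField M K b r) (hΛ : 0 < Λ) (hf : HolderNormLE F f) :
    ∃ A, ∀ ⦃ε⦄, 0 < ε → ∃ J : Jet E, J.HolderNormLE A ∧ (∀ x, |J.val x| ≤ F / Λ) ∧
      ∀ x, a x (J.hess x) - (Λ + (M + 1 / ε)) * J.val x =
        f x - discreteHamiltonian M ε b r J.val x := by
  have M0 := h.nonneg
  have F0 := hf.nonneg
  obtain ⟨C₀, -, schauder⟩ :=
    exists_schauder_estimate E C K (B := 1 + Λ + 2 * (M + K)) (by positivity)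
  refine ⟨3 * (C₀ * (F / Λ + F)), fun ε hε => ?_⟩
  obtain ⟨J, ⟨A, hJ⟩, J_le, eq⟩ := exists_solution_discrete_equation ha h hΛ hf hε
  refine ⟨J, (schauder ha isWeight_one (by positivity) F0 (hJ.isBoundedC2Holder isWeight_one)
    (fun x _ => J_le x) fun m hm x y t _ ht hyx => ?_).holderNormLE, J_le, eq⟩
  have bounds := hm.of_one
  have m0 : 0 ≤ m := (abs_nonneg _).trans (bounds 0).1
  simp only [Pi.one_apply, mul_one, one_pow, one_mul] at hyx ⊢
  have le_sqrt : ‖y - x‖ ≤ √t := by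
    have := (norm_nonneg _).trans hyx
    exact hyx.trans (le_sqrt_self_of_le_one this (by linarith))
  have hamiltonian_sub := h.abs_discreteHamiltonian_sub_linear_le hε
    (fun x => (bounds x).1) (fun x => (bounds x).2.1) (fun x => (bounds x).2.2) x y
  have := mul_nonneg (mul_nonneg (by positivity : 0 ≤ Λ + 2 * (M + K)) F0) (Real.sqrt_nonneg t)
  have := mul_nonneg m0 (Real.sqrt_nonneg t)
  set ΔH := discreteHamiltonian M ε b r J.val y - discreteHamiltonian M ε b r J.val x -
    (M + 1 / ε) * (J.val y - J.val x) with ΔH_eq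
  calc ‖a y (J.hess y) - a x (J.hess x)‖
      = |(f y - f x) + Λ * (J.val y - J.val x) + -ΔH| := by
        rw [Real.norm_eq_abs, ΔH_eq]
        congr 1
        linarith [eq x, eq y]
    _ ≤ F * √t + Λ * (m * √t) + 2 * (M + K) * m * √t := by
        refine (abs_add_three _ _ _).trans (add_le_add_three ?_ ?_ ?_)
        · exact (hf.norm_sub_le x y).trans (by gcongr)
        · rw [abs_mul, abs_of_pos hΛ]
          gcongr
          exact (J.abs_val_sub_le (fun x => (bounds x).2.1) x y).trans (by gcongr)
        · rw [abs_neg]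
          exact hamiltonian_sub.trans (by gcongr)
    _ ≤ (1 + Λ + 2 * (M + K)) * (m + F) * √t := by linarith

theorem exists_solution_semilinear_equation (ha : IsEllipticField C K a)
    (h : IsControlField M K b r) (hΛ : 0 < Λ) (hf : HolderNormLE F f) :
    ∃ J : Jet E, (∃ A, J.HolderNormLE A) ∧ (∀ x, |J.val x| ≤ F / Λ) ∧
      ∀ x, a x (J.hess x) + hamiltonian b r x (J.grad x) (J.val x) - Λ * J.val x = f x := by
  obtain ⟨A, hA⟩ := exists_holderNormLE_discrete_solution ha h hΛ hf
  have step_pos (k : ℕ) : (0 : ℝ) < 1 / (k + 1) := by positivity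
  choose S S_holder S_le eq using fun k => hA (step_pos k)
  let 𝒰 : Ultrafilter ℕ := hyperfilter ℕ
  obtain ⟨V, hV, lim⟩ :=
    Jet.exists_tendstoAt_of_eventually_holderNormLE 𝒰 (Eventually.of_forall S_holder)
  refine ⟨V, ⟨A, hV⟩, fun x => le_of_tendsto' (lim x).val.abs fun k => S_le k x, fun x => ?_⟩
  have lhs_tendsto := ((((a x).continuous.tendsto _).comp (lim x).hess).add
    (h.tendsto_hamiltonian x (lim x).grad (lim x).val)).sub ((lim x).val.const_mul Λ)
  have error_tendsto : Tendsto (fun k : ℕ => 1 / ((k : ℝ) + 1) * (M ^ 2 * A)) 𝒰 (𝓝 0) := by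
    simpa only [zero_mul] using (tendsto_one_div_add_atTop_nhds_zero_nat.mono_left
      Nat.hyperfilter_le_atTop).mul_const (M ^ 2 * A)
  refine tendsto_nhds_unique lhs_tendsto (tendsto_iff_norm_sub_tendsto_zero.2
    (squeeze_zero (fun _ => norm_nonneg _) (fun k => ?_) error_tendsto))
  rw [Real.norm_eq_abs, ← abs_neg]
  convert h.abs_discreteHamiltonian_sub_hamiltonian_sub_le (step_pos k) (S_holder k).abs_val_le
    (S_holder k).norm_hess_le x using 2
  simp only [Function.comp_apply]
  linarith [eq k x]

end SemilinearEquation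

section Barriers

variable {E : Type*} [NormedAddCommGroup E]

/-- The jet of the exponential barrier `x ↦ exp (P (x - c))`. -/
noncomputable def Jet.exp [NormedSpace ℝ E] (P : E →L[ℝ] ℝ) (c : E) : Jet E where
  val x := Real.exp (P (x - c))
  grad x := Real.exp (P (x - c)) • P
  hess x := Real.exp (P (x - c)) • P.smulRight P
  hasFDerivAt_val x := (P.hasFDerivAt.comp x ((hasFDerivAt_id x).sub_const c)).exp
  hasFDerivAt_grad x := by
    refine ((P.hasFDerivAt.comp x ((hasFDerivAt_id x).sub_const c)).exp.smul_const P).congr_fderiv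
      ?_
    ext v w
    simp [mul_assoc]

theorem IsElliptic.le_mul_apply_smulRight [InnerProductSpace ℝ E] {C γ A : ℝ}
    {L : (E →L[ℝ] E →L[ℝ] ℝ) →L[ℝ] ℝ} (hL : IsElliptic C L) {P : E →L[ℝ] ℝ} (hP : ‖P‖ = 1)
    (hγ : 0 ≤ γ) (hA : C * A ≤ γ) : A ≤ γ * L (P.smulRight P) :=
  calc A ≤ γ * C⁻¹ := by rwa [← div_eq_mul_inv, le_div_iff₀' hL.pos]
    _ ≤ γ * L (P.smulRight P) :=
        mul_le_mul_of_nonneg_left (by simpa [hP] using hL.le_apply_smulRight P) hγ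

theorem Jet.norm_grad_normSqSub [InnerProductSpace ℝ E] (x₀ x : E) :
    ‖(Jet.normSqSub x₀).grad x‖ = 2 * ‖x - x₀‖ := by
  rw [normSqSub_grad, norm_smul, Real.norm_ofNat, innerForm, innerSL_apply_norm]

variable [InnerProductSpace ℝ E] [ProperSpace E] {C M F ρ σ : ℝ}
  {a : E → (E →L[ℝ] E →L[ℝ] ℝ) →L[ℝ] ℝ} {c x : E} {u : E → ℝ} {p : E → E →L[ℝ] ℝ}
  {q : E → E →L[ℝ] E →L[ℝ] ℝ} {P : E →L[ℝ] ℝ}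

theorem add_exp_le_of_subsolution {k γ : ℝ} (hk : 0 ≤ k) (hγ : 0 ≤ γ) (hC : C * (M + 1) ≤ γ)
    (hF : F < k * γ * Real.exp (-(γ * ρ))) (hσ : 0 ≤ σ) (ha : ∀ x ∈ ball c ρ, IsElliptic C (a x))
    (hc : ContinuousOn u (closedBall c ρ)) (hu : ∀ x ∈ ball c ρ, HasFDerivAt u (p x) x)
    (hp : ∀ x ∈ ball c ρ, HasFDerivAt p (q x) x) (hb : ∀ x ∈ sphere c ρ, u x ≤ σ)
    (hsub : ∀ y ∈ ball c ρ, 0 < u y → -F - M * ‖p y‖ ≤ a y (q y)) (hP : ‖P‖ = 1)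
    (hx : x ∈ ball c ρ) :
    u x + k * Real.exp (γ * P (x - c)) ≤ σ + k * Real.exp (γ * ρ) := by
  have abs_le {z : E} (hz : z ∈ closedBall c ρ) : |P (z - c)| ≤ ρ :=
    (P.le_opNorm (z - c)).trans (by simpa [hP] using mem_closedBall_iff_norm.1 hz)
  set w := k • Jet.exp (γ • P) c
  have w_le {z : E} (hz : z ∈ closedBall c ρ) : w.val z ≤ k * Real.exp (γ * ρ) :=
    mul_le_mul_of_nonneg_left
      (Real.exp_le_exp.2 (mul_le_mul_of_nonneg_left (le_of_abs_le (abs_le hz)) hγ)) hk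
  by_contra! hlt
  obtain ⟨y, hy, hxy, grad_eq, hess_nonpos⟩ := exists_critical_point_of_lt_on_sphere
    (hc.add w.continuous_val.continuousOn) (fun z hz => (hu z hz).add (w.hasFDerivAt_val z))
    (fun z hz => (hp z hz).add (w.hasFDerivAt_grad z)) hx fun z hz =>
      (add_le_add (hb z hz) (w_le (sphere_subset_closedBall hz))).trans_lt hlt
  have hy' := ball_subset_closedBall hy
  have u_pos : 0 < u y := by
    have : σ + k * Real.exp (γ * ρ) < u y + w.val y := hlt.trans_le hxy
    linarith [w_le hy']
  set s := k * γ * Real.exp (γ * P (y - c)) with s_eq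
  have s_nonneg : 0 ≤ s := by positivity
  have norm_p : ‖p y‖ = s := by
    have : w.grad y = s • P := by
      ext v
      simp [w, Jet.exp, s_eq]
      ring
    rw [eq_neg_of_add_eq_zero_left grad_eq, this, norm_neg, norm_smul, hP, mul_one,
      Real.norm_of_nonneg s_nonneg]
  have slope_gt : F < s := hF.trans_le <| mul_le_mul_of_nonneg_left (Real.exp_le_exp.2 <| by
    linarith [mul_le_mul_of_nonneg_left (neg_le_of_abs_le (abs_le hy')) hγ]) (by positivity)
  have slope_le : a y (q y) + s * (M + 1) ≤ 0 := by
    have hess_eq : w.hess y = (s * γ) • P.smulRight P := by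
      ext v z
      simp [w, Jet.exp, s_eq]
      ring
    have ellipticity :=
      mul_le_mul_of_nonneg_left ((ha y hy).le_mul_apply_smulRight hP hγ hC) s_nonneg
    have := (ha y hy).apply_nonpos _ hess_nonpos
    rw [map_add, hess_eq, map_smul, smul_eq_mul, mul_assoc] at this
    linarith
  have := hsub y hy u_pos
  rw [norm_p] at this
  linarith

theorem le_exp_barrier_of_subsolution (hM : 0 ≤ M) (hF : 0 < F) (hσ : 0 ≤ σ)
    (ha : ∀ x ∈ ball c ρ, IsElliptic C (a x)) (hc : ContinuousOn u (closedBall c ρ))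
    (hu : ∀ x ∈ ball c ρ, HasFDerivAt u (p x) x) (hp : ∀ x ∈ ball c ρ, HasFDerivAt p (q x) x)
    (hb : ∀ x ∈ sphere c ρ, u x ≤ σ)
    (hsub : ∀ y ∈ ball c ρ, 0 < u y → -F - M * ‖p y‖ ≤ a y (q y)) (hP : ‖P‖ = 1)
    (hx : x ∈ ball c ρ) :
    u x ≤ σ + 2 * F * Real.exp (2 * (C * (M + 1)) * ρ) * (ρ - P (x - c)) := by
  have C_pos : 0 < C := (ha x hx).pos
  set γ := C * (M + 1) with γ_eq
  have γ_pos : 0 < γ := by positivity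
  set k := 2 * F * Real.exp (γ * ρ) / γ with k_eq
  have slope : k * γ * Real.exp (-(γ * ρ)) = 2 * F := by
    rw [k_eq, Real.exp_neg]
    field_simp
  have barrier := add_exp_le_of_subsolution (by positivity : 0 ≤ k) γ_pos.le γ_eq.ge
    (by linarith) hσ ha hc hu hp hb hsub hP hx
  have convexity : Real.exp (γ * ρ) - Real.exp (γ * P (x - c)) ≤
      γ * (ρ - P (x - c)) * Real.exp (γ * ρ) := by
    have := Real.add_one_le_exp (γ * P (x - c) - γ * ρ)
    rw [Real.exp_sub, le_div_iff₀ (Real.exp_pos _)] at this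
    linarith
  calc u x ≤ σ + k * (Real.exp (γ * ρ) - Real.exp (γ * P (x - c))) := by linarith
    _ ≤ σ + k * (γ * (ρ - P (x - c)) * Real.exp (γ * ρ)) := by gcongr
    _ = σ + 2 * F * Real.exp (2 * γ * ρ) * (ρ - P (x - c)) := by
        rw [show 2 * γ * ρ = γ * ρ + γ * ρ by ring, Real.exp_add, k_eq]
        field_simp

theorem Jet.val_le_div_of_discounted_subsolution {N m : ℝ} (hM : 0 ≤ M) (hF : 0 ≤ F) (hρ : 0 < ρ)
    (hm : 0 ≤ m) (hN : 0 < N) (ha : ∀ y ∈ ball x ρ, IsElliptic C (a y)) (J : Jet E)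
    (hJ : ∀ z, J.val z ≤ m) (hsub : ∀ y ∈ ball x ρ, 0 < J.val y →
      -F - M * ‖J.grad y‖ + N * J.val y ≤ a y (J.hess y)) :
    J.val x ≤ (F + 2 * M * m / ρ + 2 * m * C / ρ ^ 2) / N := by
  have hx : x ∈ ball x ρ := mem_ball_self hρ
  have C_pos : 0 < C := (ha x hx).pos
  rw [le_div_iff₀' hN]
  rcases le_or_gt (J.val x) 0 with val_nonpos | val_pos
  · exact (mul_nonpos_of_nonneg_of_nonpos hN.le val_nonpos).trans (by positivity)
  set s := m / ρ ^ 2 with s_eq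
  have s_nonneg : 0 ≤ s := by positivity
  set w := s • Jet.normSqSub x
  have w_val (z : E) : w.val z = s * ‖z - x‖ ^ 2 := by simp [w]
  obtain ⟨y, hy, hxy, grad_eq, hess_nonpos⟩ := (J - w).exists_critical_point_of_lt_on_sphere hx
    fun z hz => by
      have : w.val z = m := by
        rw [w_val, mem_sphere_iff_norm.1 hz, s_eq]
        field_simp
      rw [Jet.val_sub, Jet.val_sub, this, w_val x, sub_self, norm_zero]
      linarith [hJ z]
  have J_le : J.val x ≤ J.val y := by
    rw [Jet.val_sub, Jet.val_sub, w_val, w_val, sub_self, norm_zero] at hxy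
    have : 0 ≤ s * ‖y - x‖ ^ 2 := by positivity
    linarith
  have L_le := (ha y hy).apply_nonpos _ hess_nonpos
  have norm_grad : M * ‖J.grad y‖ ≤ 2 * M * m / ρ :=
    calc M * ‖J.grad y‖ = M * (s * (2 * ‖y - x‖)) := by
          rw [sub_eq_zero.1 grad_eq, Jet.grad_smul, norm_smul, Jet.norm_grad_normSqSub,
            Real.norm_of_nonneg s_nonneg]
      _ ≤ M * (s * (2 * ρ)) := by
          gcongr
          exact (mem_ball_iff_norm.1 hy).le
      _ = 2 * M * m / ρ := by
          rw [s_eq]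
          field_simp
  have hess_le : a y (w.hess y) ≤ 2 * m * C / ρ ^ 2 :=
    calc a y (w.hess y) = s * (2 * a y (innerForm E)) := by simp [w]
      _ ≤ s * (2 * C) := by
          gcongr
          exact (ha y hy).apply_innerForm_le
      _ = 2 * m * C / ρ ^ 2 := by
          rw [s_eq]
          ring
  rw [Jet.hess_sub, map_sub] at L_le
  linarith [hsub y hy (val_pos.trans_le J_le), mul_le_mul_of_nonneg_left J_le hN.le]

end Barriers

section Penalization

open scoped NNReal

variable {E : Type*} [NormedAddCommGroup E] {U : Type*} {M C F R κ : ℝ} {K N : ℝ≥0}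
  {b : E → U → E} {r : E → U → ℝ} {c x : E}

theorem IsWeight.of_lipschitzWith {g : E → ℝ} (hg : LipschitzWith 1 g) :
    IsWeight fun x => min 1 (max 0 (g x)) :=
  ⟨(hg.const_max 0).const_min 1, fun _ => le_min zero_le_one (le_max_left _ _),
    fun _ => min_le_left _ _⟩

/-- The distance to the ball of radius `R` around `c`, cut off at `1`: the density of the
penalization. -/
noncomputable def outerWeight (c : E) (R : ℝ) (x : E) : ℝ :=
  min 1 (max 0 (‖x - c‖ - R))

theorem isWeight_outerWeight (c : E) (R : ℝ) : IsWeight (outerWeight c R) :=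
  .of_lipschitzWith (LipschitzWith.of_dist_le_mul fun x y => by
    simpa [Real.dist_eq, dist_eq_norm] using abs_norm_sub_norm_le (x - c) (y - c))

theorem outerWeight_eq_zero (hx : x ∈ ball c R) : outerWeight c R x = 0 := by
  rw [outerWeight, max_eq_left (by linarith [mem_ball_iff_norm.1 hx]), min_eq_right zero_le_one]

theorem IsControlField.sub_mul_weight (h : IsControlField M K b r) {χ : E → ℝ} (hχ : IsWeight χ)
    (k : ℝ≥0) : IsControlField (M + k) (K + k) b fun x υ => r x υ - k * χ x where
  norm_drift_le x υ := (h.norm_drift_le x υ).trans (le_add_of_nonneg_right k.2)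
  neg_le_discount x υ := by
    linarith [h.neg_le_discount x υ, mul_le_of_le_one_right k.coe_nonneg (hχ.le_one x)]
  discount_nonpos x υ := by linarith [h.discount_nonpos x υ, mul_nonneg k.coe_nonneg (hχ.nonneg x)]
  lipschitz_drift υ := (h.lipschitz_drift υ).weaken le_self_add
  lipschitz_discount υ := (h.lipschitz_discount υ).sub <| by
    simpa [NNReal.nnnorm_eq, Function.comp_def] using (lipschitzWith_smul (k : ℝ)).comp hχ.lipschitz

section Hamiltonian

variable [NormedSpace ℝ E] [Nonempty U]

theorem IsControlField.hamiltonian_sub_discount (h : IsControlField M K b r) (k : E → ℝ) (x : E)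
    (p : E →L[ℝ] ℝ) (u : ℝ) :
    hamiltonian b (fun x υ => r x υ - k x) x p u = hamiltonian b r x p u - k x * u := by
  have := abs_ciInf_sub_ciInf_sub_le (δ := 0) (h.bddBelow_range_apply_drift_add x p u)
    (g := fun υ => p (b x υ) + (r x υ - k x) * u) (k x * u) fun υ => by
      rw [abs_nonpos_iff]
      ring
  rw [abs_nonpos_iff] at this
  unfold hamiltonian
  linarith

theorem IsControlField.hamiltonian_sub_le (h : IsControlField M K b r) (x : E) (p p' : E →L[ℝ] ℝ)
    {u u' : ℝ} (hu : u' ≤ u) :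
    hamiltonian b r x p u - hamiltonian b r x p' u' ≤ M * ‖p - p'‖ := by
  rw [sub_le_iff_le_add', ← sub_le_iff_le_add]
  refine le_ciInf fun υ => ?_
  have inf_le : hamiltonian b r x p u ≤ p (b x υ) + r x υ * u :=
    ciInf_le (h.bddBelow_range_apply_drift_add x p u) υ
  have apply_sub_le : (p - p') (b x υ) ≤ ‖p - p'‖ * M :=
    le_of_abs_le ((p - p').le_opNorm_of_le (h.norm_drift_le x υ))
  have := mul_le_mul_of_nonpos_left hu (h.discount_nonpos x υ)
  rw [sub_apply] at apply_sub_le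
  linarith

theorem IsControlField.hamiltonian_le (h : IsControlField M K b r) (x : E) (p : E →L[ℝ] ℝ) {u : ℝ}
    (hu : 0 ≤ u) : hamiltonian b r x p u ≤ M * ‖p‖ := by
  simpa [hamiltonian] using h.hamiltonian_sub_le x p 0 hu

theorem IsControlField.le_hamiltonian (h : IsControlField M K b r) (x : E) (p : E →L[ℝ] ℝ) {u : ℝ}
    (hu : u ≤ 0) : -(M * ‖p‖) ≤ hamiltonian b r x p u := by
  simpa [hamiltonian, neg_le] using h.hamiltonian_sub_le x 0 p hu

end Hamiltonian

variable [InnerProductSpace ℝ E] {a : E → (E →L[ℝ] E →L[ℝ] ℝ) →L[ℝ] ℝ}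
  {V : Jet E}

theorem Jet.val_le_of_penalized_subsolution_of_le_norm [ProperSpace E] (hM : 0 ≤ M) (hF : 0 ≤ F)
    (hκ : 0 < κ) (hκ1 : κ ≤ 1) (hN : 1 ≤ N) (ha : ∀ x, IsElliptic C (a x))
    (hV : ∀ x, V.val x ≤ N * F)
    (hsub : ∀ y, 0 < V.val y →
      -F - M * ‖V.grad y‖ + N ^ 2 * outerWeight c R y * V.val y ≤ a y (V.hess y))
    (hx : R + 2 * κ ≤ ‖x - c‖) :
    V.val x ≤ (F + 2 * M * F / κ + 2 * F * C / κ ^ 2) / κ / N := by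
  have N_ge : 1 ≤ (N : ℝ) := hN
  have C_pos : 0 < C := (ha x).pos
  have barrier := V.val_le_div_of_discounted_subsolution (N := N ^ 2 * κ) (x := x) hM hF hκ
    (by positivity : 0 ≤ N * F) (by positivity) (fun y _ => ha y) hV fun y hy val_pos => by
      refine le_trans ?_ (hsub y val_pos)
      have : κ ≤ outerWeight c R y := by
        have := norm_sub_norm_le (x - c) (x - y)
        rw [sub_sub_sub_cancel_left, norm_sub_rev x y] at this
        exact le_min hκ1 (le_max_of_le_right (by linarith [mem_ball_iff_norm.1 hy]))
      gcongr
  refine barrier.trans ?_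
  calc (F + 2 * M * (N * F) / κ + 2 * (N * F) * C / κ ^ 2) / (N ^ 2 * κ)
      ≤ (N * F + 2 * M * (N * F) / κ + 2 * (N * F) * C / κ ^ 2) / (N ^ 2 * κ) := by
        gcongr
        exact le_mul_of_one_le_left hF N_ge
    _ = (F + 2 * M * F / κ + 2 * F * C / κ ^ 2) / κ / N := by field_simp

theorem Jet.val_le_of_penalized_subsolution [ProperSpace E] [Nontrivial E] (hM : 0 ≤ M)
    (hF : 0 < F) (hκ : 0 < κ) (hκ1 : 2 * κ ≤ 1) (hN : 1 ≤ N)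
    (ha : ∀ x, IsElliptic C (a x)) (hV : ∀ x, V.val x ≤ N * F)
    (hsub : ∀ y, 0 < V.val y →
      -F - M * ‖V.grad y‖ + N ^ 2 * outerWeight c R y * V.val y ≤ a y (V.hess y))
    (hx : x ∈ ball c (R + 2 * κ)) :
    V.val x ≤ (F + 2 * M * F / κ + 2 * F * C / κ ^ 2) / κ / N +
      2 * F * Real.exp (2 * (C * (M + 1)) * (R + 1)) * (R + 2 * κ - ‖x - c‖) := by
  have C_pos : 0 < C := (ha x).pos
  obtain ⟨P, norm_P, hP⟩ := exists_dual_vector' ℝ (x - c)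
  have barrier := le_exp_barrier_of_subsolution hM hF (by positivity) (fun y _ => ha y)
    V.continuous_val.continuousOn (fun y _ => V.hasFDerivAt_val y)
    (fun y _ => V.hasFDerivAt_grad y) (fun y hy => V.val_le_of_penalized_subsolution_of_le_norm hM
      hF.le hκ (by linarith) hN ha hV hsub (mem_sphere_iff_norm.1 hy).ge)
    (fun y _ val_pos => (hsub y val_pos).trans' ?_) norm_P hx
  · rw [hP, RCLike.ofReal_real_eq_id, id] at barrier
    refine barrier.trans ?_
    have := mem_ball_iff_norm.1 hx
    gcongr
  · exact le_add_of_nonneg_right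
      (mul_nonneg (mul_nonneg (sq_nonneg _) ((isWeight_outerWeight c R).nonneg y)) val_pos.le)

theorem exists_penalized_solution [FiniteDimensional ℝ E] [Nontrivial E] [Nonempty U]
    (ha : IsEllipticField C K a) (h : IsControlField M K b r) {f : E → ℝ} (hf : HolderNormLE F f)
    (hF : 0 < F) (c : E) (R : ℝ) (hN : 1 ≤ N) :
    ∃ J : Jet E, (∃ A, J.HolderNormLE A) ∧
      (∀ x ∈ ball c R,
        a x (J.hess x) + hamiltonian b r x (J.grad x) (J.val x) - 1 / N * J.val x = f x) ∧
      ∀ κ > 0, 2 * κ ≤ 1 → ∀ x ∈ ball c (R + 2 * κ),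
        |J.val x| ≤ (F + 2 * M * F / κ + 2 * F * C / κ ^ 2) / κ / N +
          2 * F * Real.exp (2 * (C * (M + 1)) * (R + 1)) * (R + 2 * κ - ‖x - c‖) := by
  have N_pos : 0 < (N : ℝ) := one_pos.trans_le hN
  have hχ := isWeight_outerWeight c R
  obtain ⟨J, hJ, J_le, eq⟩ := exists_solution_semilinear_equation (ha.mono le_rfl le_self_add)
    (h.sub_mul_weight hχ (N ^ 2)) (one_div_pos.2 N_pos) hf
  simp only [h.hamiltonian_sub_discount, NNReal.coe_pow, div_div_eq_mul_div, div_one,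
    mul_comm F] at eq J_le
  refine ⟨J, hJ, fun x hx => by simpa [outerWeight_eq_zero hx] using eq x,
    fun κ hκ hκ1 x hx => abs_le'.2 ⟨?_, ?_⟩⟩
  · refine J.val_le_of_penalized_subsolution h.nonneg hF hκ hκ1 hN ha.isElliptic
      (fun x => le_of_abs_le (J_le x)) (fun y val_pos => ?_) hx
    have : 0 ≤ 1 / N * J.val y := by positivity
    linarith [eq y, h.hamiltonian_le y (J.grad y) val_pos.le, neg_le_of_abs_le (hf.norm_le y)]
  · have : ((-1 : ℝ) • J).val x = -J.val x := by simp
    rw [← this]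
    refine Jet.val_le_of_penalized_subsolution h.nonneg hF hκ hκ1 hN ha.isElliptic
      (fun x => ?_) (fun y val_pos => ?_) hx
    · simpa using neg_le.1 (neg_le_of_abs_le (J_le x))
    · simp only [Jet.val_smul, Jet.grad_smul, Jet.hess_smul, neg_one_mul, map_smul,
        smul_eq_mul, norm_smul, norm_neg, norm_one, one_mul, Left.neg_pos_iff] at val_pos ⊢
      have : 0 ≤ 1 / N * -J.val y := mul_nonneg (by positivity) (neg_nonneg.2 val_pos.le)
      linarith [eq y, h.le_hamiltonian y (J.grad y) val_pos.le, le_of_abs_le (hf.norm_le y)]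

end Penalization

section InteriorEstimate

open scoped NNReal

variable {E : Type*} [NormedAddCommGroup E] [InnerProductSpace ℝ E] {U : Type*} [Nonempty U]
  {M F : ℝ} {K : ℝ≥0} {a : E → (E →L[ℝ] E →L[ℝ] ℝ) →L[ℝ] ℝ} {b : E → U → E} {r : E → U → ℝ}
  {f : E → ℝ} {J : Jet E}

theorem IsControlField.mul_abs_hamiltonian_sub_le (h : IsControlField M K b r) {δ : E → ℝ}
    (hδ : IsWeight δ) {m : ℝ} (hm : J.IsBoundedC2 δ m) {x y : E} (hx : 0 < δ x)
    (hyx : ‖y - x‖ ≤ δ x / 2) :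
    δ x ^ 2 * |hamiltonian b r y (J.grad y) (J.val y) - hamiltonian b r x (J.grad x) (J.val x)| ≤
      (6 * M + 2 * K) * m * ‖y - x‖ := by
  have M0 := h.nonneg
  have m0 : 0 ≤ m := (abs_nonneg _).trans (hm.val x hx)
  have δ_le := hδ.le_one x
  calc δ x ^ 2 *
        |hamiltonian b r y (J.grad y) (J.val y) - hamiltonian b r x (J.grad x) (J.val x)|
      ≤ δ x ^ 2 * (M * (4 * m / δ x ^ 2 * ‖y - x‖ + 2 * m / δ x * ‖y - x‖) +
          K * ‖y - x‖ * (m / δ x + m)) := by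
        refine mul_le_mul_of_nonneg_left
          ((h.abs_hamiltonian_sub_le x y _ _ _ _).trans ?_) (sq_nonneg _)
        have := hm.norm_grad_sub_le hδ hx hyx
        have := hm.abs_val_sub_le hδ hx hyx
        have := (le_div_iff₀' hx).2 (hm.grad x hx)
        have := hm.val x hx
        gcongr
    _ = (M * (4 * m + 2 * m * δ x) + K * (m * δ x + m * δ x ^ 2)) * ‖y - x‖ := by
        field_simp
    _ ≤ (M * (4 * m + 2 * m * 1) + K * (m * 1 + m * 1 ^ 2)) * ‖y - x‖ := by gcongr
    _ = (6 * M + 2 * K) * m * ‖y - x‖ := by ring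

theorem IsControlField.isHolder_apply_hess (h : IsControlField M K b r) (hf : HolderNormLE F f)
    {δ : E → ℝ} (hδ : IsWeight δ) {Λ m : ℝ} (hΛ : 0 ≤ Λ) (hΛ1 : Λ ≤ 1) (hm : J.IsBoundedC2 δ m)
    (eq : ∀ x, 0 < δ x →
      a x (J.hess x) + hamiltonian b r x (J.grad x) (J.val x) - Λ * J.val x = f x) :
    IsHolder δ ((3 + 6 * M + 2 * K) * (m + F)) fun x => a x (J.hess x) := by
  intro x y t hx ht hyx
  have M0 := h.nonneg
  have F0 := hf.nonneg
  have m0 : 0 ≤ m := (abs_nonneg _).trans (hm.val x hx)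
  have δ_le := hδ.le_one x
  have t0 : 0 ≤ t := nonneg_of_mul_nonneg_left ((norm_nonneg _).trans hyx) hx
  have dist_le : ‖y - x‖ ≤ t := hyx.trans (mul_le_of_le_one_right t0 δ_le)
  have dist_le_sqrt : ‖y - x‖ ≤ √t := dist_le.trans (le_sqrt_self_of_le_one t0 (by linarith))
  have dist_le_half : ‖y - x‖ ≤ δ x / 2 := hyx.trans (by nlinarith)
  have hy : 0 < δ y := (half_pos hx).trans_le (hδ.half_le dist_le_half)
  have rhs_sub : δ x ^ 2 * |f y - f x| ≤ F * √t := hf.isHolder hδ hx ht hyx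
  have val_sub : δ x ^ 2 * |J.val y - J.val x| ≤ 2 * m * ‖y - x‖ :=
    calc δ x ^ 2 * |J.val y - J.val x| ≤ δ x ^ 2 * (2 * m / δ x * ‖y - x‖) := by
          gcongr
          exact hm.abs_val_sub_le hδ hx dist_le_half
      _ = 2 * m * δ x * ‖y - x‖ := by field_simp
      _ ≤ 2 * m * 1 * ‖y - x‖ := by gcongr
      _ = 2 * m * ‖y - x‖ := by ring
  have hamiltonian_sub := h.mul_abs_hamiltonian_sub_le hδ hm hx dist_le_half
  set ΔH := hamiltonian b r y (J.grad y) (J.val y) - hamiltonian b r x (J.grad x) (J.val x)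
    with ΔH_eq
  calc δ x ^ 2 * ‖a y (J.hess y) - a x (J.hess x)‖
      = δ x ^ 2 * |(f y - f x) + -ΔH + Λ * (J.val y - J.val x)| := by
        rw [Real.norm_eq_abs, ← eq x hx, ← eq y hy, ΔH_eq]
        ring_nf
    _ ≤ δ x ^ 2 * (|f y - f x| + |ΔH| + 1 * |J.val y - J.val x|) := by
        refine mul_le_mul_of_nonneg_left ((abs_add_three _ _ _).trans ?_) (sq_nonneg _)
        rw [abs_neg, abs_mul, abs_of_nonneg hΛ]
        gcongr
    _ ≤ F * √t + ((6 * M + 2 * K) * m * √t + 2 * m * √t) := by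
        have := mul_le_mul_of_nonneg_left dist_le_sqrt
          (by positivity : 0 ≤ (6 * M + 2 * K) * m + 2 * m)
        linarith
    _ ≤ (3 + 6 * M + 2 * K) * (m + F) * √t := by
        have : 0 ≤ (m + 2 * F + 6 * M * F + 2 * (K * F)) * √t := by positivity
        linarith

theorem exists_interior_schauder_estimate (E : Type*) [NormedAddCommGroup E]
    [InnerProductSpace ℝ E] [FiniteDimensional ℝ E] (U : Type*) [Nonempty U] (C : ℝ) (K : ℝ≥0)
    {M : ℝ} (hM : 0 ≤ M) :
    ∃ C₀ > 0, ∀ ⦃a⦄, IsEllipticField C K a → ∀ ⦃b : E → U → E⦄ ⦃r : E → U → ℝ⦄,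
      IsControlField M K b r → ∀ ⦃δ : E → ℝ⦄, IsWeight δ → ∀ ⦃F : ℝ⦄ ⦃f : E → ℝ⦄, HolderNormLE F f →
      ∀ ⦃Λ : ℝ⦄, 0 ≤ Λ → Λ ≤ 1 → ∀ ⦃J : Jet E⦄ ⦃A V : ℝ⦄, J.HolderNormLE A → 0 ≤ V →
      (∀ x, 0 < δ x → |J.val x| ≤ V) →
      (∀ x, 0 < δ x →
        a x (J.hess x) + hamiltonian b r x (J.grad x) (J.val x) - Λ * J.val x = f x) →
      J.IsBoundedC2Holder δ (C₀ * (V + F)) := by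
  obtain ⟨C₀, C₀_pos, schauder⟩ :=
    exists_schauder_estimate E C K (B := 3 + 6 * M + 2 * K) (by positivity)
  exact ⟨C₀, C₀_pos, fun a ha b r h δ hδ F f hf Λ hΛ hΛ1 J A V hJ hV val_le eq =>
    schauder ha hδ hV hf.nonneg (hJ.isBoundedC2Holder hδ) val_le fun m hm =>
      h.isHolder_apply_hess hf hδ hΛ hΛ1 hm eq⟩

end InteriorEstimate

section WholeBall

open scoped NNReal

variable {E : Type*} [NormedAddCommGroup E]

/-- The distance to the complement of the ball of radius `R` around `c`, cut off at `1`: the weight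
of the interior estimates. -/
noncomputable def innerWeight (c : E) (R : ℝ) (x : E) : ℝ :=
  min 1 (max 0 (R - ‖x - c‖))

theorem isWeight_innerWeight (c : E) (R : ℝ) : IsWeight (innerWeight c R) :=
  .of_lipschitzWith (LipschitzWith.of_dist_le_mul fun x y => by
    simpa [Real.dist_eq, dist_eq_norm, norm_sub_rev y] using abs_norm_sub_norm_le (y - c) (x - c))

theorem innerWeight_pos_iff {c x : E} {R : ℝ} : 0 < innerWeight c R x ↔ x ∈ ball c R := by
  simp [innerWeight, dist_eq_norm]

variable [InnerProductSpace ℝ E]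

theorem Jet.eventuallyHolderAt_of_isBoundedC2Holder {ι : Type*} {l : Filter ι} {Js : ι → Jet E}
    {δ : E → ℝ} (hδ : IsWeight δ) {A : ℝ} (h : ∀ i, (Js i).IsBoundedC2Holder δ A) {x : E}
    (hx : 0 < δ x) : Jet.EventuallyHolderAt Js l x := by
  refine ⟨δ x / 2, half_pos hx, A / (δ x ^ 2 * √(δ x)), Eventually.of_forall fun i => ?_⟩
  have sqrt_pos := Real.sqrt_pos.2 hx
  have sqrt_le : √(δ x) ≤ 1 := Real.sqrt_le_one.2 (hδ.le_one x)
  have le_sq : δ x ^ 2 * √(δ x) ≤ δ x ^ 2 := mul_le_of_le_one_right (sq_nonneg _) sqrt_le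
  have sq_le : δ x ^ 2 ≤ δ x := by nlinarith [hδ.le_one x]
  simp only [div_mul_eq_mul_div]
  simp only [le_div_iff₀' (by positivity : 0 < δ x ^ 2 * √(δ x))]
  refine ⟨((h i).val x hx).trans' ?_, ((h i).grad x hx).trans' ?_, ((h i).hess x hx).trans' ?_,
    fun y hyx => ?_⟩
  · exact mul_le_of_le_one_left (abs_nonneg _) (le_sq.trans (sq_le.trans (hδ.le_one x)))
  · exact mul_le_mul_of_nonneg_right (le_sq.trans sq_le) (norm_nonneg _)
  · exact mul_le_mul_of_nonneg_right le_sq (norm_nonneg _)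
  · have := (h i).holder (t := ‖y - x‖ / δ x) hx ((div_le_iff₀ hx).2 (by linarith))
      (div_mul_cancel₀ _ hx.ne').ge
    rw [Real.sqrt_div (norm_nonneg _), ← mul_div_assoc, le_div_iff₀ sqrt_pos] at this
    linarith

variable [FiniteDimensional ℝ E] [Nontrivial E] {U : Type*} [Nonempty U] {C M F R : ℝ} {K : ℝ≥0}
  {a : E → (E →L[ℝ] E →L[ℝ] ℝ) →L[ℝ] ℝ} {b : E → U → E} {r : E → U → ℝ} {f : E → ℝ}

theorem exists_penalized_sequence (ha : IsEllipticField C K a) (h : IsControlField M K b r)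
    (hf : HolderNormLE F f) (hF : 0 < F) (c : E) (hR : 0 < R) :
    ∃ (Js : ℕ → Jet E) (A Q : ℝ), (∀ n, (Js n).IsBoundedC2Holder (innerWeight c R) A) ∧
      (∀ n, ∀ x ∈ ball c R, a x ((Js n).hess x) +
        hamiltonian b r x ((Js n).grad x) ((Js n).val x) - 1 / (n + 1) * (Js n).val x = f x) ∧
      ∀ κ > 0, 2 * κ ≤ 1 → ∃ D, ∀ n, ∀ x ∈ ball c R,
        |(Js n).val x| ≤ D * (1 / (n + 1)) + Q * (R + 2 * κ - ‖x - c‖) := by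
  have M0 := h.nonneg
  have C_pos : 0 < C := (ha.isElliptic c).pos
  have one_le (n : ℕ) : (1 : ℝ≥0) ≤ n + 1 := le_add_of_nonneg_left n.cast_nonneg
  choose Js Js_holder eq val_le using fun n => exists_penalized_solution ha h hf hF c R (one_le n)
  push_cast at eq val_le
  set D : ℝ → ℝ := fun κ => (F + 2 * M * F / κ + 2 * F * C / κ ^ 2) / κ
  set Q := 2 * F * Real.exp (2 * (C * (M + 1)) * (R + 1))
  set V := D (1 / 2) + Q * (R + 1)
  obtain ⟨C₀, -, interior⟩ := exists_interior_schauder_estimate E U C K M0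
  have one_div_le (n : ℕ) : 1 / ((n : ℝ) + 1) ≤ 1 :=
    (div_le_one (by positivity)).2 (le_add_of_nonneg_left n.cast_nonneg)
  have val_le_of_mem (κ : ℝ) (hκ : 0 < κ) (hκ1 : 2 * κ ≤ 1) (n : ℕ) (x : E) (hx : x ∈ ball c R) :
      |(Js n).val x| ≤ D κ * (1 / (n + 1)) + Q * (R + 2 * κ - ‖x - c‖) := by
    simpa only [mul_one_div] using
      val_le n κ hκ hκ1 x (ball_subset_ball (by linarith) hx)
  refine ⟨Js, C₀ * (V + F), Q, fun n => ?_, eq, fun κ hκ hκ1 => ⟨D κ, val_le_of_mem κ hκ hκ1⟩⟩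
  obtain ⟨A, hA⟩ := Js_holder n
  refine interior ha h (isWeight_innerWeight c R) hf (by positivity) (one_div_le n) hA
    (by positivity) (fun x hx => ?_) fun x hx => eq n x (innerWeight_pos_iff.1 hx)
  refine (val_le_of_mem (1 / 2) (by norm_num) (by norm_num) n x (innerWeight_pos_iff.1 hx)).trans
    (add_le_add (mul_le_of_le_one_right (by positivity) (one_div_le n)) ?_)
  gcongr
  linarith [norm_nonneg (x - c)]

theorem exists_solution_on_ball (ha : IsEllipticField C K a) (h : IsControlField M K b r)
    (hf : HolderNormLE F f) (hF : 0 < F) (c : E) (hR : 0 < R) :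
    ∃ (u : E → ℝ) (p : E → E →L[ℝ] ℝ) (q : E → E →L[ℝ] E →L[ℝ] ℝ) (Q : ℝ),
      ContinuousOn q (ball c R) ∧ ∀ x ∈ ball c R, HasFDerivAt u (p x) x ∧ HasFDerivAt p (q x) x ∧
        a x (q x) + hamiltonian b r x (p x) (u x) = f x ∧ |u x| ≤ Q * (R - ‖x - c‖) := by
  obtain ⟨Js, A, Q, Js_bounded, eq, val_le⟩ := exists_penalized_sequence ha h hf hF c hR
  let 𝒰 : Ultrafilter ℕ := hyperfilter ℕ
  obtain ⟨u, p, q, hq, limit⟩ := Jet.exists_hasFDerivAt_of_eventuallyHolderAt 𝒰 isOpen_ball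
    fun x hx => Jet.eventuallyHolderAt_of_isBoundedC2Holder (isWeight_innerWeight c R) Js_bounded
      (innerWeight_pos_iff.2 hx)
  have discount_tendsto : Tendsto (fun n : ℕ => (1 : ℝ) / (n + 1)) 𝒰 (𝓝 0) :=
    tendsto_one_div_add_atTop_nhds_zero_nat.mono_left Nat.hyperfilter_le_atTop
  refine ⟨u, p, q, Q, hq, fun x hx => ?_⟩
  obtain ⟨hu, hp, lim⟩ := limit x hx
  refine ⟨hu, hp, ?_, ?_⟩
  · have lhs_tendsto := ((((a x).continuous.tendsto _).comp lim.hess).add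
      (h.tendsto_hamiltonian x lim.grad lim.val)).sub (discount_tendsto.mul lim.val)
    rw [zero_mul, sub_zero] at lhs_tendsto
    exact tendsto_nhds_unique lhs_tendsto
      (tendsto_const_nhds.congr fun n => (eq n x hx).symm)
  · have le_add (κ : ℝ) (hκ : κ ∈ Ioc 0 (1 / 2)) : |u x| ≤ Q * (R + 2 * κ - ‖x - c‖) := by
      obtain ⟨D, hD⟩ := val_le κ hκ.1 (by linarith [hκ.2])
      have := (discount_tendsto.const_mul D).add_const (Q * (R + 2 * κ - ‖x - c‖))
      rw [mul_zero, zero_add] at this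
      exact le_of_tendsto_of_tendsto' lim.val.abs this fun n => hD n x hx
    have rhs_tendsto : Tendsto (fun κ : ℝ => Q * (R + 2 * κ - ‖x - c‖)) (𝓝[>] 0)
        (𝓝 (Q * (R + 2 * 0 - ‖x - c‖))) :=
      (Continuous.tendsto (by fun_prop) _).mono_left nhdsWithin_le_nhds
    rw [mul_zero, add_zero] at rhs_tendsto
    exact ge_of_tendsto rhs_tendsto (eventually_of_mem (Ioc_mem_nhdsGT (by norm_num)) le_add)

end WholeBall

section ClassicalSolutions

open scoped NNReal

variable {E : Type*} [NormedAddCommGroup E] {U : Type*}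

theorem contDiffOn_two_of_hasFDerivAt [NormedSpace ℝ E] {u : E → ℝ} {p : E → E →L[ℝ] ℝ}
    {q : E → E →L[ℝ] E →L[ℝ] ℝ} {Ω : Set E} (hΩ : IsOpen Ω)
    (hu : ∀ x ∈ Ω, HasFDerivAt u (p x) x) (hp : ∀ x ∈ Ω, HasFDerivAt p (q x) x)
    (hq : ContinuousOn q Ω) : ContDiffOn ℝ 2 u Ω := by
  have hp_one : ContDiffOn ℝ (0 + 1) p Ω :=
    (contDiffOn_succ_iff_hasFDerivWithinAt_of_uniqueDiffOn hΩ.uniqueDiffOn).2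
      ⟨by simp, q, contDiffOn_zero.2 hq, fun x hx => (hp x hx).hasFDerivWithinAt⟩
  rw [← one_add_one_eq_two]
  exact (contDiffOn_succ_iff_hasFDerivWithinAt_of_uniqueDiffOn hΩ.uniqueDiffOn).2
    ⟨by simp, p, by simpa using hp_one, fun x hx => (hu x hx).hasFDerivWithinAt⟩

theorem differentiableAt_fderiv_of_contDiffAt_two [NormedSpace ℝ E] {u : E → ℝ} {x : E}
    (hu : ContDiffAt ℝ 2 u x) : DifferentiableAt ℝ (fderiv ℝ u) x :=
  (hu.fderiv_right (m := 1) (by norm_num)).differentiableAt one_ne_zero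

theorem continuousOn_indicator_ball {u : E → ℝ} {c : E} {R Q : ℝ} (hu : ContinuousOn u (ball c R))
    (h : ∀ x ∈ ball c R, |u x| ≤ Q * (R - ‖x - c‖)) :
    ContinuousOn ((ball c R).indicator u) (closedBall c R) := by
  intro x hx
  rw [← ball_union_sphere] at hx
  rcases hx with hx | hx
  · exact ((hu.continuousAt (isOpen_ball.mem_nhds hx)).congr
      (eqOn_indicator.symm.eventuallyEq_of_mem (isOpen_ball.mem_nhds hx))).continuousWithinAt
  · rw [ContinuousWithinAt, indicator_of_notMem (by simp [mem_sphere.1 hx])]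
    have bound_tendsto : Tendsto (fun z => Q * (R - ‖z - c‖)) (𝓝[closedBall c R] x) (𝓝 0) := by
      have := Continuous.tendsto (f := fun z => Q * (R - ‖z - c‖)) (by fun_prop) x
      rw [mem_sphere_iff_norm.1 hx, sub_self, mul_zero] at this
      exact this.mono_left nhdsWithin_le_nhds
    refine squeeze_zero_norm' (eventually_mem_nhdsWithin.mono fun z hz => ?_) bound_tendsto
    rw [← ball_union_sphere] at hz
    rcases hz with hz | hz
    · rw [indicator_of_mem hz]
      exact h z hz
    · rw [indicator_of_notMem (by simp [mem_sphere.1 hz]), mem_sphere_iff_norm.1 hz]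
      simp

/-- The operator `G` of the Dirichlet problem, with its principal part encoded as in
`IsElliptic`. -/
noncomputable def semilinearOperator [NormedSpace ℝ E] (a : E → (E →L[ℝ] E →L[ℝ] ℝ) →L[ℝ] ℝ)
    (b : E → U → E) (r : E → U → ℝ) (φ : E → ℝ) (x : E) : ℝ :=
  a x (fderiv ℝ (fderiv ℝ φ) x) + hamiltonian b r x (fderiv ℝ φ x) (φ x)

/-- Classical solutions of the Dirichlet problem `G φ = f` on the ball, with zero boundary values.
-/
structure IsDirichletSolution [NormedSpace ℝ E] (a : E → (E →L[ℝ] E →L[ℝ] ℝ) →L[ℝ] ℝ)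
    (b : E → U → E) (r : E → U → ℝ) (f : E → ℝ) (c : E) (R : ℝ) (φ : E → ℝ) : Prop where
  contDiffOn : ContDiffOn ℝ 2 φ (ball c R)
  continuousOn : ContinuousOn φ (closedBall c R)
  eq : ∀ x ∈ ball c R, semilinearOperator a b r φ x = f x
  eq_zero : ∀ x ∈ sphere c R, φ x = 0

variable [InnerProductSpace ℝ E] [FiniteDimensional ℝ E] [Nontrivial E] [Nonempty U]
  {C M F R : ℝ} {K : ℝ≥0} {a : E → (E →L[ℝ] E →L[ℝ] ℝ) →L[ℝ] ℝ} {b : E → U → E} {r : E → U → ℝ}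
  {f : E → ℝ} {c : E}

theorem IsControlField.comparison (h : IsControlField M K b r)
    (ha : ∀ x ∈ ball c R, IsElliptic C (a x)) {u v : E → ℝ} (hu : ContDiffOn ℝ 2 u (ball c R))
    (hv : ContDiffOn ℝ 2 v (ball c R)) (hu' : ContinuousOn u (closedBall c R))
    (hv' : ContinuousOn v (closedBall c R))
    (hle : ∀ x ∈ ball c R, semilinearOperator a b r v x ≤ semilinearOperator a b r u x)
    (hb : ∀ x ∈ sphere c R, u x ≤ v x) {x : E} (hx : x ∈ ball c R) : u x ≤ v x := by
  obtain ⟨P, norm_P, -⟩ := exists_dual_vector' ℝ (0 : E)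
  have hasFDerivAt {w : E → ℝ} (hw : ContDiffOn ℝ 2 w (ball c R)) {y : E} (hy : y ∈ ball c R) :
      HasFDerivAt w (fderiv ℝ w y) y ∧ HasFDerivAt (fderiv ℝ w) (fderiv ℝ (fderiv ℝ w) y) y := by
    have hw' := hw.contDiffAt (isOpen_ball.mem_nhds hy)
    exact ⟨(hw'.differentiableAt two_ne_zero).hasFDerivAt,
      (differentiableAt_fderiv_of_contDiffAt_two hw').hasFDerivAt⟩
  set D := 2 * Real.exp (2 * (C * (M + 1)) * R) * (R - P (x - c))
  have le_mul (F : ℝ) (hF : 0 < F) : u x - v x ≤ F * D := by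
    have := le_exp_barrier_of_subsolution (u := u - v) h.nonneg hF le_rfl ha (hu'.sub hv')
      (fun y hy => (hasFDerivAt hu hy).1.sub (hasFDerivAt hv hy).1)
      (fun y hy => (hasFDerivAt hu hy).2.sub (hasFDerivAt hv hy).2)
      (fun y hy => sub_nonpos.2 (hb y hy)) (fun y hy u_sub_v_pos => ?_) norm_P hx
    · simp only [Pi.sub_apply] at this
      linarith
    · have := hle y hy
      have := h.hamiltonian_sub_le y (fderiv ℝ u y) (fderiv ℝ v y) (sub_pos.1 u_sub_v_pos).le
      simp only [semilinearOperator] at *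
      rw [map_sub]
      linarith
  have rhs_tendsto : Tendsto (fun F : ℝ => F * D) (𝓝[>] 0) (𝓝 (0 * D)) :=
    (Continuous.tendsto (by fun_prop) _).mono_left nhdsWithin_le_nhds
  rw [zero_mul] at rhs_tendsto
  exact sub_nonpos.1 (ge_of_tendsto rhs_tendsto (eventually_mem_nhdsWithin.mono le_mul))

theorem IsDirichletSolution.eqOn (h : IsControlField M K b r)
    (ha : ∀ x ∈ ball c R, IsElliptic C (a x)) {φ ψ : E → ℝ}
    (hφ : IsDirichletSolution a b r f c R φ) (hψ : IsDirichletSolution a b r f c R ψ) :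
    EqOn φ ψ (closedBall c R) := by
  intro x hx
  rw [← ball_union_sphere] at hx
  rcases hx with hx | hx
  · exact le_antisymm
      (h.comparison ha hφ.contDiffOn hψ.contDiffOn hφ.continuousOn hψ.continuousOn
        (fun y hy => ((hψ.eq y hy).trans (hφ.eq y hy).symm).le)
        (fun y hy => ((hφ.eq_zero y hy).trans (hψ.eq_zero y hy).symm).le) hx)
      (h.comparison ha hψ.contDiffOn hφ.contDiffOn hψ.continuousOn hφ.continuousOn
        (fun y hy => ((hφ.eq y hy).trans (hψ.eq y hy).symm).le)
        (fun y hy => ((hψ.eq_zero y hy).trans (hφ.eq_zero y hy).symm).le) hx)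
  · exact (hφ.eq_zero x hx).trans (hψ.eq_zero x hx).symm

theorem exists_isDirichletSolution (ha : IsEllipticField C K a) (h : IsControlField M K b r)
    (hf : HolderNormLE F f) (hF : 0 < F) (c : E) (hR : 0 < R) :
    ∃ φ, IsDirichletSolution a b r f c R φ := by
  obtain ⟨u, p, q, Q, hq, sol⟩ := exists_solution_on_ball ha h hf hF c hR
  set φ := (ball c R).indicator u
  have hφ (x : E) (hx : x ∈ ball c R) : HasFDerivAt φ (p x) x :=
    (sol x hx).1.congr_of_eventuallyEq
      (eqOn_indicator.eventuallyEq_of_mem (isOpen_ball.mem_nhds hx))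
  have hp (x : E) (hx : x ∈ ball c R) : HasFDerivAt p (q x) x := (sol x hx).2.1
  refine ⟨φ, contDiffOn_two_of_hasFDerivAt isOpen_ball hφ hp hq,
    continuousOn_indicator_ball (fun x hx => (sol x hx).1.continuousAt.continuousWithinAt)
      fun x hx => (sol x hx).2.2.2, fun x hx => ?_, fun x hx => ?_⟩
  · have fderiv_eq : fderiv ℝ φ =ᶠ[𝓝 x] p :=
      eventually_of_mem (isOpen_ball.mem_nhds hx) fun y hy => (hφ y hy).fderiv
    rw [semilinearOperator, fderiv_eq.fderiv_eq, (hp x hx).fderiv, (hφ x hx).fderiv,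
      show φ x = u x from indicator_of_mem hx u]
    exact (sol x hx).2.2.1
  · exact indicator_of_notMem (by simp [mem_sphere.1 hx]) u

end ClassicalSolutions

section Retraction

open scoped NNReal

variable {E : Type*} [NormedAddCommGroup E] [NormedSpace ℝ E] {c : E} {R : ℝ}

/-- The retraction onto the closed ball that moves the points outside along the rays from the
centre. It extends coefficients given on the closed ball to the whole space. -/
noncomputable def radialRetraction (c : E) (R : ℝ) (x : E) : E := c + (R / max R ‖x - c‖) • (x - c)

theorem radialRetraction_mem (hR : 0 < R) (x : E) : radialRetraction c R x ∈ closedBall c R := by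
  have max_pos : 0 < max R ‖x - c‖ := lt_max_of_lt_left hR
  rw [mem_closedBall_iff_norm, radialRetraction, add_sub_cancel_left, norm_smul,
    Real.norm_of_nonneg (by positivity), div_mul_eq_mul_div, div_le_iff₀ max_pos]
  gcongr
  exact le_max_right _ _

theorem radialRetraction_eq_self (hR : 0 < R) {x : E} (hx : x ∈ closedBall c R) :
    radialRetraction c R x = x := by
  rw [radialRetraction, max_eq_left (mem_closedBall_iff_norm.1 hx), div_self hR.ne', one_smul,
    add_sub_cancel]

theorem lipschitzWith_radialRetraction (c : E) (hR : 0 < R) :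
    LipschitzWith 2 (radialRetraction c R) := by
  refine LipschitzWith.of_dist_le_mul fun y x => ?_
  rw [dist_eq_norm, dist_eq_norm, NNReal.coe_ofNat]
  set m := max R ‖x - c‖
  set n := max R ‖y - c‖
  have m_pos : 0 < m := lt_max_of_lt_left hR
  have n_pos : 0 < n := lt_max_of_lt_left hR
  have ratio_le_one : R / n ≤ 1 := (div_le_one n_pos).2 (le_max_left _ _)
  have max_sub_le : |m - n| ≤ ‖y - x‖ := by
    have := (abs_max_sub_max_le_max R ‖x - c‖ R ‖y - c‖).trans_eq
      (by rw [sub_self, abs_zero, max_eq_right (abs_nonneg _)])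
    simpa [norm_sub_rev x y] using this.trans (abs_norm_sub_norm_le (x - c) (y - c))
  have ratio_sub_le : |R / n - R / m| * ‖x - c‖ ≤ ‖y - x‖ :=
    calc |R / n - R / m| * ‖x - c‖ = R / n * |m - n| / m * ‖x - c‖ := by
          rw [show R / n - R / m = R / n * (m - n) / m by field_simp, abs_div, abs_mul,
            abs_of_pos m_pos, abs_of_pos (by positivity : 0 < R / n)]
      _ ≤ 1 * ‖y - x‖ / m * m := by
          gcongr
          exact le_max_right _ _
      _ = ‖y - x‖ := by field_simp
  calc ‖radialRetraction c R y - radialRetraction c R x‖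
      = ‖(R / n) • (y - x) + (R / n - R / m) • (x - c)‖ := by
        simp only [radialRetraction, m, n, sub_smul, smul_sub]
        abel_nf
    _ ≤ R / n * ‖y - x‖ + |R / n - R / m| * ‖x - c‖ := by
        refine (norm_add_le _ _).trans_eq ?_
        rw [norm_smul, norm_smul, Real.norm_of_nonneg (by positivity : 0 ≤ R / n),
          Real.norm_eq_abs]
    _ ≤ 1 * ‖y - x‖ + ‖y - x‖ := by gcongr
    _ = 2 * ‖y - x‖ := by ring

theorem lipschitzWith_comp_radialRetraction {X : Type*} [PseudoEMetricSpace X] {g : E → X}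
    {k : ℝ≥0} (hR : 0 < R) (hg : LipschitzOnWith k g (closedBall c R)) :
    LipschitzWith (k * 2) fun x => g (radialRetraction c R x) :=
  lipschitzOnWith_univ.1 (hg.comp (lipschitzWith_radialRetraction c hR).lipschitzOnWith
    fun x _ => radialRetraction_mem hR x)

end Retraction

section DirichletProblem

open scoped NNReal

variable {E : Type*} [NormedAddCommGroup E]

theorem HolderNormLE.of_lipschitzWith {A : ℝ} {k : ℝ≥0} {f : E → ℝ} (hf : LipschitzWith k f)
    (hA : ∀ x, ‖f x‖ ≤ A) : HolderNormLE (k + 2 * A) f where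
  norm_le x := (hA x).trans (by linarith [k.coe_nonneg, (norm_nonneg (f x)).trans (hA x)])
  norm_sub_le x y := norm_sub_le_mul_sqrt_of_norm_le hA (fun hyx => (hf.norm_sub_le y x).trans
    (mul_le_mul_of_nonneg_left (le_sqrt_self_of_le_one (norm_nonneg _) hyx) k.coe_nonneg))
    k.coe_nonneg

variable [InnerProductSpace ℝ E] {U : Type*} {C M R : ℝ} {K : ℝ≥0}
  {a : E → (E →L[ℝ] E →L[ℝ] ℝ) →L[ℝ] ℝ} {b : E → U → E} {r : E → U → ℝ} {f : E → ℝ} {c : E}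

theorem isDirichletSolution_comp_radialRetraction_iff (hR : 0 < R) {φ : E → ℝ} :
    IsDirichletSolution (fun x => a (radialRetraction c R x))
      (fun x => b (radialRetraction c R x)) (fun x => r (radialRetraction c R x))
      (fun x => f (radialRetraction c R x)) c R φ ↔ IsDirichletSolution a b r f c R φ := by
  have eq_iff : (∀ x ∈ ball c R, semilinearOperator (fun x => a (radialRetraction c R x))
      (fun x => b (radialRetraction c R x)) (fun x => r (radialRetraction c R x)) φ x
        = f (radialRetraction c R x)) ↔ ∀ x ∈ ball c R, semilinearOperator a b r φ x = f x :=
    forall₂_congr fun x hx => by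
      simp only [semilinearOperator, hamiltonian,
        radialRetraction_eq_self hR (ball_subset_closedBall hx)]
  exact ⟨fun h => ⟨h.1, h.2, eq_iff.1 h.3, h.4⟩, fun h => ⟨h.1, h.2, eq_iff.2 h.3, h.4⟩⟩

theorem exists_isDirichletSolution_eqOn [FiniteDimensional ℝ E] [Nontrivial E] [Nonempty U]
    (hR : 0 < R) (ha : ∀ x ∈ closedBall c R, IsElliptic C (a x))
    (ha_lip : LipschitzOnWith K a (closedBall c R))
    (hb : ∀ x ∈ closedBall c R, ∀ υ, ‖b x υ‖ ≤ M) (hr : ∀ x ∈ closedBall c R, ∀ υ, -M ≤ r x υ)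
    (hr_nonpos : ∀ x ∈ closedBall c R, ∀ υ, r x υ ≤ 0)
    (hb_lip : ∀ υ, LipschitzOnWith K (fun x => b x υ) (closedBall c R))
    (hr_lip : ∀ υ, LipschitzOnWith K (fun x => r x υ) (closedBall c R))
    (hf : LipschitzOnWith K f (closedBall c R)) :
    ∃ φ, IsDirichletSolution a b r f c R φ ∧
      ∀ ψ, IsDirichletSolution a b r f c R ψ → EqOn ψ φ (closedBall c R) := by
  have mem (x : E) := radialRetraction_mem (c := c) hR x
  have ha' : IsEllipticField C (K * 2) fun x => a (radialRetraction c R x) :=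
    ⟨fun x => ha _ (mem x), lipschitzWith_comp_radialRetraction hR ha_lip⟩
  have h' : IsControlField M (K * 2) (fun x => b (radialRetraction c R x))
      fun x => r (radialRetraction c R x) :=
    ⟨fun x => hb _ (mem x), fun x => hr _ (mem x), fun x => hr_nonpos _ (mem x),
      fun υ => lipschitzWith_comp_radialRetraction hR (hb_lip υ),
      fun υ => lipschitzWith_comp_radialRetraction hR (hr_lip υ)⟩
  obtain ⟨B, hB⟩ := (isCompact_closedBall c R).exists_bound_of_continuousOn hf.continuousOn
  have hf' := (HolderNormLE.of_lipschitzWith (lipschitzWith_comp_radialRetraction hR hf)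
    fun x => hB _ (mem x)).mono (le_max_left _ 1)
  obtain ⟨φ, hφ⟩ := exists_isDirichletSolution ha' h' hf' (by positivity) c hR
  exact ⟨φ, (isDirichletSolution_comp_radialRetraction_iff hR).1 hφ, fun ψ hψ =>
    ((isDirichletSolution_comp_radialRetraction_iff hR).2 hψ).eqOn h'
      (fun x _ => ha'.isElliptic x) hφ⟩

end DirichletProblem

section Matrices

variable {d : ℕ}

/-- The pairing `Q ↦ ∑ i j, A i j * Q e_i e_j`, so that `contract (a x) (D²φ(x))` is the principal
part `∑ i j, a i j ∂²φ/∂x_i∂x_j` of the operator. -/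
noncomputable def contract (A : Matrix (Fin d) (Fin d) ℝ) :
    (EuclideanSpace ℝ (Fin d) →L[ℝ] EuclideanSpace ℝ (Fin d) →L[ℝ] ℝ) →L[ℝ] ℝ :=
  ∑ i, ∑ j, A i j • (ContinuousLinearMap.apply ℝ ℝ (EuclideanSpace.single j 1)).comp
    (ContinuousLinearMap.apply ℝ (EuclideanSpace ℝ (Fin d) →L[ℝ] ℝ) (EuclideanSpace.single i 1))

theorem contract_apply (A : Matrix (Fin d) (Fin d) ℝ)
    (Q : EuclideanSpace ℝ (Fin d) →L[ℝ] EuclideanSpace ℝ (Fin d) →L[ℝ] ℝ) :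
    contract A Q
      = ∑ i, ∑ j, A i j * Q (EuclideanSpace.single i 1) (EuclideanSpace.single j 1) := by
  simp [contract]

theorem contract_sub (A B : Matrix (Fin d) (Fin d) ℝ) :
    contract (A - B) = contract A - contract B := by
  ext Q
  simp [contract_apply, sub_mul, Finset.sum_sub_distrib]

theorem norm_contract_le {k : ℝ} (hk : 0 ≤ k) {A : Matrix (Fin d) (Fin d) ℝ}
    (hA : ∀ i j, |A i j| ≤ k) : ‖contract A‖ ≤ (d : ℝ) ^ 2 * k := by
  refine ContinuousLinearMap.opNorm_le_bound _ (by positivity) fun Q => ?_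
  have entry_le (i j : Fin d) :
      ‖A i j * Q (EuclideanSpace.single i 1) (EuclideanSpace.single j 1)‖ ≤ k * ‖Q‖ := by
    have := Q.le_opNorm₂ (EuclideanSpace.single i 1) (EuclideanSpace.single j 1)
    simp only [PiLp.norm_single, norm_one, mul_one] at this
    exact (norm_mul_le _ _).trans (mul_le_mul (hA i j) this (norm_nonneg _) hk)
  calc ‖contract A Q‖ ≤ ∑ _ : Fin d, ∑ _ : Fin d, k * ‖Q‖ := by
        rw [contract_apply]
        exact norm_sum_le_of_le _ fun i _ => norm_sum_le_of_le _ fun j _ => entry_le i j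
    _ = (d : ℝ) ^ 2 * k * ‖Q‖ := by
        simp
        ring

theorem lipschitzOnWith_contract {X : Type*} [PseudoMetricSpace X]
    {a : X → Matrix (Fin d) (Fin d) ℝ} {k : NNReal} {s : Set X}
    (ha : ∀ i j, LipschitzOnWith k (fun x => a x i j) s) :
    LipschitzOnWith (d ^ 2 * k) (fun x => contract (a x)) s := by
  refine LipschitzOnWith.of_dist_le_mul fun x hx y hy => ?_
  rw [dist_eq_norm, ← contract_sub]
  push_cast
  rw [mul_assoc]
  exact norm_contract_le (by positivity) fun i j => (ha i j).dist_le_mul x hx y hy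

/-- Writing `A = Bᵀ B` turns the contraction into a sum of values of `Q` on the rows of `B`. -/
theorem contract_nonpos {A : Matrix (Fin d) (Fin d) ℝ} (hA : A.PosSemidef)
    {Q : EuclideanSpace ℝ (Fin d) →L[ℝ] EuclideanSpace ℝ (Fin d) →L[ℝ] ℝ}
    (hQ : ∀ e, Q e e ≤ 0) : contract A Q ≤ 0 := by
  obtain ⟨B, rfl⟩ : ∃ B : Matrix (Fin d) (Fin d) ℝ, A = star B * B := by
    open scoped MatrixOrder in
    exact CStarAlgebra.nonneg_iff_eq_star_mul_self.1 hA.nonneg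
  let e (i : Fin d) : EuclideanSpace ℝ (Fin d) := EuclideanSpace.single i 1
  let row (k : Fin d) : EuclideanSpace ℝ (Fin d) := ∑ i, B k i • e i
  have sum_rows : contract (star B * B) Q = ∑ k, Q (row k) (row k) := calc
    contract (star B * B) Q = ∑ i, ∑ j, ∑ k, B k i * B k j * Q (e i) (e j) := by
        simp [contract_apply, Matrix.mul_apply, Matrix.star_apply, Finset.sum_mul, e]
    _ = ∑ i, ∑ k, ∑ j, B k i * B k j * Q (e i) (e j) :=
        Finset.sum_congr rfl fun i _ => Finset.sum_comm
    _ = ∑ k, ∑ i, ∑ j, B k i * B k j * Q (e i) (e j) := Finset.sum_comm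
    _ = ∑ k, Q (row k) (row k) := by
        simp only [row, map_sum, sum_apply, map_smul, smul_apply, smul_eq_mul, Finset.mul_sum,
          mul_assoc]
        refine Finset.sum_congr rfl fun k _ => Finset.sum_comm.trans ?_
        exact Finset.sum_congr rfl fun i _ => Finset.sum_congr rfl fun j _ => mul_left_comm _ _ _
  rw [sum_rows]
  exact Finset.sum_nonpos fun k _ => hQ (row k)

theorem contract_smulRight (A : Matrix (Fin d) (Fin d) ℝ)
    (P : EuclideanSpace ℝ (Fin d) →L[ℝ] ℝ) :
    contract A (P.smulRight P) = quadForm A ((InnerProductSpace.toDual ℝ _).symm P) := by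
  have coord (i : Fin d) : P (EuclideanSpace.single i 1)
      = (InnerProductSpace.toDual ℝ (EuclideanSpace ℝ (Fin d))).symm P i := by
    have riesz := InnerProductSpace.toDual_symm_apply (𝕜 := ℝ) (x := EuclideanSpace.single i 1)
      (y := P)
    rw [EuclideanSpace.inner_single_right] at riesz
    simpa using riesz.symm
  simp only [contract_apply, quadForm, ContinuousLinearMap.smulRight_apply, smul_apply,
    smul_eq_mul, coord]
  exact Finset.sum_congr rfl fun i _ => Finset.sum_congr rfl fun j _ => by ring

theorem posSemidef_of_quadForm_nonneg {A : Matrix (Fin d) (Fin d) ℝ} (hA : A.IsSymm)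
    (h : ∀ z, 0 ≤ quadForm A z) : A.PosSemidef := by
  refine Matrix.PosSemidef.of_dotProduct_mulVec_nonneg ?_ fun x => ?_
  · simpa [Matrix.IsHermitian] using hA.eq
  · simpa [quadForm, dotProduct, Matrix.mulVec, Finset.mul_sum, mul_assoc] using h (WithLp.toLp 2 x)

theorem abs_entry_le_of_quadForm_le {A : Matrix (Fin d) (Fin d) ℝ} {C : ℝ} (hA : A.IsSymm)
    (nonneg : ∀ z, 0 ≤ quadForm A z) (le : ∀ z, quadForm A z ≤ C * ‖z‖ ^ 2) (i j : Fin d) :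
    |A i j| ≤ C := by
  have symm : A j i = A i j := hA.apply i j
  have diag (k : Fin d) : 0 ≤ A k k ∧ A k k ≤ C := by
    have form_eq : quadForm A (EuclideanSpace.single k 1) = A k k := by simp [quadForm]
    simpa [form_eq] using And.intro (nonneg (EuclideanSpace.single k 1))
      (le (EuclideanSpace.single k 1))
  have expand (s : ℝ) :
      quadForm A (EuclideanSpace.single i 1 + s • EuclideanSpace.single j 1)
        = A i i + 2 * s * A i j + s ^ 2 * A j j := by
    simp only [quadForm, PiLp.add_apply, PiLp.smul_apply, PiLp.single_apply, smul_eq_mul,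
      add_mul, mul_add, Finset.sum_add_distrib]
    simp [symm]
    ring
  have plus := nonneg (EuclideanSpace.single i 1 + (1 : ℝ) • EuclideanSpace.single j 1)
  have minus := nonneg (EuclideanSpace.single i 1 + (-1 : ℝ) • EuclideanSpace.single j 1)
  rw [expand] at plus minus
  exact abs_le.2 ⟨by linarith [(diag i).2, (diag j).2], by linarith [(diag i).2, (diag j).2]⟩

theorem isElliptic_contract (hd : 1 ≤ d) {A : Matrix (Fin d) (Fin d) ℝ} {C : ℝ} (hC : 1 ≤ C)
    (hA : A.IsSymm) (h : ∀ z, C⁻¹ * ‖z‖ ^ 2 ≤ quadForm A z ∧ quadForm A z ≤ C * ‖z‖ ^ 2) :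
    IsElliptic ((d : ℝ) ^ 2 * C) (contract A) := by
  have C_nonneg : 0 ≤ C := zero_le_one.trans hC
  have nonneg (z) : 0 ≤ quadForm A z := (by positivity : 0 ≤ C⁻¹ * ‖z‖ ^ 2).trans (h z).1
  have one_le_sq : (1 : ℝ) ≤ (d : ℝ) ^ 2 := one_le_pow₀ (by exact_mod_cast hd)
  have C_le : C ≤ (d : ℝ) ^ 2 * C := le_mul_of_one_le_left C_nonneg one_le_sq
  refine ⟨hC.trans C_le, norm_contract_le C_nonneg
    (abs_entry_le_of_quadForm_le hA nonneg fun z => (h z).2),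
    fun Q => contract_nonpos (posSemidef_of_quadForm_nonneg hA nonneg), fun P => ?_⟩
  rw [contract_smulRight]
  refine le_trans ?_ (h _).1
  rw [LinearIsometryEquiv.norm_map]
  gcongr

theorem Gop_eq_semilinearOperator {U : Type*}
    {a : EuclideanSpace ℝ (Fin d) → Matrix (Fin d) (Fin d) ℝ}
    {b : EuclideanSpace ℝ (Fin d) → U → EuclideanSpace ℝ (Fin d)}
    {r : EuclideanSpace ℝ (Fin d) → U → ℝ} {φ : EuclideanSpace ℝ (Fin d) → ℝ}
    {x : EuclideanSpace ℝ (Fin d)} (hφ : ContDiffAt ℝ 2 φ x) :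
    Gop a b r φ x = semilinearOperator (fun x => contract (a x)) b r φ x := by
  have sdv_eq (i j : Fin d) : sdv φ x i j =
      fderiv ℝ (fderiv ℝ φ) x (EuclideanSpace.single i 1) (EuclideanSpace.single j 1) := by
    rw [sdv, fderiv_clm_apply (differentiableAt_fderiv_of_contDiffAt_two hφ)
      (differentiableAt_const _)]
    simp
  simp [Gop, semilinearOperator, hamiltonian, contract_apply, sdv_eq]

theorem isDirichletSolution_contract_iff {U : Type*}
    {a : EuclideanSpace ℝ (Fin d) → Matrix (Fin d) (Fin d) ℝ}
    {b : EuclideanSpace ℝ (Fin d) → U → EuclideanSpace ℝ (Fin d)}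
    {r : EuclideanSpace ℝ (Fin d) → U → ℝ} {f φ : EuclideanSpace ℝ (Fin d) → ℝ}
    {c : EuclideanSpace ℝ (Fin d)} {R : ℝ} :
    IsDirichletSolution (fun x => contract (a x)) b r f c R φ ↔
      ContDiffOn ℝ 2 φ (ball c R) ∧ ContinuousOn φ (closedBall c R) ∧
        (∀ x ∈ ball c R, Gop a b r φ x = f x) ∧ ∀ x ∈ sphere c R, φ x = 0 := by
  have eq_iff (h : ContDiffOn ℝ 2 φ (ball c R)) : (∀ x ∈ ball c R, Gop a b r φ x = f x) ↔
      ∀ x ∈ ball c R, semilinearOperator (fun x => contract (a x)) b r φ x = f x :=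
    forall₂_congr fun x hx => by
      rw [Gop_eq_semilinearOperator (h.contDiffAt (isOpen_ball.mem_nhds hx))]
  exact ⟨fun h => ⟨h.1, h.2, (eq_iff h.1).2 h.3, h.4⟩,
    fun h => ⟨h.1, h.2.1, (eq_iff h.1).1 h.2.2.1, h.2.2.2⟩⟩

end Matrices

end SemilinearDirichlet

open SemilinearDirichlet in
theorem semilinear_dirichlet_problem_solvable_general
    {d : ℕ} (hd : 1 ≤ d) {U : Type*} [Nonempty U]
    (c : EuclideanSpace ℝ (Fin d)) (R : ℝ) (hR : 0 < R)
    (a : EuclideanSpace ℝ (Fin d) → Matrix (Fin d) (Fin d) ℝ)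
    (b : EuclideanSpace ℝ (Fin d) → U → EuclideanSpace ℝ (Fin d))
    (r : EuclideanSpace ℝ (Fin d) → U → ℝ)
    (ha_lip : ∃ K : NNReal, ∀ i j, LipschitzOnWith K (fun x => a x i j) (closedBall c R))
    (ha_symm : ∀ x ∈ closedBall c R, (a x).IsSymm)
    (ha_ell : ∃ C : ℝ, 1 ≤ C ∧ ∀ x ∈ closedBall c R, ∀ z : EuclideanSpace ℝ (Fin d),
      C⁻¹ * ‖z‖ ^ 2 ≤ quadForm (a x) z ∧ quadForm (a x) z ≤ C * ‖z‖ ^ 2)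
    (hb_bdd : ∃ M, ∀ x ∈ closedBall c R, ∀ u, ‖b x u‖ ≤ M)
    (hr_bdd : ∃ M, ∀ x ∈ closedBall c R, ∀ u, -M ≤ r x u)
    (hb_lip : ∃ K : NNReal, ∀ u : U, LipschitzOnWith K (fun x => b x u) (closedBall c R))
    (hr_lip : ∃ K : NNReal, ∀ u : U, LipschitzOnWith K (fun x => r x u) (closedBall c R))
    (hr_nonpos : ∀ x ∈ closedBall c R, ∀ u : U, r x u ≤ 0)
    (f : EuclideanSpace ℝ (Fin d) → ℝ)
    (hf_lip : ∃ K : NNReal, LipschitzOnWith K f (closedBall c R)) :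
    ∃ φ : EuclideanSpace ℝ (Fin d) → ℝ,
      (ContDiffOn ℝ 2 φ (ball c R) ∧ ContinuousOn φ (closedBall c R) ∧
        (∀ x ∈ ball c R, Gop a b r φ x = f x) ∧ (∀ x ∈ sphere c R, φ x = 0)) ∧
      ∀ φ' : EuclideanSpace ℝ (Fin d) → ℝ,
        (ContDiffOn ℝ 2 φ' (ball c R) ∧ ContinuousOn φ' (closedBall c R) ∧
          (∀ x ∈ ball c R, Gop a b r φ' x = f x) ∧ (∀ x ∈ sphere c R, φ' x = 0)) →
        ∀ x ∈ closedBall c R, φ' x = φ x := by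
  obtain ⟨ka, ha_lip⟩ := ha_lip
  obtain ⟨C, hC, ha_ell⟩ := ha_ell
  obtain ⟨Mb, hb_bdd⟩ := hb_bdd
  obtain ⟨Mr, hr_bdd⟩ := hr_bdd
  obtain ⟨kb, hb_lip⟩ := hb_lip
  obtain ⟨kr, hr_lip⟩ := hr_lip
  obtain ⟨kf, hf_lip⟩ := hf_lip
  let K := max (max (d ^ 2 * ka) kb) (max kr kf)
  have : Nontrivial (EuclideanSpace ℝ (Fin d)) := Module.nontrivial_of_finrank_pos (R := ℝ) <| by
    rwa [finrank_euclideanSpace_fin]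
  simpa only [isDirichletSolution_contract_iff, EqOn] using
    exists_isDirichletSolution_eqOn (a := fun x => contract (a x)) (K := K) (M := max Mb Mr) hR
      (fun x hx => isElliptic_contract hd hC (ha_symm x hx) (ha_ell x hx))
      ((lipschitzOnWith_contract ha_lip).weaken (le_max_of_le_left (le_max_left _ _)))
      (fun x hx u => (hb_bdd x hx u).trans (le_max_left _ _))
      (fun x hx u => (neg_le_neg (le_max_right _ _)).trans (hr_bdd x hx u)) hr_nonpos
      (fun u => (hb_lip u).weaken (le_max_of_le_left (le_max_right _ _)))
      (fun u => (hr_lip u).weaken (le_max_of_le_right (le_max_left _ _)))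
      (hf_lip.weaken (le_max_of_le_right (le_max_right _ _)))

/-- **Solvability of the semilinear Dirichlet problem (from the proof of Theorem 3.1),
classical-solution rendering.** If `r ≤ 0`, then for every Lipschitz `f` there is a unique
`φ ∈ C²(B) ∩ C(B̄)` with `Gφ = f` in `B` and `φ = 0` on `∂B`. -/
theorem semilinear_dirichlet_problem_solvable
    {d : ℕ} (hd : 1 ≤ d) {U : Type*} [MetricSpace U] [CompactSpace U] [Nonempty U]
    (c : EuclideanSpace ℝ (Fin d)) (R : ℝ) (hR : 0 < R)
    (a : EuclideanSpace ℝ (Fin d) → Matrix (Fin d) (Fin d) ℝ)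
    (b : EuclideanSpace ℝ (Fin d) → U → EuclideanSpace ℝ (Fin d))
    (r : EuclideanSpace ℝ (Fin d) → U → ℝ)
    (ha_lip : ∃ K : NNReal, ∀ i j, LipschitzOnWith K (fun x => a x i j) (closedBall c R))
    (ha_symm : ∀ x ∈ closedBall c R, (a x).IsSymm)
    (ha_ell : ∃ C : ℝ, 1 ≤ C ∧ ∀ x ∈ closedBall c R, ∀ z : EuclideanSpace ℝ (Fin d),
      C⁻¹ * ‖z‖ ^ 2 ≤ quadForm (a x) z ∧ quadForm (a x) z ≤ C * ‖z‖ ^ 2)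
    (hb_cont : ContinuousOn (fun p : EuclideanSpace ℝ (Fin d) × U => b p.1 p.2)
      (closedBall c R ×ˢ univ))
    (hr_cont : ContinuousOn (fun p : EuclideanSpace ℝ (Fin d) × U => r p.1 p.2)
      (closedBall c R ×ˢ univ))
    (hb_lip : ∃ K : NNReal, ∀ u : U, LipschitzOnWith K (fun x => b x u) (closedBall c R))
    (hr_lip : ∃ K : NNReal, ∀ u : U, LipschitzOnWith K (fun x => r x u) (closedBall c R))
    -- the running cost is nonpositive
    (hr_nonpos : ∀ x ∈ closedBall c R, ∀ u : U, r x u ≤ 0)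
    -- the Lipschitz right-hand side
    (f : EuclideanSpace ℝ (Fin d) → ℝ)
    (hf_lip : ∃ K : NNReal, LipschitzOnWith K f (closedBall c R)) :
    ∃ φ : EuclideanSpace ℝ (Fin d) → ℝ,
      (ContDiffOn ℝ 2 φ (ball c R) ∧ ContinuousOn φ (closedBall c R) ∧
        (∀ x ∈ ball c R, Gop a b r φ x = f x) ∧ (∀ x ∈ sphere c R, φ x = 0)) ∧
      ∀ φ' : EuclideanSpace ℝ (Fin d) → ℝ,
        (ContDiffOn ℝ 2 φ' (ball c R) ∧ ContinuousOn φ' (closedBall c R) ∧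
          (∀ x ∈ ball c R, Gop a b r φ' x = f x) ∧ (∀ x ∈ sphere c R, φ' x = 0)) →
        ∀ x ∈ closedBall c R, φ' x = φ x := by
  have compact : IsCompact (closedBall c R ×ˢ (univ : Set U)) :=
    (isCompact_closedBall c R).prod isCompact_univ
  obtain ⟨Mb, hMb⟩ := compact.exists_bound_of_continuousOn hb_cont
  obtain ⟨Mr, hMr⟩ := compact.exists_bound_of_continuousOn hr_cont
  exact semilinear_dirichlet_problem_solvable_general hd c R hR a b r ha_lip ha_symm ha_ell
    ⟨Mb, fun x hx u => hMb (x, u) ⟨hx, mem_univ u⟩⟩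
    ⟨Mr, fun x hx u => neg_le_of_abs_le (hMr (x, u) ⟨hx, mem_univ u⟩)⟩
    hb_lip hr_lip hr_nonpos f hf_lip
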